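/- arXiv:quant-ph/0012127 — 4 statements merged into one kernel-verified Lean document; each statement's English description precedes it below -/
import Mathlib

section
/- Let λ₁, λ₂ > 0 with λ₁ + λ₂ < 1. Then for every δ > 0 there exists n₀ such that for all n ≥ n₀, the maximal size of identification codes satisfies N(n, λ₁, λ₂) ≤ 2^(2^(n(C(W) + δ))). -/
open scoped BigOperators
open ComplexOrder
open scoped Matrix

def IsProbDist {α : Type*} [Fintype α] (P : α → ℝ) : Prop :=
  (∀ a, 0 ≤ P a) ∧ ∑ a, P a = 1

noncomputable def shannonEntropy {α : Type*} [Fintype α] (P : α → ℝ) : ℝ :=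
  -∑ a, P a * Real.logb 2 (P a)

noncomputable def mutualInfo {X Y : Type*} [Fintype X] [Fintype Y]
    (P : X → ℝ) (W : X → Y → ℝ) : ℝ :=
  shannonEntropy (fun y => ∑ x, P x * W x y) - ∑ x, P x * shannonEntropy (W x)

noncomputable def capacity {X Y : Type*} [Fintype X] [Fintype Y] (W : X → Y → ℝ) : ℝ :=
  sSup {c | ∃ P : X → ℝ, IsProbDist P ∧ c = mutualInfo P W}

def IsIDCode {X Y : Type*} [Fintype X] [Fintype Y] [DecidableEq Y]
    (W : X → Y → ℝ) (n N : ℕ) (lam1 lam2 : ℝ)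
    (P : Fin N → (Fin n → X) → ℝ) (D : Fin N → Finset (Fin n → Y)) : Prop :=
  (∀ i, IsProbDist (P i)) ∧
  (∀ i, ∑ xn : Fin n → X, P i xn * ∑ yn ∈ (D i)ᶜ, ∏ k, W (xn k) (yn k) ≤ lam1) ∧
  (∀ i j, i ≠ j → ∑ xn : Fin n → X, P j xn * ∑ yn ∈ D i, ∏ k, W (xn k) (yn k) ≤ lam2)

/-!
The output distribution `Q` of a capacity-achieving input satisfies `D(W(·|x)‖Q) ≤ C` for every `x`,
so by a Chernoff bound the likelihood ratio `Wⁿ(y|x) / Qⁿ(y)` exceeds `K = 2 ^ (n * (C + δ / 2))`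
only with exponentially small probability, uniformly in `x`. Where the ratio is at most `K`,
choosing `M ≈ K / η ^ 2` words at random from any input distribution reproduces its output
distribution up to `η` on every event, by a second-moment (Maurey) argument in `L²(Qⁿ)`. In an
identification code with `lam1 + lam2 < 1`, different messages have well-separated output
distributions, so they must receive different lists of words, and there are only `|X| ^ (n * M)`
lists of `M` words.
-/

section Distributions

open Finset

variable {A B : Type*} [Fintype A]

namespace IsProbDist

lemma le_one {P : A → ℝ} (hP : IsProbDist P) (a : A) : P a ≤ 1 :=
  hP.2 ▸ single_le_sum (fun a _ => hP.1 a) (mem_univ a)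

lemma sum_mul_le_of_forall_le {P : A → ℝ} (hP : IsProbDist P) {v : A → ℝ} {T : ℝ}
    (hv : ∀ a, v a ≤ T) : ∑ a, P a * v a ≤ T :=
  calc ∑ a, P a * v a ≤ ∑ a, P a * T :=
        sum_le_sum fun a _ => mul_le_mul_of_nonneg_left (hv a) (hP.1 a)
    _ = T := by rw [← sum_mul, hP.2, one_mul]

lemma exists_le_sum_mul {P : A → ℝ} (hP : IsProbDist P) (v : A → ℝ) :
    ∃ a, v a ≤ ∑ b, P b * v b := by
  obtain ⟨a, -, ha⟩ := (concaveOn_id convex_univ).exists_le_of_centerMass (t := univ) (p := v)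
    (fun a _ => hP.1 a) (hP.2 ▸ zero_lt_one) (fun _ _ => Set.mem_univ _)
  exact ⟨a, by simpa [centerMass, hP.2] using ha⟩

lemma uniform {M : ℕ} (hM : 0 < M) : IsProbDist fun _ : Fin M => (M : ℝ)⁻¹ :=
  ⟨fun _ => by positivity, by simp [hM.ne']⟩

end IsProbDist

/-- The output distribution `PW` of the channel `W` under the input distribution `P`; with a uniform
`P` it is also the output of a codebook of equiprobable words. -/
def channelOutput (P : A → ℝ) (W : A → B → ℝ) (b : B) : ℝ :=
  ∑ a, P a * W a b

lemma sum_channelOutput (P : A → ℝ) (W : A → B → ℝ) (D : Finset B) :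
    ∑ b ∈ D, channelOutput P W b = ∑ a, P a * ∑ b ∈ D, W a b := by
  simp only [channelOutput, mul_sum]
  exact sum_comm

lemma IsProbDist.channelOutput [Fintype B] {P : A → ℝ} (hP : IsProbDist P) {W : A → B → ℝ}
    (hW : ∀ a, IsProbDist (W a)) : IsProbDist (channelOutput P W) :=
  ⟨fun b => sum_nonneg fun a _ => mul_nonneg (hP.1 a) ((hW a).1 b), by
    simp [sum_channelOutput, (hW _).2, hP.2]⟩

/-- The product distribution `⨂ₖ pₖ`, which models block use of a memoryless channel:
`Wⁿ(·|x) = productDist fun k => W (x k)`. -/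
def productDist {ι : Type*} [Fintype ι] (p : ι → A → ℝ) (a : ι → A) : ℝ :=
  ∏ k, p k (a k)

lemma IsProbDist.productDist {ι : Type*} [Fintype ι] [DecidableEq ι] {p : ι → A → ℝ}
    (hp : ∀ k, IsProbDist (p k)) : IsProbDist (productDist p) :=
  ⟨fun a => prod_nonneg fun k _ => (hp k).1 (a k), by
    simp only [_root_.productDist, ← Fintype.prod_sum, (hp _).2, prod_const_one]⟩

end Distributions

section RelativeEntropy

open Finset Filter Topology

variable {X Y : Type*} [Fintype X] [Fintype Y]

/-- The relative entropy `D(p‖q)` in bits, through which the capacity bounds the exponent of the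
likelihood ratio `Wⁿ / Qⁿ`. It is the usual quantity only if `q y = 0` implies `p y = 0`: as
`Real.logb 2 0 = 0`, a violating `y` contributes `p y * Real.logb 2 (p y)` rather than `∞`. -/
noncomputable def relEntropy (p q : Y → ℝ) : ℝ :=
  ∑ y, p y * (Real.logb 2 (p y) - Real.logb 2 (q y))

lemma relEntropy_self (p : Y → ℝ) : relEntropy p p = 0 := by
  simp [relEntropy]

lemma relEntropy_eq_neg_entropy_sub (p q : Y → ℝ) :
    relEntropy p q = -shannonEntropy p - ∑ y, p y * Real.logb 2 (q y) := by
  simp only [relEntropy, shannonEntropy, mul_sub, sum_sub_distrib, neg_neg]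

lemma sub_div_log_two_le_mul_logb_sub {a b : ℝ} (ha : 0 ≤ a) (hb : 0 ≤ b) (hab : b = 0 → a = 0) :
    (a - b) / Real.log 2 ≤ a * (Real.logb 2 a - Real.logb 2 b) := by
  have hlog : 0 < Real.log 2 := Real.log_pos one_lt_two
  rcases ha.eq_or_lt with rfl | ha
  · simpa [neg_div] using div_nonneg hb hlog.le
  have hb : 0 < b := hb.lt_of_ne' fun h => ha.ne' (hab h)
  have hratio := Real.log_le_sub_one_of_pos (div_pos hb ha)
  rw [Real.log_div hb.ne' ha.ne'] at hratio
  have : a * (Real.log b - Real.log a) ≤ b - a := by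
    calc a * (Real.log b - Real.log a) ≤ a * (b / a - 1) := by gcongr
      _ = b - a := by field_simp
  rw [Real.logb, Real.logb, ← sub_div, ← mul_div_assoc]
  gcongr
  linarith

lemma relEntropy_nonneg {p q : Y → ℝ} (hp : IsProbDist p) (hq : IsProbDist q)
    (hpq : ∀ y, q y = 0 → p y = 0) : 0 ≤ relEntropy p q :=
  calc (0 : ℝ) = ∑ y, (p y - q y) / Real.log 2 := by
        rw [← sum_div, sum_sub_distrib, hp.2, hq.2, sub_self, zero_div]
    _ ≤ relEntropy p q := sum_le_sum fun y _ =>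
        sub_div_log_two_le_mul_logb_sub (hp.1 y) (hq.1 y) (hpq y)

lemma neg_mul_logb_le_relEntropy_add_entropy {p q : Y → ℝ} (hp : ∀ y, 0 ≤ p y)
    (hq : IsProbDist q) (y : Y) :
    -(p y * Real.logb 2 (q y)) ≤ relEntropy p q + shannonEntropy p := by
  have hterm : ∀ z, 0 ≤ -(p z * Real.logb 2 (q z)) := fun z => neg_nonneg.2 <|
    mul_nonpos_of_nonneg_of_nonpos (hp z) (Real.logb_nonpos one_lt_two (hq.1 z) (hq.le_one z))
  have hsum := single_le_sum (fun z _ => hterm z) (mem_univ y)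
  rw [sum_neg_distrib] at hsum
  linarith [relEntropy_eq_neg_entropy_sub p q]

lemma sum_mul_relEntropy (P : X → ℝ) (W : X → Y → ℝ) (R : Y → ℝ) :
    ∑ x, P x * relEntropy (W x) R = mutualInfo P W + relEntropy (channelOutput P W) R := by
  have hcross : ∑ y, channelOutput P W y * Real.logb 2 (R y)
      = ∑ x, P x * ∑ y, W x y * Real.logb 2 (R y) := by
    simp only [channelOutput, sum_mul, mul_sum, mul_assoc]
    exact sum_comm
  have hinfo : mutualInfo P W
      = shannonEntropy (channelOutput P W) - ∑ x, P x * shannonEntropy (W x) := rfl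
  simp only [relEntropy_eq_neg_entropy_sub, mul_sub, mul_neg, sum_sub_distrib, sum_neg_distrib,
    hcross, hinfo]
  ring

lemma tendsto_relEntropy_mix {p q : Y → ℝ} (hpq : ∀ y, q y = 0 → p y = 0) :
    Tendsto (fun t : ℝ => relEntropy p fun y => (1 - t) * q y + t * p y) (𝓝 0)
      (𝓝 (relEntropy p q)) := by
  refine tendsto_finsetSum _ fun y _ => ?_
  by_cases hp : p y = 0
  · simp [hp]
  have hq : q y ≠ 0 := fun h => hp (hpq y h)
  have hmix : ContinuousAt (fun t : ℝ => (1 - t) * q y + t * p y) 0 := by fun_prop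
  have hlog : Tendsto (fun t : ℝ => Real.logb 2 ((1 - t) * q y + t * p y)) (𝓝 0)
      (𝓝 (Real.logb 2 (q y))) := by
    simpa using (hmix.tendsto.logb (b := 2) (by simpa using hq))
  exact (hlog.const_sub _).const_mul _

end RelativeEntropy

section Capacity

open Finset Filter Topology

variable {X Y : Type*} [Fintype X] [Fintype Y]

lemma continuous_shannonEntropy : Continuous (shannonEntropy : (Y → ℝ) → ℝ) := by
  have hcoord : ∀ t : ℝ, t * Real.logb 2 t = t * Real.log t / Real.log 2 := fun t => by
    rw [Real.logb, mul_div_assoc]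
  unfold shannonEntropy
  simp only [hcoord]
  exact (continuous_finsetSum _ fun y _ =>
    (Real.continuous_mul_log.comp (continuous_apply y)).div_const _).neg

lemma continuous_mutualInfo (W : X → Y → ℝ) : Continuous fun P => mutualInfo P W :=
  (continuous_shannonEntropy.comp (by fun_prop)).sub (by fun_prop)

lemma isGreatest_capacity [Nonempty X] (W : X → Y → ℝ) :
    IsGreatest {c | ∃ P : X → ℝ, IsProbDist P ∧ c = mutualInfo P W} (capacity W) := by
  classical
  have himage : {c | ∃ P : X → ℝ, IsProbDist P ∧ c = mutualInfo P W}
      = (fun P => mutualInfo P W) '' stdSimplex ℝ X :=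
    Set.ext fun c => exists_congr fun P => and_congr Iff.rfl eq_comm
  rw [capacity, himage]
  exact ((isCompact_stdSimplex ℝ X).image (continuous_mutualInfo W)).isGreatest_sSup
    (Set.Nonempty.image _ ⟨_, single_mem_stdSimplex ℝ (Classical.arbitrary X)⟩)

section CapacityAchieving

variable [Nonempty X] {W : X → Y → ℝ} (hW : ∀ x, IsProbDist (W x)) {P : X → ℝ}
  (hP : IsProbDist P) (hPC : mutualInfo P W = capacity W)

include hW hP hPC

/- Moving the optimal input `P` a fraction `t` towards the point mass at `x` cannot increase the
mutual information; expanding it with `sum_mul_relEntropy` around the new output distribution `R`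
leaves `(1 - t) * C + t * D(W x‖R) ≤ C`. -/
lemma relEntropy_mix_le_capacity (x : X) {t : ℝ} (ht0 : 0 < t) (ht1 : t < 1) :
    relEntropy (W x) (fun y => (1 - t) * channelOutput P W y + t * W x y) ≤ capacity W := by
  classical
  set R : Y → ℝ := fun y => (1 - t) * channelOutput P W y + t * W x y
  set P' : X → ℝ := (1 - t) • P + t • Pi.single x 1
  have hP' : IsProbDist P' := convex_stdSimplex ℝ X hP (single_mem_stdSimplex ℝ x)
    (sub_nonneg.2 ht1.le) ht0.le (sub_add_cancel 1 t)
  have hmean : ∀ g : X → ℝ, ∑ x', P' x' * g x' = (1 - t) * ∑ x', P x' * g x' + t * g x := by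
    intro g
    simp [P', add_mul, sum_add_distrib, mul_assoc, mul_sum, Pi.single_apply]
  have houtput : channelOutput P' W = R := funext fun y => hmean fun x' => W x' y
  have hQR : ∀ y, R y = 0 → channelOutput P W y = 0 := by
    intro y hy
    have hQ := mul_nonneg (sub_nonneg.2 ht1.le) ((hP.channelOutput hW).1 y)
    have hV := mul_nonneg ht0.le ((hW x).1 y)
    exact (mul_eq_zero.1 ((add_eq_zero_iff_of_nonneg hQ hV).1 hy).1).resolve_left
      (sub_pos.2 ht1).ne'
  have hgibbs : 0 ≤ relEntropy (channelOutput P W) R :=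
    relEntropy_nonneg (hP.channelOutput hW) (houtput ▸ hP'.channelOutput hW) hQR
  have hopt : mutualInfo P' W ≤ capacity W := (isGreatest_capacity W).2 ⟨P', hP', rfl⟩
  have hexpand := hmean fun x' => relEntropy (W x') R
  rw [sum_mul_relEntropy, sum_mul_relEntropy, houtput, relEntropy_self, hPC] at hexpand
  refine le_of_mul_le_mul_left ?_ ht0
  nlinarith [mul_nonneg (sub_nonneg.2 ht1.le) hgibbs]

lemma eq_zero_of_channelOutput_eq_zero (x : X) (y : Y) (hy : channelOutput P W y = 0) :
    W x y = 0 := by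
  by_contra hne
  have hpos : 0 < W x y := ((hW x).1 y).lt_of_ne' hne
  have hbound : ∀ᶠ t in 𝓝[>] (0 : ℝ),
      -(W x y * Real.logb 2 (t * W x y)) ≤ capacity W + shannonEntropy (W x) := by
    filter_upwards [Ioo_mem_nhdsGT (zero_lt_one' ℝ)] with t ⟨ht0, ht1⟩
    have hmix : IsProbDist fun y => (1 - t) * channelOutput P W y + t * W x y :=
      convex_stdSimplex ℝ Y (hP.channelOutput hW) (hW x) (sub_nonneg.2 ht1.le) ht0.le
        (sub_add_cancel 1 t)
    have hlower := neg_mul_logb_le_relEntropy_add_entropy (hW x).1 hmix y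
    simp only [hy, mul_zero, zero_add] at hlower
    linarith [relEntropy_mix_le_capacity hW hP hPC x ht0 ht1]
  have hzero : Tendsto (fun t => t * W x y) (𝓝[>] 0) (𝓝[>] 0) :=
    tendsto_nhdsWithin_iff.2 ⟨by
      simpa using (tendsto_id.mul_const (W x y)).mono_left (nhdsWithin_le_nhds (a := (0 : ℝ))),
      eventually_mem_nhdsWithin.mono fun t ht => mul_pos ht hpos⟩
  have hblowup : Tendsto (fun t => -(W x y * Real.logb 2 (t * W x y))) (𝓝[>] 0) atTop :=
    tendsto_neg_atBot_atTop.comp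
      (((Real.tendsto_logb_nhdsGT_zero one_lt_two).comp hzero).const_mul_atBot hpos)
  obtain ⟨t, hle, hgt⟩ := (hbound.and (hblowup.eventually_gt_atTop _)).exists
  exact hgt.not_ge hle

lemma relEntropy_channelOutput_le_capacity (x : X) :
    relEntropy (W x) (channelOutput P W) ≤ capacity W := by
  have hlim := tendsto_relEntropy_mix (eq_zero_of_channelOutput_eq_zero hW hP hPC x)
  refine le_of_tendsto (hlim.mono_left (nhdsWithin_le_nhds (s := Set.Ioi 0))) ?_
  filter_upwards [Ioo_mem_nhdsGT (zero_lt_one' ℝ)] with t ⟨ht0, ht1⟩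
  exact relEntropy_mix_le_capacity hW hP hPC x ht0 ht1

end CapacityAchieving

lemma exists_relEntropy_le_capacity [Nonempty X] {W : X → Y → ℝ} (hW : ∀ x, IsProbDist (W x)) :
    ∃ Q : Y → ℝ, IsProbDist Q ∧ (∀ x y, Q y = 0 → W x y = 0) ∧
      ∀ x, relEntropy (W x) Q ≤ capacity W := by
  obtain ⟨P, hP, hPC⟩ := (isGreatest_capacity W).1
  exact ⟨channelOutput P W, hP.channelOutput hW,
    eq_zero_of_channelOutput_eq_zero hW hP hPC.symm,
    relEntropy_channelOutput_le_capacity hW hP hPC.symm⟩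

lemma capacity_nonneg [Nonempty X] {W : X → Y → ℝ} (hW : ∀ x, IsProbDist (W x)) :
    0 ≤ capacity W := by
  obtain ⟨Q, hQ, hWQ, hle⟩ := exists_relEntropy_le_capacity hW
  have x := Classical.arbitrary X
  exact (relEntropy_nonneg (hW x) hQ (hWQ x)).trans (hle x)

end Capacity

section Chernoff

open Finset Filter Topology

variable {X Y : Type*}

lemma sum_logb_sub_pos_of_lt_productDist {n : ℕ} {p : Fin n → Y → ℝ} {Q : Y → ℝ} {c : ℝ}
    (hQ : ∀ y, 0 ≤ Q y) (hpQ : ∀ k y, Q y = 0 → p k y = 0)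
    {y : Fin n → Y} (hy : 2 ^ (n * c) * productDist (fun _ => Q) y < productDist p y) :
    0 < ∑ k, (Real.logb 2 (p k (y k)) - Real.logb 2 (Q (y k)) - c) := by
  have hQ_prod : 0 ≤ productDist (fun _ => Q) y := prod_nonneg fun k _ => hQ (y k)
  have hp_prod : productDist p y ≠ 0 := ((by positivity : (0 : ℝ) ≤ _).trans_lt hy).ne'
  have hp_ne : ∀ k, p k (y k) ≠ 0 := fun k => prod_ne_zero_iff.1 hp_prod k (mem_univ k)
  have hQ_ne : ∀ k, Q (y k) ≠ 0 := fun k h => hp_ne k (hpQ k _ h)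
  have hQ_pos : 0 < productDist (fun _ => Q) y :=
    prod_pos fun k _ => (hQ (y k)).lt_of_ne' (hQ_ne k)
  have hlog := Real.logb_lt_logb one_lt_two (by positivity) hy
  rw [Real.logb_mul (by positivity) hQ_pos.ne', Real.logb_rpow two_pos (by norm_num),
    productDist, productDist, Real.logb_prod _ _ fun k _ => hQ_ne k,
    Real.logb_prod _ _ fun k _ => hp_ne k] at hlog
  simp only [sum_sub_distrib, sum_const, card_univ, Fintype.card_fin, nsmul_eq_mul]
  linarith

variable [Fintype Y]

lemma eventually_sum_mul_exp_lt_one {p z : Y → ℝ} (hp : ∑ y, p y = 1)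
    (hz : ∑ y, p y * z y < 0) :
    ∀ᶠ s in 𝓝[>] (0 : ℝ), ∑ y, p y * Real.exp (s * z y) < 1 := by
  have hderiv : HasDerivAt (fun s => ∑ y, p y * Real.exp (s * z y)) (∑ y, p y * z y) 0 :=
    HasDerivAt.fun_sum fun y _ => by
      simpa using (((hasDerivAt_id (0 : ℝ)).mul_const (z y)).exp).const_mul (p y)
  filter_upwards [hderiv.tendsto_slope_zero_right.eventually_lt_const hz,
    eventually_mem_nhdsWithin] with s hs hspos
  have hslope := (smul_neg_iff_of_pos_left (inv_pos.2 hspos)).1 hs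
  simpa [hp] using hslope

lemma sum_filter_productDist_le_prod {ι : Type*} [Fintype ι] [DecidableEq ι] {p : ι → Y → ℝ}
    (hp : ∀ k y, 0 ≤ p k y) (z : ι → Y → ℝ) :
    ∑ y with 0 ≤ ∑ k, z k (y k), productDist p y ≤ ∏ k, ∑ y, p k y * Real.exp (z k y) := by
  have hnonneg : ∀ y, 0 ≤ productDist p y := fun y => prod_nonneg fun k _ => hp k (y k)
  calc ∑ y with 0 ≤ ∑ k, z k (y k), productDist p y
      ≤ ∑ y with 0 ≤ ∑ k, z k (y k), productDist p y * Real.exp (∑ k, z k (y k)) :=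
        sum_le_sum fun y hy => le_mul_of_one_le_right (hnonneg y)
          (Real.one_le_exp (mem_filter.1 hy).2)
    _ ≤ ∑ y, productDist p y * Real.exp (∑ k, z k (y k)) :=
        sum_le_univ_sum_of_nonneg fun y => mul_nonneg (hnonneg y) (Real.exp_pos _).le
    _ = ∏ k, ∑ y, p k y * Real.exp (z k y) := by
        simp only [Fintype.prod_sum, productDist, Real.exp_sum, prod_mul_distrib]

lemma exists_sum_filter_lt_productDist_le_pow [Finite X] [Nonempty X] {W : X → Y → ℝ}
    (hW : ∀ x, IsProbDist (W x)) {Q : Y → ℝ} (hQ : ∀ y, 0 ≤ Q y)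
    (hWQ : ∀ x y, Q y = 0 → W x y = 0) {c : ℝ} (hc : ∀ x, relEntropy (W x) Q < c) :
    ∃ ρ : ℝ, 0 ≤ ρ ∧ ρ < 1 ∧ ∀ (n : ℕ) (x : Fin n → X),
      ∑ y with 2 ^ (n * c) * productDist (fun _ => Q) y < productDist (fun k => W (x k)) y,
        productDist (fun k => W (x k)) y ≤ ρ ^ n := by
  set z : X → Y → ℝ := fun x y => Real.logb 2 (W x y) - Real.logb 2 (Q y) - c with hz
  have hmean : ∀ x, ∑ y, W x y * z x y < 0 := fun x => by
    simpa [hz, mul_sub, sum_sub_distrib, ← sum_mul, (hW x).2, relEntropy] using hc x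
  obtain ⟨s, hs, hspos⟩ := ((eventually_all.2 fun x =>
    eventually_sum_mul_exp_lt_one (hW x).2 (hmean x)).and
      (eventually_mem_nhdsWithin (s := Set.Ioi (0 : ℝ)))).exists
  have hmgf_nonneg : ∀ x, 0 ≤ ∑ y, W x y * Real.exp (s * z x y) := fun x =>
    sum_nonneg fun y _ => mul_nonneg ((hW x).1 y) (Real.exp_pos _).le
  obtain ⟨x₀, hmax⟩ := Finite.exists_max fun x => ∑ y, W x y * Real.exp (s * z x y)
  refine ⟨_, hmgf_nonneg x₀, hs x₀, fun n x => ?_⟩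
  calc ∑ y with 2 ^ (n * c) * productDist (fun _ => Q) y < productDist (fun k => W (x k)) y,
        productDist (fun k => W (x k)) y
      ≤ ∑ y with 0 ≤ ∑ k, s * z (x k) (y k), productDist (fun k => W (x k)) y := by
        refine sum_le_sum_of_subset_of_nonneg (monotone_filter_right _ fun y _ hy => ?_)
          fun y _ _ => prod_nonneg fun k _ => (hW (x k)).1 (y k)
        rw [← mul_sum]
        exact mul_nonneg (le_of_lt hspos) (sum_logb_sub_pos_of_lt_productDist
          hQ (fun k => hWQ (x k)) hy).le
    _ ≤ ∏ k, ∑ y, W (x k) y * Real.exp (s * z (x k) y) :=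
        sum_filter_productDist_le_prod (fun k => (hW (x k)).1) fun k y => s * z (x k) y
    _ ≤ (∑ y, W x₀ y * Real.exp (s * z x₀ y)) ^ n := by
        simpa using prod_le_prod (fun k _ => hmgf_nonneg (x k)) fun k (_ : k ∈ univ) => hmax (x k)

end Chernoff

section Maurey

open Finset

variable {A E : Type*} [Fintype A] [NormedAddCommGroup E] [InnerProductSpace ℝ E]

open scoped RealInnerProductSpace

lemma IsProbDist.sum_mul_norm_add_sub_mean_sq {P : A → ℝ} (hP : IsProbDist P) (v : A → E) (s : E) :
    ∑ a, P a * ‖s + (v a - ∑ b, P b • v b)‖ ^ 2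
      = ‖s‖ ^ 2 + ∑ a, P a * ‖v a‖ ^ 2 - ‖∑ a, P a • v a‖ ^ 2 := by
  set c := ∑ b, P b • v b with hc
  have hexpand : ∀ a, P a * ‖s + (v a - c)‖ ^ 2
      = P a * ‖s - c‖ ^ 2 + 2 * ⟪s - c, P a • v a⟫ + P a * ‖v a‖ ^ 2 := fun a => by
    rw [show s + (v a - c) = s - c + v a by abel, norm_add_sq_real, inner_smul_right]
    ring
  have hs := norm_add_sq_real (s - c) c
  rw [sub_add_cancel] at hs
  simp only [hexpand, sum_add_distrib, ← sum_mul, ← mul_sum, ← inner_sum, hP.2, ← hc]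
  linarith

/- The points are chosen one by one: the mean over `a` of the squared deviation after adding `v a`
exceeds the current one by at most `K`, so some `a` does no worse. -/
lemma exists_norm_sum_sub_smul_mean_sq_le {P : A → ℝ} (hP : IsProbDist P) {v : A → E} {K : ℝ}
    (hK : ∀ a, ‖v a‖ ^ 2 ≤ K) (M : ℕ) :
    ∃ f : Fin M → A, ‖∑ i, v (f i) - (M : ℝ) • ∑ a, P a • v a‖ ^ 2 ≤ M * K := by
  induction M with
  | zero => exact ⟨Fin.elim0, by simp⟩
  | succ m ih =>
    obtain ⟨f, hf⟩ := ih
    obtain ⟨a, ha⟩ := hP.exists_le_sum_mul fun a =>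
      ‖∑ i, v (f i) - (m : ℝ) • (∑ b, P b • v b) + (v a - ∑ b, P b • v b)‖ ^ 2
    rw [hP.sum_mul_norm_add_sub_mean_sq] at ha
    set c := ∑ a, P a • v a
    refine ⟨Fin.cons a f, ?_⟩
    calc ‖∑ i, v ((Fin.cons a f : Fin (m + 1) → A) i) - ((m + 1 : ℕ) : ℝ) • c‖ ^ 2
        = ‖∑ i, v (f i) - (m : ℝ) • c + (v a - c)‖ ^ 2 := by
          simp only [Fin.sum_univ_succ, Fin.cons_zero, Fin.cons_succ, Nat.cast_succ, add_smul,
            one_smul]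
          congr 2
          abel
      _ ≤ ‖∑ i, v (f i) - (m : ℝ) • c‖ ^ 2 + ∑ a, P a * ‖v a‖ ^ 2 - ‖c‖ ^ 2 := ha
      _ ≤ m * K + K := by
          linarith [hP.sum_mul_le_of_forall_le hK, sq_nonneg ‖c‖]
      _ = ((m + 1 : ℕ) : ℝ) * K := by push_cast; ring

lemma exists_forall_abs_inner_mean_sub_le {P : A → ℝ} (hP : IsProbDist P) {v : A → E}
    {K η : ℝ} (hK : ∀ a, ‖v a‖ ^ 2 ≤ K) (hη : 0 ≤ η) {M : ℕ} (hM : 0 < M) (hKM : K ≤ η ^ 2 * M) :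
    ∃ f : Fin M → A, ∀ u : E,
      |∑ i, (M : ℝ)⁻¹ * ⟪u, v (f i)⟫ - ∑ a, P a * ⟪u, v a⟫| ≤ η * ‖u‖ := by
  obtain ⟨f, hf⟩ := exists_norm_sum_sub_smul_mean_sq_le hP hK M
  refine ⟨f, fun u => ?_⟩
  have hMpos : (0 : ℝ) < M := Nat.cast_pos.2 hM
  set d := ∑ i, v (f i) - (M : ℝ) • ∑ a, P a • v a with hd
  have hd_le : ‖d‖ ≤ M * η := abs_le_of_sq_le_sq' (by
    calc ‖d‖ ^ 2 ≤ M * K := hf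
      _ ≤ M * (η ^ 2 * M) := by gcongr
      _ = (M * η) ^ 2 := by ring) (by positivity) |>.2
  have hinner : ∑ i, (M : ℝ)⁻¹ * ⟪u, v (f i)⟫ - ∑ a, P a * ⟪u, v a⟫ = (M : ℝ)⁻¹ * ⟪u, d⟫ := by
    simp only [hd, inner_sub_right, inner_sum, inner_smul_right, mul_sub, mul_sum]
    field_simp
  calc |∑ i, (M : ℝ)⁻¹ * ⟪u, v (f i)⟫ - ∑ a, P a * ⟪u, v a⟫| = (M : ℝ)⁻¹ * |⟪u, d⟫| := by
        rw [hinner, abs_mul, abs_of_pos (inv_pos.2 hMpos)]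
    _ ≤ (M : ℝ)⁻¹ * (‖u‖ * (M * η)) := by
        gcongr
        exact (abs_real_inner_le_norm u d).trans (by gcongr)
    _ = η * ‖u‖ := by field_simp

end Maurey

section SoftCovering

open Finset

variable {A B : Type*} [Fintype A]

section WeightedDensity

variable [Fintype B]

/-- The vector `(v b / √(Q b))_b`: the density of `v` with respect to `Q`, transported from `L²(Q)`
to the Euclidean space, so that the squared norm is `∑ b, v b ^ 2 / Q b`. -/
noncomputable def weightedDensity (Q v : B → ℝ) : EuclideanSpace ℝ B :=
  WithLp.toLp 2 fun b => v b / √(Q b)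

/-- The vector `√(Q b)` restricted to `D`: the indicator of `D` in `L²(Q)`, transported as in
`weightedDensity`, so that pairing with it evaluates a measure on `D`. -/
noncomputable def weightedIndicator (Q : B → ℝ) (D : Finset B) : EuclideanSpace ℝ B :=
  WithLp.toLp 2 ((D : Set B).indicator fun b => √(Q b))

lemma norm_weightedDensity_sq_le {Q v : B → ℝ} {K : ℝ} (hQ : ∀ b, 0 ≤ Q b) (hK : 0 ≤ K)
    (hv : ∀ b, 0 ≤ v b) (hv1 : ∑ b, v b ≤ 1) (hvK : ∀ b, v b ≤ K * Q b) :
    ‖weightedDensity Q v‖ ^ 2 ≤ K := by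
  have hterm : ∀ b, v b ^ 2 / Q b ≤ K * v b := fun b =>
    div_le_of_le_mul₀ (hQ b) (mul_nonneg hK (hv b)) <| by nlinarith [hv b, hvK b]
  calc ‖weightedDensity Q v‖ ^ 2 = ∑ b, v b ^ 2 / Q b := by
        simp [weightedDensity, EuclideanSpace.norm_sq_eq, div_pow, Real.sq_sqrt (hQ _)]
    _ ≤ ∑ b, K * v b := sum_le_sum fun b _ => hterm b
    _ ≤ K := by
        rw [← mul_sum]
        exact mul_le_of_le_one_right hK hv1

lemma norm_weightedIndicator_le_one {Q : B → ℝ} (hQ : IsProbDist Q) (D : Finset B) :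
    ‖weightedIndicator Q D‖ ≤ 1 := by
  classical
  refine (sq_le_one_iff₀ (norm_nonneg _)).1 ?_
  calc ‖weightedIndicator Q D‖ ^ 2 = ∑ b ∈ D, Q b := by
        simp [weightedIndicator, EuclideanSpace.norm_sq_eq, Set.indicator_apply, apply_ite,
          ite_pow, Real.sq_sqrt (hQ.1 _)]
    _ ≤ ∑ b, Q b := sum_le_univ_sum_of_nonneg hQ.1
    _ = 1 := hQ.2

lemma inner_weightedIndicator_weightedDensity {Q v : B → ℝ} (hQ : ∀ b, 0 ≤ Q b)
    (hvQ : ∀ b, Q b = 0 → v b = 0) (D : Finset B) :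
    inner ℝ (weightedIndicator Q D) (weightedDensity Q v) = ∑ b ∈ D, v b := by
  classical
  have hcancel : ∀ b, v b / √(Q b) * √(Q b) = v b := fun b =>
    div_mul_cancel_of_imp fun h => hvQ b ((Real.sqrt_eq_zero (hQ b)).1 h)
  simp [weightedIndicator, weightedDensity, PiLp.inner_apply, Set.indicator_apply, hcancel]

lemma exists_codebook_of_le_mul {P : A → ℝ} (hP : IsProbDist P) {V : A → B → ℝ} {Q : B → ℝ}
    (hQ : IsProbDist Q) {K η : ℝ} (hK : 0 ≤ K) (hV : ∀ a b, 0 ≤ V a b) (hV1 : ∀ a, ∑ b, V a b ≤ 1)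
    (hVK : ∀ a b, V a b ≤ K * Q b) (hη : 0 ≤ η) {M : ℕ} (hM : 0 < M) (hKM : K ≤ η ^ 2 * M) :
    ∃ f : Fin M → A, ∀ D : Finset B,
      |∑ b ∈ D, channelOutput (fun _ => (M : ℝ)⁻¹) (fun i => V (f i)) b
        - ∑ b ∈ D, channelOutput P V b| ≤ η := by
  obtain ⟨f, hf⟩ := exists_forall_abs_inner_mean_sub_le hP (v := fun a => weightedDensity Q (V a))
    (fun a => norm_weightedDensity_sq_le hQ.1 hK (hV a) (hV1 a) (hVK a)) hη hM hKM
  have hVQ : ∀ a b, Q b = 0 → V a b = 0 := fun a b hb =>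
    le_antisymm (by simpa [hb] using hVK a b) (hV a b)
  refine ⟨f, fun D => ?_⟩
  have hD := (hf (weightedIndicator Q D)).trans
    (mul_le_of_le_one_right hη (norm_weightedIndicator_le_one hQ D))
  simpa only [inner_weightedIndicator_weightedDensity hQ.1 (hVQ _), sum_channelOutput] using hD

end WeightedDensity

/-- The restriction of `v` to the points where its density with respect to `Q` is at most `K`,
discarding the tail to which the second-moment bound of `exists_codebook_of_le_mul` does not
apply. -/
noncomputable def boundedPart (K : ℝ) (Q v : B → ℝ) (b : B) : ℝ :=
  if v b ≤ K * Q b then v b else 0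

lemma boundedPart_nonneg {v : B → ℝ} (hv : ∀ b, 0 ≤ v b) (K : ℝ) (Q : B → ℝ) (b : B) :
    0 ≤ boundedPart K Q v b := by
  unfold boundedPart
  split_ifs
  exacts [hv b, le_rfl]

lemma boundedPart_le {v : B → ℝ} (hv : ∀ b, 0 ≤ v b) (K : ℝ) (Q : B → ℝ) (b : B) :
    boundedPart K Q v b ≤ v b := by
  unfold boundedPart
  split_ifs
  exacts [le_rfl, hv b]

lemma boundedPart_le_mul {K : ℝ} (hK : 0 ≤ K) {Q : B → ℝ} (hQ : ∀ b, 0 ≤ Q b) (v : B → ℝ) (b : B) :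
    boundedPart K Q v b ≤ K * Q b := by
  unfold boundedPart
  split_ifs with h
  exacts [h, mul_nonneg hK (hQ b)]

variable [Fintype B]

lemma sum_sub_boundedPart_le {v : B → ℝ} (hv : ∀ b, 0 ≤ v b) (K : ℝ) (Q : B → ℝ) (D : Finset B) :
    ∑ b ∈ D, (v b - boundedPart K Q v b) ≤ ∑ b with K * Q b < v b, v b :=
  calc ∑ b ∈ D, (v b - boundedPart K Q v b) ≤ ∑ b, (v b - boundedPart K Q v b) :=
        sum_le_univ_sum_of_nonneg fun b => sub_nonneg.2 (boundedPart_le hv K Q b)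
    _ = ∑ b with K * Q b < v b, v b := by
        rw [sum_filter]
        refine sum_congr rfl fun b _ => ?_
        by_cases h : v b ≤ K * Q b
        · simp [boundedPart, h, h.not_gt]
        · simp [boundedPart, h, not_le.1 h]

lemma abs_sum_channelOutput_sub_boundedPart_le {P : A → ℝ} (hP : IsProbDist P) {V : A → B → ℝ}
    (hV : ∀ a b, 0 ≤ V a b) {K η : ℝ} {Q : B → ℝ}
    (htail : ∀ a, ∑ b with K * Q b < V a b, V a b ≤ η) (D : Finset B) :
    |∑ b ∈ D, channelOutput P V b - ∑ b ∈ D, channelOutput P (fun a => boundedPart K Q (V a)) b|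
      ≤ η := by
  rw [sum_channelOutput, sum_channelOutput, ← sum_sub_distrib]
  simp only [← mul_sub, ← sum_sub_distrib]
  have hdiff : ∀ a, 0 ≤ ∑ b ∈ D, (V a b - boundedPart K Q (V a) b) := fun a =>
    sum_nonneg fun b _ => sub_nonneg.2 (boundedPart_le (hV a) K Q b)
  rw [abs_of_nonneg (sum_nonneg fun a _ => mul_nonneg (hP.1 a) (hdiff a))]
  exact hP.sum_mul_le_of_forall_le fun a =>
    (sum_sub_boundedPart_le (hV a) K Q D).trans (htail a)

lemma exists_codebook_of_tail_le {P : A → ℝ} (hP : IsProbDist P) {V : A → B → ℝ}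
    (hV : ∀ a, IsProbDist (V a)) {Q : B → ℝ} (hQ : IsProbDist Q) {K η : ℝ} (hK : 0 ≤ K)
    (hη : 0 ≤ η) (htail : ∀ a, ∑ b with K * Q b < V a b, V a b ≤ η) {M : ℕ} (hM : 0 < M)
    (hKM : K ≤ η ^ 2 * M) :
    ∃ f : Fin M → A, ∀ D : Finset B,
      |∑ b ∈ D, channelOutput (fun _ => (M : ℝ)⁻¹) (fun i => V (f i)) b
        - ∑ b ∈ D, channelOutput P V b| ≤ 3 * η := by
  obtain ⟨f, hf⟩ := exists_codebook_of_le_mul hP (V := fun a => boundedPart K Q (V a)) hQ hK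
    (fun a => boundedPart_nonneg (hV a).1 K Q)
    (fun a => (sum_le_sum fun b _ => boundedPart_le (hV a).1 K Q b).trans_eq (hV a).2)
    (fun a => boundedPart_le_mul hK hQ.1 (V a)) hη hM hKM
  refine ⟨f, fun D => ?_⟩
  have hcode := abs_le.1 <| abs_sum_channelOutput_sub_boundedPart_le (.uniform hM)
    (fun i => (hV (f i)).1) (fun i => htail (f i)) D
  have hinput := abs_le.1 <| abs_sum_channelOutput_sub_boundedPart_le hP (fun a => (hV a).1) htail D
  have hbounded := abs_le.1 (hf D)
  rw [abs_le]
  constructor <;> linarith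

end SoftCovering

section Estimates

open Filter

lemma eventually_mul_le_two_rpow (c : ℝ) {d : ℝ} (hd : 0 < d) :
    ∀ᶠ n : ℕ in atTop, c * n ≤ (2 : ℝ) ^ (n * d) := by
  have hlim := (tendsto_pow_const_div_const_pow_of_one_lt 1
    (Real.one_lt_rpow one_lt_two hd)).const_mul c
  rw [mul_zero] at hlim
  filter_upwards [hlim.eventually_lt_const one_pos] with n hn
  rw [pow_one, ← mul_div_assoc, div_lt_one (by positivity), ← Real.rpow_mul_natCast two_pos.le,
    mul_comm d] at hn
  exact hn.le

lemma exists_nat_le_sq_mul {η K : ℝ} (hη : 0 < η) (hK : 1 ≤ K) :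
    ∃ M : ℕ, 0 < M ∧ K ≤ η ^ 2 * M ∧ M ≤ (1 / η ^ 2 + 1) * K := by
  refine ⟨⌈K / η ^ 2⌉₊, Nat.ceil_pos.2 (by positivity), ?_, ?_⟩
  · rw [← div_le_iff₀' (by positivity)]
    exact Nat.le_ceil _
  · calc (⌈K / η ^ 2⌉₊ : ℝ) ≤ K / η ^ 2 + 1 := (Nat.ceil_lt_add_one (by positivity)).le
      _ ≤ K / η ^ 2 + K := by gcongr
      _ = (1 / η ^ 2 + 1) * K := by ring

lemma natCast_pow_le_two_rpow (q m : ℕ) : ((q ^ m : ℕ) : ℝ) ≤ (2 : ℝ) ^ (q * m : ℝ) :=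
  calc ((q ^ m : ℕ) : ℝ) ≤ ((2 ^ q) ^ m : ℕ) := by
        gcongr
        exact Nat.lt_two_pow_self.le
    _ = (2 : ℝ) ^ (q * m : ℝ) := by
        rw [← pow_mul, Nat.cast_pow, ← Real.rpow_natCast]
        norm_cast

end Estimates

section Identification

open Finset

variable {X Y : Type*} [Fintype X] [Fintype Y] [DecidableEq Y] {W : X → Y → ℝ} {n N : ℕ}
  {lam1 lam2 : ℝ} {P : Fin N → (Fin n → X) → ℝ} {D : Fin N → Finset (Fin n → Y)}

namespace IsIDCode

lemma one_sub_le_sum_channelOutput (hW : ∀ x, IsProbDist (W x))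
    (hcode : IsIDCode W n N lam1 lam2 P D) (i : Fin N) :
    1 - lam1 ≤ ∑ y ∈ D i, channelOutput (P i) (fun x => productDist fun k => W (x k)) y := by
  have hmiss : ∑ y ∈ (D i)ᶜ, channelOutput (P i) (fun x => productDist fun k => W (x k)) y ≤ lam1 :=
    (sum_channelOutput _ _ _).trans_le (hcode.2.1 i)
  have htotal := ((hcode.1 i).channelOutput fun x => .productDist fun k => hW (x k)).2
  rw [← sum_compl_add_sum (D i)] at htotal
  linarith

lemma sum_channelOutput_le (hcode : IsIDCode W n N lam1 lam2 P D) {i j : Fin N} (hij : i ≠ j) :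
    ∑ y ∈ D i, channelOutput (P j) (fun x => productDist fun k => W (x k)) y ≤ lam2 :=
  (sum_channelOutput _ _ _).trans_le (hcode.2.2 i j hij)

/- If messages `i ≠ j` had the same codebook, their output distributions would differ by at most
`6 * η` on `D i`, whereas the code separates them by at least `1 - lam1 - lam2`. -/
lemma card_le_card_pow (hW : ∀ x, IsProbDist (W x)) (hcode : IsIDCode W n N lam1 lam2 P D)
    {Q : (Fin n → Y) → ℝ} (hQ : IsProbDist Q) {K η : ℝ} (hK : 0 ≤ K) (hη : 0 ≤ η)
    (htail : ∀ x : Fin n → X, ∑ y with K * Q y < productDist (fun k => W (x k)) y,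
      productDist (fun k => W (x k)) y ≤ η)
    (hgap : lam1 + lam2 + 6 * η < 1) {M : ℕ} (hM : 0 < M) (hKM : K ≤ η ^ 2 * M) :
    N ≤ Fintype.card X ^ (n * M) := by
  choose f hf using fun i => exists_codebook_of_tail_le (hcode.1 i)
    (fun x => .productDist fun k => hW (x k)) hQ hK hη htail hM hKM
  have hinj : Function.Injective f := by
    intro i j hij
    by_contra hne
    have hi := (abs_le.1 (hf i (D i))).1
    have hj := (abs_le.1 (hf j (D i))).2
    rw [hij] at hi
    linarith [hcode.one_sub_le_sum_channelOutput hW i, hcode.sum_channelOutput_le hne]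
  simpa [pow_mul] using Fintype.card_le_of_injective f hinj

lemma natCast_le_two_rpow (hW : ∀ x, IsProbDist (W x)) (hcode : IsIDCode W n N lam1 lam2 P D)
    {Q : (Fin n → Y) → ℝ} (hQ : IsProbDist Q) {K η : ℝ} (hK : 1 ≤ K) (hη : 0 < η)
    (htail : ∀ x : Fin n → X, ∑ y with K * Q y < productDist (fun k => W (x k)) y,
      productDist (fun k => W (x k)) y ≤ η)
    (hgap : lam1 + lam2 + 6 * η < 1) :
    (N : ℝ) ≤ (2 : ℝ) ^ (Fintype.card X * (1 / η ^ 2 + 1) * n * K) := by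
  obtain ⟨M, hM, hKM, hMK⟩ := exists_nat_le_sq_mul hη hK
  have hN := hcode.card_le_card_pow hW hQ (zero_le_one.trans hK) hη.le htail hgap hM hKM
  refine ((Nat.cast_le.2 hN).trans (natCast_pow_le_two_rpow _ _)).trans
    (Real.rpow_le_rpow_of_exponent_le one_le_two ?_)
  calc (Fintype.card X : ℝ) * (n * M : ℕ)
      ≤ Fintype.card X * (n * ((1 / η ^ 2 + 1) * K)) := by push_cast; gcongr
    _ = Fintype.card X * (1 / η ^ 2 + 1) * n * K := by ring

end IsIDCode

end Identification

theorem stmt1 {X Y : Type*} [Fintype X] [Fintype Y] [DecidableEq Y] [Nonempty X] [Nonempty Y]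
    (W : X → Y → ℝ) (hW : ∀ x, IsProbDist (W x))
    (lam1 lam2 : ℝ) (h1 : 0 < lam1) (h2 : 0 < lam2) (hsum : lam1 + lam2 < 1)
    (δ : ℝ) (hδ : 0 < δ) :
    ∃ n₀ : ℕ, ∀ n ≥ n₀, ∀ N : ℕ,
      ∀ (P : Fin N → (Fin n → X) → ℝ) (D : Fin N → Finset (Fin n → Y)),
        IsIDCode W n N lam1 lam2 P D →
        (N:ℝ) ≤ (2:ℝ) ^ ((2:ℝ) ^ ((n:ℝ) * (capacity W + δ))) := by
  obtain ⟨Q, hQ, hWQ, hle⟩ := exists_relEntropy_le_capacity hW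
  obtain ⟨ρ, hρ0, hρ1, htail⟩ := exists_sum_filter_lt_productDist_le_pow hW hQ.1 hWQ
    fun x => (hle x).trans_lt (lt_add_of_pos_right _ (half_pos hδ))
  set η : ℝ := (1 - lam1 - lam2) / 7 with hη
  have hη0 : 0 < η := by linarith
  obtain ⟨n₀, hn₀⟩ := Filter.eventually_atTop.1 <|
    ((tendsto_pow_atTop_nhds_zero_of_lt_one hρ0 hρ1).eventually_lt_const hη0).and <|
      eventually_mul_le_two_rpow (Fintype.card X * (1 / η ^ 2 + 1)) (half_pos hδ)
  refine ⟨n₀, fun n hn N P D hcode => ?_⟩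
  obtain ⟨hsmall, hlarge⟩ := hn₀ n hn
  set K : ℝ := 2 ^ (n * (capacity W + δ / 2)) with hK
  have hK1 : 1 ≤ K := Real.one_le_rpow one_le_two
    (mul_nonneg n.cast_nonneg (add_nonneg (capacity_nonneg hW) (half_pos hδ).le))
  refine (hcode.natCast_le_two_rpow hW (.productDist fun _ => hQ) hK1 hη0
    (fun x => (htail n x).trans hsmall.le) (by linarith)).trans
    (Real.rpow_le_rpow_of_exponent_le one_le_two ?_)
  calc Fintype.card X * (1 / η ^ 2 + 1) * n * K ≤ 2 ^ (n * (δ / 2)) * K := by gcongr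
    _ = 2 ^ (n * (capacity W + δ)) := by
        rw [hK, ← Real.rpow_add two_pos]
        ring_nf
end

section
/- Let λ₁, λ₂ > 0 with λ₁ + λ₂ < 1. Then for every δ > 0 there exists n₀ such that for all n ≥ n₀, the maximal size of (not necessarily simultaneous) quantum identification codes satisfies N(n, λ₁, λ₂) ≤ 2^(2^(n(C(W) + δ))). -/
open scoped BigOperators
open ComplexOrder
open scoped Matrix

noncomputable def vnEntropy {m : Type*} [Fintype m] [DecidableEq m] (ρ : Matrix m m ℂ) : ℝ :=
  if h : ρ.IsHermitian then -∑ i, h.eigenvalues i * Real.logb 2 (h.eigenvalues i) else 0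

def IsDensity {m : Type*} [Fintype m] [DecidableEq m] (ρ : Matrix m m ℂ) : Prop :=
  ρ.PosSemidef ∧ ρ.trace = 1

noncomputable def qMutualInfo {X : Type*} [Fintype X] {d : ℕ}
    (P : X → ℝ) (W : X → Matrix (Fin d) (Fin d) ℂ) : ℝ :=
  vnEntropy (∑ x, (P x : ℂ) • W x) - ∑ x, P x * vnEntropy (W x)

noncomputable def qCapacity {X : Type*} [Fintype X] {d : ℕ}
    (W : X → Matrix (Fin d) (Fin d) ℂ) : ℝ :=
  sSup {c | ∃ P : X → ℝ, IsProbDist P ∧ c = qMutualInfo P W}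

/-- The block (tensor-power) channel. -/
def Wblock {X : Type*} {d : ℕ} (W : X → Matrix (Fin d) (Fin d) ℂ) (n : ℕ)
    (xn : Fin n → X) : Matrix (Fin n → Fin d) (Fin n → Fin d) ℂ :=
  Matrix.of fun i j => ∏ k, W (xn k) (i k) (j k)

def IsQIDCode {X : Type*} [Fintype X] {d : ℕ} (W : X → Matrix (Fin d) (Fin d) ℂ)
    (n N : ℕ) (lam1 lam2 : ℝ) (P : Fin N → (Fin n → X) → ℝ)
    (D : Fin N → Matrix (Fin n → Fin d) (Fin n → Fin d) ℂ) : Prop :=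
  (∀ i, IsProbDist (P i)) ∧
  (∀ i, (D i).PosSemidef ∧ (1 - D i).PosSemidef) ∧
  (∀ i, ((∑ xn : Fin n → X, (P i xn : ℂ) • Wblock W n xn) * (1 - D i)).trace.re ≤ lam1) ∧
  (∀ i j, i ≠ j →
    ((∑ xn : Fin n → X, (P j xn : ℂ) • Wblock W n xn) * D i).trace.re ≤ lam2)

/-!
Fix a block length `n` and call the empirical distribution `t` of a word `x` its type. The average
`σ` of the outputs along `x` depends only on `t`. Up to errors that vanish by Chebyshev's
inequality, the probability `Tr (Wⁿₓ D)` of an effect `D` is the Hilbert–Schmidt inner product of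
`√(σ^⊗n) D` with the vector `(σ^⊗n)^(-1/2) Wⁿₓ`, cut off to typical subspaces. The squared norm of
that vector is about `2 ^ (n I(t; W)) ≤ 2 ^ (n C(W))`, while `√(σ^⊗n) D` has norm at most one and
depends on `x` only through `t`.

There are only polynomially many types, so Maurey's empirical method approximates the vectors
averaged under any input distribution by those of `M ≈ 2 ^ (n (C(W) + δ / 2))` words, in norm and
hence uniformly in `D`. Two messages of an identification code with the same list of `M` words would
then be confused, so there are at most `|𝒳| ^ (n M)` of them.
-/

namespace IsProbDist

section Basic

variable {ι : Type*} [Fintype ι] {p : ι → ℝ}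

theorem le_one_s3 (hp : IsProbDist p) (i : ι) : p i ≤ 1 :=
  hp.2 ▸ Finset.single_le_sum (fun j _ => hp.1 j) (Finset.mem_univ i)

theorem exists_le_of_sum_mul_le (hp : IsProbDist p) {f : ι → ℝ} {c : ℝ}
    (h : ∑ i, p i * f i ≤ c) : ∃ i, f i ≤ c := by
  by_contra! hlt
  have hne : ∃ i ∈ Finset.univ, p i ≠ 0 :=
    Finset.exists_ne_zero_of_sum_ne_zero (hp.2.trans_ne one_ne_zero)
  obtain ⟨i, -, hi⟩ := hne
  have : ∑ i, p i * c < ∑ i, p i * f i :=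
    Finset.sum_lt_sum (fun j _ => mul_le_mul_of_nonneg_left (hlt j).le (hp.1 j))
      ⟨i, Finset.mem_univ i, mul_lt_mul_of_pos_left (hlt i) ((hp.1 i).lt_of_ne' hi)⟩
  rw [← Finset.sum_mul, hp.2, one_mul] at this
  exact this.not_ge h

/-- A probability vector as a probability mass function, giving access to the measure-theoretic
library. -/
noncomputable def toPMF (hp : IsProbDist p) : PMF ι :=
  PMF.ofFintype (fun i => ENNReal.ofReal (p i)) <| by
    rw [← ENNReal.ofReal_sum_of_nonneg fun i _ => hp.1 i, hp.2, ENNReal.ofReal_one]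

theorem toReal_toPMF_apply (hp : IsProbDist p) (i : ι) : (hp.toPMF i).toReal = p i :=
  ENNReal.toReal_ofReal (hp.1 i)

theorem integral_toPMF [MeasurableSpace ι] [MeasurableSingletonClass ι] (hp : IsProbDist p)
    (f : ι → ℝ) : ∫ i, f i ∂hp.toPMF.toMeasure = ∑ i, p i * f i := by
  simp only [PMF.integral_eq_sum, toReal_toPMF_apply, smul_eq_mul]

end Basic

section Product

open MeasureTheory ProbabilityTheory

variable {κ ι : Type*} [Fintype κ] [Fintype ι] {p : κ → ι → ℝ}

protected theorem prod [DecidableEq κ] (hp : ∀ k, IsProbDist (p k)) :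
    IsProbDist fun l : κ → ι => ∏ k, p k (l k) := by
  refine ⟨fun l => Finset.prod_nonneg fun k _ => (hp k).1 _, ?_⟩
  rw [← Fintype.piFinset_univ, ← Finset.prod_univ_sum]
  exact Finset.prod_eq_one fun k _ => (hp k).2

theorem measureReal_pi_toPMF [MeasurableSpace ι] [MeasurableSingletonClass ι]
    (hp : ∀ k, IsProbDist (p k)) (S : Finset (κ → ι)) :
    (Measure.pi fun k => (hp k).toPMF.toMeasure).real S = ∑ l ∈ S, ∏ k, p k (l k) := by
  rw [← sum_measureReal_singleton]
  refine Finset.sum_congr rfl fun l _ => ?_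
  rw [measureReal_def, Measure.pi_singleton, ENNReal.toReal_prod]
  refine Finset.prod_congr rfl fun k _ => ?_
  rw [PMF.toMeasure_apply_singleton _ _ (measurableSet_singleton _), toReal_toPMF_apply]

theorem chebyshev_sum_prod_le (hp : ∀ k, IsProbDist (p k)) (f : κ → ι → ℝ) {t : ℝ} (ht : 0 < t)
    {S : Finset (κ → ι)}
    (hS : ∀ l ∈ S, t ≤ |∑ k, f k (l k) - ∑ k, ∑ i, p k i * f k i|) :
    ∑ l ∈ S, ∏ k, p k (l k) ≤ (∑ k, ∑ i, p k i * f k i ^ 2) / t ^ 2 := by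
  let _ : MeasurableSpace ι := ⊤
  set μ : κ → Measure ι := fun k => (hp k).toPMF.toMeasure
  set Y : (κ → ι) → ℝ := ∑ k, fun l => f k (l k)
  have hf (k : κ) : MemLp (f k) 2 (μ k) := .of_discrete
  have hmean : ∫ l, Y l ∂Measure.pi μ = ∑ k, ∑ i, p k i * f k i := by
    simp only [Y, Finset.sum_apply]
    rw [integral_finsetSum _ fun k _ => .of_finite]
    refine Finset.sum_congr rfl fun k _ => ?_
    rw [integral_comp_eval .of_discrete, integral_toPMF]
  have hvar : Var[Y; Measure.pi μ] ≤ ∑ k, ∑ i, p k i * f k i ^ 2 := by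
    rw [variance_sum_pi hf]
    refine Finset.sum_le_sum fun k _ => ?_
    rw [← (hp k).integral_toPMF fun i => f k i ^ 2]
    exact variance_le_expectation_sq .of_discrete
  calc ∑ l ∈ S, ∏ k, p k (l k) = (Measure.pi μ).real S := (measureReal_pi_toPMF hp S).symm
    _ ≤ (Measure.pi μ).real {l | t ≤ |Y l - ∫ l, Y l ∂Measure.pi μ|} := by
      refine measureReal_mono fun l hl => ?_
      change t ≤ |Y l - ∫ l, Y l ∂Measure.pi μ|
      rw [hmean]
      simpa only [Y, Finset.sum_apply] using hS l hl
    _ ≤ Var[Y; Measure.pi μ] / t ^ 2 :=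
      ENNReal.toReal_le_of_le_ofReal (by positivity [variance_nonneg Y (Measure.pi μ)])
        (meas_ge_le_variance_div_sq .of_discrete ht)
    _ ≤ _ := by gcongr

end Product

end IsProbDist

theorem mul_logb_two_sq_le {q : ℝ} (h0 : 0 ≤ q) (h1 : q ≤ 1) :
    q * Real.logb 2 q ^ 2 ≤ (2 / Real.log 2) ^ 2 := by
  rcases h0.eq_or_lt with rfl | hq
  · rw [zero_mul]; positivity
  have hlt : |Real.log q * √q| < 2 := by
    simpa [Real.sqrt_eq_rpow] using Real.abs_log_mul_self_rpow_lt q (1 / 2) hq h1 one_half_pos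
  calc q * Real.logb 2 q ^ 2 = |Real.log q * √q| ^ 2 / Real.log 2 ^ 2 := by
        rw [sq_abs, mul_pow, Real.sq_sqrt h0, Real.logb, div_pow]; ring
    _ ≤ (2 / Real.log 2) ^ 2 := by rw [div_pow]; gcongr

theorem IsProbDist.sum_mul_logb_sq_le {ι : Type*} [Fintype ι] {q : ι → ℝ} (hq : IsProbDist q) :
    ∑ i, q i * Real.logb 2 (q i) ^ 2 ≤ Fintype.card ι * (2 / Real.log 2) ^ 2 := by
  simpa using Finset.sum_le_sum fun i (_ : i ∈ Finset.univ) =>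
    mul_logb_two_sq_le (hq.1 i) (hq.le_one_s3 i)

theorem IsProbDist.sum_prod_le_of_atypical {κ ι : Type*} [Fintype κ] [Fintype ι]
    {p q : κ → ι → ℝ} (hp : ∀ k, IsProbDist (p k)) (hpq : ∀ k i, p k i ≠ 0 → 0 < q k i)
    {a t : ℝ} (ha : ∑ k, ∑ i, p k i * Real.logb 2 (q k i) = a) (ht : 0 < t)
    {S : Finset (κ → ι)}
    (hS : ∀ l ∈ S, ∏ k, q k (l k) < 2 ^ (a - t) ∨ 2 ^ (a + t) < ∏ k, q k (l k)) :
    ∑ l ∈ S, ∏ k, p k (l k) ≤ (∑ k, ∑ i, p k i * Real.logb 2 (q k i) ^ 2) / t ^ 2 := by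
  classical
  rw [← Finset.sum_filter_ne_zero]
  refine chebyshev_sum_prod_le hp (fun k i => Real.logb 2 (q k i)) ht fun l hl => ?_
  obtain ⟨hlS, hl0⟩ := Finset.mem_filter.mp hl
  have hq (k : κ) : 0 < q k (l k) := hpq k _ (Finset.prod_ne_zero_iff.mp hl0 k (Finset.mem_univ k))
  have hprod : 0 < ∏ k, q k (l k) := Finset.prod_pos fun k _ => hq k
  rw [← Real.logb_prod _ _ fun k _ => (hq k).ne', ha, le_abs']
  refine (hS l hlS).imp (fun h => ?_) fun h => ?_
  · linarith [(Real.logb_lt_iff_lt_rpow one_lt_two hprod).mpr h]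
  · linarith [(Real.lt_logb_iff_rpow_lt one_lt_two hprod).mpr h]

/-- The bound from Chebyshev's inequality on the probability that the log-likelihood of `n`
independent outcomes in a `d`-element set deviates by `n * η` from its mean. -/
noncomputable def tailBound (d n : ℕ) (η : ℝ) : ℝ :=
  d * (2 / Real.log 2) ^ 2 / (n * η ^ 2)

section Tail

variable {κ ι : Type*} [Fintype κ] [Nonempty κ] [Fintype ι] {η : ℝ} {S : Finset (κ → ι)}

theorem sum_prod_le_tailBound_of_average {p : κ → ι → ℝ} {q : ι → ℝ}
    (hp : ∀ k, IsProbDist (p k)) (hq : IsProbDist q)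
    (hpq : ∀ i, ∑ k, p k i = Fintype.card κ * q i) (hη : 0 < η)
    (hS : ∀ l ∈ S, ∏ k, q (l k) <
      2 ^ (Fintype.card κ * ∑ i, q i * Real.logb 2 (q i) - Fintype.card κ * η)) :
    ∑ l ∈ S, ∏ k, p k (l k) ≤ tailBound (Fintype.card ι) (Fintype.card κ) η := by
  have hn : (0 : ℝ) < Fintype.card κ := Nat.cast_pos.mpr Fintype.card_pos
  have hsum (f : ι → ℝ) :
      ∑ k, ∑ i, p k i * f i = Fintype.card κ * ∑ i, q i * f i := by
    rw [Finset.sum_comm, Finset.mul_sum]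
    exact Finset.sum_congr rfl fun i _ => by rw [← Finset.sum_mul, hpq, mul_assoc]
  have hpos (k : κ) (i : ι) (h : p k i ≠ 0) : 0 < q i := by
    have : p k i ≤ Fintype.card κ * q i :=
      hpq i ▸ Finset.single_le_sum (fun k _ => (hp k).1 i) (Finset.mem_univ k)
    exact pos_of_mul_pos_right ((((hp k).1 i).lt_of_ne' h).trans_le this) hn.le
  calc ∑ l ∈ S, ∏ k, p k (l k)
      ≤ (∑ k, ∑ i, p k i * Real.logb 2 (q i) ^ 2) / (Fintype.card κ * η) ^ 2 :=
        IsProbDist.sum_prod_le_of_atypical hp hpos (hsum _) (by positivity)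
          fun l hl => .inl (hS l hl)
    _ ≤ Fintype.card κ * (Fintype.card ι * (2 / Real.log 2) ^ 2) / (Fintype.card κ * η) ^ 2 := by
        rw [hsum fun i => Real.logb 2 (q i) ^ 2]
        gcongr
        exact hq.sum_mul_logb_sq_le
    _ = tailBound (Fintype.card ι) (Fintype.card κ) η := by
        rw [tailBound]
        field

theorem sum_prod_le_tailBound_of_self {r : κ → ι → ℝ} (hr : ∀ k, IsProbDist (r k)) (hη : 0 < η)
    (hS : ∀ l ∈ S, 2 ^ (∑ k, ∑ i, r k i * Real.logb 2 (r k i) + Fintype.card κ * η) <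
      ∏ k, r k (l k)) :
    ∑ l ∈ S, ∏ k, r k (l k) ≤ tailBound (Fintype.card ι) (Fintype.card κ) η := by
  have : (0 : ℝ) < Fintype.card κ := Nat.cast_pos.mpr Fintype.card_pos
  calc ∑ l ∈ S, ∏ k, r k (l k)
      ≤ (∑ k, ∑ i, r k i * Real.logb 2 (r k i) ^ 2) / (Fintype.card κ * η) ^ 2 :=
        IsProbDist.sum_prod_le_of_atypical hr (fun k i h => ((hr k).1 i).lt_of_ne' h) rfl
          (by positivity) fun l hl => .inr (hS l hl)
    _ ≤ (∑ _k : κ, Fintype.card ι * (2 / Real.log 2) ^ 2) / (Fintype.card κ * η) ^ 2 := by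
        gcongr with k
        exact (hr k).sum_mul_logb_sq_le
    _ = tailBound (Fintype.card ι) (Fintype.card κ) η := by
        rw [tailBound, Finset.sum_const, Finset.card_univ, nsmul_eq_mul]
        field

end Tail

section Maurey

variable {𝕜 E ι : Type*} [RCLike 𝕜] [NormedAddCommGroup E] [InnerProductSpace 𝕜 E] [Fintype ι]

open scoped InnerProductSpace

theorem IsProbDist.sum_mul_norm_add_sub_sq_le {p : ι → ℝ} (hp : IsProbDist p) (v : ι → E) {B : ℝ}
    (hv : ∀ i, ‖v i‖ ^ 2 ≤ B) (x : E) :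
    ∑ i, p i * ‖x + (v i - ∑ j, (p j : 𝕜) • v j)‖ ^ 2 ≤ ‖x‖ ^ 2 + B := by
  set m := ∑ j, (p j : 𝕜) • v j
  have hcross : ∑ i, p i * RCLike.re ⟪x - m, v i⟫_𝕜 = RCLike.re ⟪x - m, m⟫_𝕜 := by
    simp only [m, inner_sum, inner_smul_right, map_sum, RCLike.re_ofReal_mul]
  have hsq : ∑ i, p i * ‖v i‖ ^ 2 ≤ B := by
    calc ∑ i, p i * ‖v i‖ ^ 2 ≤ ∑ i, p i * B :=
          Finset.sum_le_sum fun i _ => mul_le_mul_of_nonneg_left (hv i) (hp.1 i)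
      _ = B := by rw [← Finset.sum_mul, hp.2, one_mul]
  calc ∑ i, p i * ‖x + (v i - m)‖ ^ 2
      = ∑ i, p i * (‖x - m‖ ^ 2 + 2 * RCLike.re ⟪x - m, v i⟫_𝕜 + ‖v i‖ ^ 2) := by
        simp only [← norm_add_sq (𝕜 := 𝕜), sub_add_eq_add_sub, add_sub_assoc]
    _ = ‖x - m‖ ^ 2 + 2 * RCLike.re ⟪x - m, m⟫_𝕜 + ∑ i, p i * ‖v i‖ ^ 2 := by
        simp only [mul_add, Finset.sum_add_distrib, ← Finset.sum_mul, hp.2, one_mul, ← hcross,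
          Finset.mul_sum, mul_left_comm]
    _ = ‖x‖ ^ 2 - ‖m‖ ^ 2 + ∑ i, p i * ‖v i‖ ^ 2 := by
        rw [← sub_add_cancel x m, norm_add_sq (𝕜 := 𝕜), add_sub_cancel_right]; ring
    _ ≤ ‖x‖ ^ 2 + B := by linarith [sq_nonneg ‖m‖]

/-- Maurey's empirical method: the samples are chosen one at a time, so that the squared norm of the
deviation grows by at most `B` in each step. -/
theorem IsProbDist.exists_norm_sum_sub_sq_le {p : ι → ℝ} (hp : IsProbDist p) (v : ι → E) {B : ℝ}
    (hv : ∀ i, ‖v i‖ ^ 2 ≤ B) (M : ℕ) :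
    ∃ s : Fin M → ι, ‖∑ k, (v (s k) - ∑ i, (p i : 𝕜) • v i)‖ ^ 2 ≤ M * B := by
  induction M with
  | zero => exact ⟨Fin.elim0, by simp⟩
  | succ M ih =>
    obtain ⟨s, hs⟩ := ih
    obtain ⟨i, hi⟩ := hp.exists_le_of_sum_mul_le
      (hp.sum_mul_norm_add_sub_sq_le (𝕜 := 𝕜) v hv (∑ k, (v (s k) - ∑ i, (p i : 𝕜) • v i)))
    refine ⟨Fin.snoc s i, ?_⟩
    simp only [Fin.sum_univ_castSucc, Fin.snoc_castSucc, Fin.snoc_last]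
    push_cast
    linarith

/-- Vectors of different classes are placed in orthogonal summands, so that one choice of samples
works for all `g`. -/
theorem IsProbDist.exists_norm_sum_inner_sub_le {T : Type*} [Fintype T]
    {p : ι → ℝ} (hp : IsProbDist p) (c : ι → T) (v : ι → E) {B : ℝ} (hv : ∀ i, ‖v i‖ ^ 2 ≤ B)
    (M : ℕ) :
    ∃ s : Fin M → ι, ∀ g : T → E, (∀ t, ‖g t‖ ≤ 1) →
      ‖∑ k, (⟪g (c (s k)), v (s k)⟫_𝕜 - ∑ i, p i * ⟪g (c i), v i⟫_𝕜)‖ ≤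
        √(Fintype.card T * (M * B)) := by
  classical
  let e (i : ι) : PiLp 2 fun _ : T => E := PiLp.single 2 (c i) (v i)
  obtain ⟨s, hs⟩ := hp.exists_norm_sum_sub_sq_le (𝕜 := 𝕜) e (B := B)
    (fun i => by simpa [e] using hv i) M
  refine ⟨s, fun g hg => ?_⟩
  have hinner (i : ι) : ⟪WithLp.toLp 2 g, e i⟫_𝕜 = ⟪g (c i), v i⟫_𝕜 := by
    simp [e, PiLp.inner_apply, apply_ite]
  have hg' : ‖WithLp.toLp 2 g‖ ≤ √(Fintype.card T) := by
    rw [PiLp.norm_eq_of_L2]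
    refine Real.sqrt_le_sqrt ?_
    simpa using Finset.sum_le_sum fun t (_ : t ∈ Finset.univ) =>
      pow_le_one₀ (n := 2) (norm_nonneg (g t)) (hg t)
  calc ‖∑ k, (⟪g (c (s k)), v (s k)⟫_𝕜 - ∑ i, p i * ⟪g (c i), v i⟫_𝕜)‖
      = ‖⟪WithLp.toLp 2 g, ∑ k, (e (s k) - ∑ i, (p i : 𝕜) • e i)⟫_𝕜‖ := by
        simp only [inner_sum, inner_sub_right, inner_smul_right, hinner]
    _ ≤ √(Fintype.card T) * √(M * B) :=
        (norm_inner_le_norm _ _).trans (mul_le_mul hg' (Real.le_sqrt_of_sq_le hs)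
          (norm_nonneg _) (Real.sqrt_nonneg _))
    _ = √(Fintype.card T * (M * B)) := (Real.sqrt_mul (Nat.cast_nonneg _) _).symm

theorem IsProbDist.norm_sum_mul_le {p : ι → ℝ} (hp : IsProbDist p) {F : ι → 𝕜} {ε : ℝ}
    (hF : ∀ i, ‖F i‖ ≤ ε) : ‖∑ i, (p i : 𝕜) * F i‖ ≤ ε := by
  calc ‖∑ i, (p i : 𝕜) * F i‖ ≤ ∑ i, p i * ε := norm_sum_le_of_le _ fun i _ => by
        rw [norm_mul, RCLike.norm_ofReal, abs_of_nonneg (hp.1 i)]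
        exact mul_le_mul_of_nonneg_left (hF i) (hp.1 i)
    _ = ε := by rw [← Finset.sum_mul, hp.2, one_mul]

theorem IsProbDist.exists_norm_sum_mul_sub_average_le {T : Type*} [Fintype T]
    {p : ι → ℝ} (hp : IsProbDist p) (c : ι → T) (v : ι → E) {B : ℝ} (hv : ∀ i, ‖v i‖ ^ 2 ≤ B)
    {M : ℕ} (hM : M ≠ 0) :
    ∃ s : Fin M → ι, ∀ (g : T → E) (F : ι → 𝕜) (ε : ℝ), (∀ t, ‖g t‖ ≤ 1) →
      (∀ i, ‖F i - ⟪g (c i), v i⟫_𝕜‖ ≤ ε) →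
      ‖∑ i, p i * F i - (M : 𝕜)⁻¹ * ∑ k, F (s k)‖ ≤ 2 * ε + √(Fintype.card T * B / M) := by
  obtain ⟨s, hs⟩ := hp.exists_norm_sum_inner_sub_le (𝕜 := 𝕜) c v hv M
  refine ⟨s, fun g F ε hg hF => ?_⟩
  set G : ι → 𝕜 := fun i => ⟪g (c i), v i⟫_𝕜
  set R : 𝕜 := ∑ k, (G (s k) - ∑ i, p i * G i)
  have hM' : (M : 𝕜) ≠ 0 := Nat.cast_ne_zero.mpr hM
  have hsplit : ∑ i, p i * F i - (M : 𝕜)⁻¹ * ∑ k, F (s k) =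
      ∑ i, p i * (F i - G i) - (M : 𝕜)⁻¹ * ∑ k, (F (s k) - G (s k)) - (M : 𝕜)⁻¹ * R := by
    simp only [R, mul_sub, Finset.sum_sub_distrib, Finset.sum_const, Finset.card_univ,
      Fintype.card_fin, nsmul_eq_mul]
    field
  have hsample : ‖(M : 𝕜)⁻¹ * ∑ k, (F (s k) - G (s k))‖ ≤ ε := by
    rw [norm_mul, norm_inv, RCLike.norm_natCast, inv_mul_le_iff₀ (by positivity)]
    simpa using norm_sum_le_of_le Finset.univ fun k _ => hF (s k)
  have hR : ‖(M : 𝕜)⁻¹ * R‖ ≤ √(Fintype.card T * B / M) := by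
    rw [norm_mul, norm_inv, RCLike.norm_natCast]
    calc (M : ℝ)⁻¹ * ‖R‖ ≤ (M : ℝ)⁻¹ * √(Fintype.card T * (M * B)) := by gcongr; exact hs g hg
      _ = √(Fintype.card T * B / M) := by
        rw [← Real.sqrt_sq (by positivity : (0 : ℝ) ≤ (M : ℝ)⁻¹), ← Real.sqrt_mul (by positivity)]
        congr 1
        field
  rw [hsplit]
  linarith [norm_sub_le (∑ i, p i * (F i - G i) - (M : 𝕜)⁻¹ * ∑ k, (F (s k) - G (s k)))
      ((M : 𝕜)⁻¹ * R),
    norm_sub_le (∑ i, (p i : 𝕜) * (F i - G i)) ((M : 𝕜)⁻¹ * ∑ k, (F (s k) - G (s k))),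
    hp.norm_sum_mul_le hF]

end Maurey

section PosSemidef

variable {J : Type*} [Fintype J]

open scoped MatrixOrder in
theorem re_trace_mul_nonneg {A B : Matrix J J ℂ} (hA : A.PosSemidef)
    (hB : B.PosSemidef) : 0 ≤ (A * B).trace.re := by
  classical
  obtain ⟨C, rfl⟩ := CStarAlgebra.nonneg_iff_eq_star_mul_self.mp hB.nonneg
  rw [← Matrix.mul_assoc, Matrix.trace_mul_comm, ← Matrix.mul_assoc]
  exact (Complex.le_def.mp (hA.mul_mul_conjTranspose_same C).trace_nonneg).1

theorem norm_trace_mul_mul_le {ρ : Matrix J J ℂ} (hρ : ρ.PosSemidef) (A B : Matrix J J ℂ) :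
    ‖(A * ρ * B).trace‖ ≤ √(A * ρ * Aᴴ).trace.re * √(Bᴴ * ρ * B).trace.re := by
  let _ := Matrix.toMatrixSeminormedAddCommGroup ρ hρ
  let _ := Matrix.toMatrixInnerProductSpace ρ hρ
  have norm_eq (C : Matrix J J ℂ) : ‖C‖ = √(C * ρ * Cᴴ).trace.re :=
    norm_eq_sqrt_re_inner (𝕜 := ℂ) C
  calc ‖(A * ρ * B).trace‖ = ‖inner ℂ Bᴴ A‖ := by
        change _ = ‖(A * ρ * Bᴴᴴ).trace‖
        rw [Matrix.conjTranspose_conjTranspose]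
    _ ≤ ‖A‖ * ‖Bᴴ‖ := mul_comm ‖A‖ ‖Bᴴ‖ ▸ norm_inner_le_norm Bᴴ A
    _ = _ := by rw [norm_eq, norm_eq, Matrix.conjTranspose_conjTranspose]

theorem re_trace_conj_mono {A B : Matrix J J ℂ} (h : (B - A).PosSemidef) (C : Matrix J J ℂ) :
    (C * A * Cᴴ).trace.re ≤ (C * B * Cᴴ).trace.re := by
  have := (Complex.le_def.mp (h.mul_mul_conjTranspose_same C).trace_nonneg).1
  rwa [Matrix.mul_sub, Matrix.sub_mul, Matrix.trace_sub, Complex.zero_re, Complex.sub_re,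
    sub_nonneg] at this

theorem re_trace_compress_of_isStarProjection {Q : Matrix J J ℂ} (hQ : IsStarProjection Q)
    (ρ : Matrix J J ℂ) : (Q * ρ * Q).trace.re = (ρ * Q).trace.re := by
  rw [Matrix.trace_mul_comm, ← Matrix.mul_assoc, hQ.isIdempotentElem, Matrix.trace_mul_comm]

variable [DecidableEq J]

/-- The outcomes of two-valued quantum measurements: the operators `0 ≤ D ≤ 1`. -/
def IsEffect (D : Matrix J J ℂ) : Prop :=
  D.PosSemidef ∧ (1 - D).PosSemidef

theorem IsEffect.posSemidef_one_sub_mul_self {D : Matrix J J ℂ} (hD : IsEffect D) :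
    (1 - D * D).PosSemidef := by
  have hsum : 1 - D * D = (1 - D) + D * (1 - D) * Dᴴ + (1 - D) * D * (1 - D)ᴴ := by
    rw [hD.1.isHermitian.eq, hD.2.isHermitian.eq]
    noncomm_ring
  rw [hsum]
  exact (hD.2.add (hD.2.mul_mul_conjTranspose_same D)).add (hD.1.mul_mul_conjTranspose_same (1 - D))

theorem IsEffect.re_trace_mul_mul_self_le {D ρ : Matrix J J ℂ} (hD : IsEffect D)
    (hρ : ρ.PosSemidef) : (D * ρ * D).trace.re ≤ ρ.trace.re := by
  have := re_trace_mul_nonneg hρ hD.posSemidef_one_sub_mul_self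
  rw [Matrix.mul_sub, Matrix.mul_one, Matrix.trace_sub, Complex.sub_re, sub_nonneg] at this
  rwa [Matrix.trace_mul_comm, ← Matrix.mul_assoc, Matrix.trace_mul_comm]

theorem isEffect_of_isStarProjection {Q : Matrix J J ℂ} (hQ : IsStarProjection Q) :
    IsEffect Q := by
  have posSemidef {R : Matrix J J ℂ} (hR : IsStarProjection R) : R.PosSemidef := by
    have := Matrix.posSemidef_conjTranspose_mul_self R
    rwa [← Matrix.star_eq_conjTranspose, hR.isSelfAdjoint, hR.isIdempotentElem] at this
  exact ⟨posSemidef hQ, posSemidef hQ.one_sub⟩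

/-- Gentle measurement; both error terms come from Cauchy–Schwarz for the form `Tr (A ρ B)`. -/
theorem IsDensity.norm_trace_mul_sub_trace_compress_le {ρ D Q R : Matrix J J ℂ} (hρ : IsDensity ρ)
    (hD : IsEffect D) (hQ : IsStarProjection Q) (hR : IsStarProjection R) :
    ‖(ρ * D).trace - (Q * ρ * R * D).trace‖ ≤
      √(ρ * (1 - Q)).trace.re + √(ρ * (1 - R)).trace.re := by
  have hDstar : Dᴴ = D := hD.1.isHermitian
  have hstar {S : Matrix J J ℂ} (hS : IsStarProjection S) : Sᴴ = S := hS.isSelfAdjoint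
  have hcompress {S : Matrix J J ℂ} (hS : IsStarProjection S) : (S * ρ * S).PosSemidef := by
    simpa only [hstar hS] using hρ.1.mul_mul_conjTranspose_same S
  have hsplit : (ρ * D).trace - (Q * ρ * R * D).trace =
      ((1 - Q) * ρ * (R * D)).trace + (1 * ρ * ((1 - R) * D)).trace := by
    rw [← Matrix.trace_sub, ← Matrix.trace_add]
    congr 1
    noncomm_ring
  have hleft : ‖((1 - Q) * ρ * (R * D)).trace‖ ≤ √(ρ * (1 - Q)).trace.re := by
    have hle : (D * (R * ρ * R) * D).trace.re ≤ 1 := by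
      simpa [hρ.2] using (hD.re_trace_mul_mul_self_le (hcompress hR)).trans
        ((isEffect_of_isStarProjection hR).re_trace_mul_mul_self_le hρ.1)
    refine (norm_trace_mul_mul_le hρ.1 _ _).trans ?_
    rw [hstar hQ.one_sub, re_trace_compress_of_isStarProjection hQ.one_sub]
    refine mul_le_of_le_one_right (Real.sqrt_nonneg _) (Real.sqrt_le_one.mpr ?_)
    simpa only [Matrix.conjTranspose_mul, hDstar, hstar hR, Matrix.mul_assoc] using hle
  have hright : ‖(1 * ρ * ((1 - R) * D)).trace‖ ≤ √(ρ * (1 - R)).trace.re := by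
    refine (norm_trace_mul_mul_le hρ.1 _ _).trans ?_
    rw [Matrix.conjTranspose_one, Matrix.one_mul, Matrix.mul_one, hρ.2, Complex.one_re,
      Real.sqrt_one, one_mul, ← re_trace_compress_of_isStarProjection hR.one_sub]
    refine Real.sqrt_le_sqrt ?_
    simpa only [Matrix.conjTranspose_mul, hDstar, hstar hR.one_sub, Matrix.mul_assoc] using
      hD.re_trace_mul_mul_self_le (hcompress hR.one_sub)
  rw [hsplit]
  exact (norm_add_le _ _).trans (add_le_add hleft hright)

end PosSemidef

section HilbertSchmidt

variable {J : Type*} [Fintype J] [DecidableEq J]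

/-- The Hilbert–Schmidt norm. -/
noncomputable abbrev hilbertSchmidtNormedAddCommGroup : NormedAddCommGroup (Matrix J J ℂ) :=
  Matrix.toMatrixNormedAddCommGroup 1 Matrix.PosDef.one

attribute [local instance] hilbertSchmidtNormedAddCommGroup

/-- The Hilbert–Schmidt inner product. -/
noncomputable abbrev hilbertSchmidtInnerProductSpace : InnerProductSpace ℂ (Matrix J J ℂ) :=
  Matrix.toMatrixInnerProductSpace 1 Matrix.PosSemidef.one

attribute [local instance] hilbertSchmidtInnerProductSpace

theorem inner_eq_trace (A B : Matrix J J ℂ) : inner ℂ A B = (B * Aᴴ).trace := by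
  change (B * 1 * Aᴴ).trace = _
  rw [mul_one]

theorem norm_sq_eq_re_trace (A : Matrix J J ℂ) : ‖A‖ ^ 2 = (A * Aᴴ).trace.re := by
  rw [← inner_eq_trace, ← inner_self_eq_norm_sq (𝕜 := ℂ)]; rfl

/-- The functional calculus `f ↦ U diag(f) U*` on the real functions of an observable with
eigenbasis `U`. -/
noncomputable def spectralHom (U : Matrix.unitaryGroup J ℂ) : (J → ℝ) →⋆ₐ[ℝ] Matrix J J ℂ where
  toFun f := Unitary.conjStarAlgAut ℂ _ U (Matrix.diagonal fun j => (f j : ℂ))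
  map_one' := by simp
  map_mul' f g := by rw [← map_mul, Matrix.diagonal_mul_diagonal]; simp
  map_zero' := by simp
  map_add' f g := by rw [← map_add, Matrix.diagonal_add]; simp
  commutes' r := by
    have : (Matrix.diagonal fun _ : J => (r : ℂ)) = algebraMap ℂ (Matrix J J ℂ) r := rfl
    simp only [Pi.algebraMap_apply, Algebra.algebraMap_self, RingHom.id_apply, this,
      AlgHomClass.commutes]
    rfl
  map_star' f := by
    rw [← map_star, Matrix.star_eq_conjTranspose, Matrix.diagonal_conjTranspose]
    congr 2
    ext j
    simp

/-- The probability of the outcome `j` when the state `ρ` is measured in the orthonormal basis of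
the columns of `U`. -/
noncomputable def measurementProb (U : Matrix.unitaryGroup J ℂ) (ρ : Matrix J J ℂ) (j : J) : ℝ :=
  ((star U : Matrix J J ℂ) * ρ * U) j j |>.re

section Spectral

variable (U : Matrix.unitaryGroup J ℂ)

theorem spectralHom_apply (f : J → ℝ) :
    spectralHom U f = U * Matrix.diagonal (fun j => (f j : ℂ)) * (star U : Matrix J J ℂ) :=
  rfl

theorem conjTranspose_spectralHom (f : J → ℝ) : (spectralHom U f)ᴴ = spectralHom U f := by
  rw [← Matrix.star_eq_conjTranspose, ← map_star, star_trivial]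

theorem posSemidef_spectralHom {f : J → ℝ} (hf : 0 ≤ f) : (spectralHom U f).PosSemidef :=
  (Matrix.PosSemidef.diagonal fun j => by simpa using hf j).mul_mul_conjTranspose_same _

theorem re_trace_mul_spectralHom (ρ : Matrix J J ℂ) (f : J → ℝ) :
    (ρ * spectralHom U f).trace.re = ∑ j, measurementProb U ρ j * f j := by
  rw [spectralHom_apply, ← Matrix.mul_assoc, Matrix.trace_mul_comm, ← Matrix.mul_assoc,
    ← Matrix.mul_assoc]
  simp [Matrix.trace, Matrix.mul_diagonal, measurementProb]

theorem trace_spectralHom (f : J → ℝ) : (spectralHom U f).trace = ∑ j, (f j : ℂ) := by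
  rw [spectralHom_apply, Matrix.trace_mul_comm, ← Matrix.mul_assoc, Unitary.coe_star_mul_self,
    one_mul, Matrix.trace_diagonal]

theorem isDensity_spectralHom {q : J → ℝ} (hq : IsProbDist q) : IsDensity (spectralHom U q) :=
  ⟨posSemidef_spectralHom U hq.1, by rw [trace_spectralHom]; exact_mod_cast hq.2⟩

theorem measurementProb_spectralHom (q : J → ℝ) : measurementProb U (spectralHom U q) = q := by
  ext j
  have : (star U : Matrix J J ℂ) * spectralHom U q * U = Matrix.diagonal fun j => (q j : ℂ) := by
    rw [spectralHom_apply]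
    simp only [Matrix.mul_assoc, Unitary.coe_star_mul_self, mul_one]
    rw [← Matrix.mul_assoc, Unitary.coe_star_mul_self, one_mul]
  simp [measurementProb, this]

theorem measurementProb_nonneg {ρ : Matrix J J ℂ} (hρ : ρ.PosSemidef) (j : J) :
    0 ≤ measurementProb U ρ j :=
  (Complex.le_def.mp ((hρ.conjTranspose_mul_mul_same (U : Matrix J J ℂ)).diag_nonneg (i := j))).1

theorem isProbDist_measurementProb {ρ : Matrix J J ℂ} (hρ : IsDensity ρ) :
    IsProbDist (measurementProb U ρ) := by
  refine ⟨measurementProb_nonneg U hρ.1, ?_⟩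
  have := re_trace_mul_spectralHom U ρ 1
  rw [map_one, mul_one, hρ.2] at this
  simpa using this.symm

/-- The spectral projection of an observable with eigenbasis `U` onto the eigenvectors in `G`. -/
noncomputable def spectralProj (G : Finset J) : Matrix J J ℂ :=
  spectralHom U (Set.indicator G 1)

theorem isStarProjection_spectralProj (G : Finset J) : IsStarProjection (spectralProj U G) :=
  IsStarProjection.map (x := Set.indicator (G : Set J) (1 : J → ℝ))
    ⟨by ext j; by_cases hj : j ∈ G <;> simp [hj], by ext j; simp⟩ (spectralHom U)

theorem re_trace_mul_one_sub_spectralProj (ρ : Matrix J J ℂ) (G : Finset J) :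
    (ρ * (1 - spectralProj U G)).trace.re = ∑ j ∈ Gᶜ, measurementProb U ρ j := by
  have hcompl : 1 - spectralProj U G = spectralHom U (Set.indicator ↑Gᶜ 1) := by
    rw [spectralProj, ← map_one (spectralHom U), ← map_sub, Finset.coe_compl, Set.indicator_compl]
  rw [hcompl, re_trace_mul_spectralHom, ← Finset.sum_indicator_subset _ (Finset.subset_univ Gᶜ)]
  exact Finset.sum_congr rfl fun j _ => by by_cases hj : j ∈ G <;> simp [hj]

theorem norm_spectralHom_sqrt_mul_le_one {q : J → ℝ} (hq : IsProbDist q) {D : Matrix J J ℂ}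
    (hD : IsEffect D) : ‖spectralHom U (fun j => √(q j)) * D‖ ≤ 1 := by
  have hsq : spectralHom U (fun j => √(q j)) * spectralHom U (fun j => √(q j)) =
      spectralHom U q := by
    rw [← map_mul]
    congr 1
    ext j
    exact Real.mul_self_sqrt (hq.1 j)
  refine sq_le_one_iff₀ (norm_nonneg _) |>.mp ?_
  calc ‖spectralHom U (fun j => √(q j)) * D‖ ^ 2 = (D * spectralHom U q * D).trace.re := by
        rw [norm_sq_eq_re_trace, Matrix.trace_mul_comm, Matrix.conjTranspose_mul,
          conjTranspose_spectralHom, hD.1.isHermitian.eq, ← hsq]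
        simp only [Matrix.mul_assoc]
    _ ≤ (spectralHom U q).trace.re := hD.re_trace_mul_mul_self_le (posSemidef_spectralHom U hq.1)
    _ = 1 := by rw [(isDensity_spectralHom U hq).2, Complex.one_re]

end Spectral

section SingleShot

variable (U V : Matrix.unitaryGroup J ℂ) {q r : J → ℝ} {G G' : Finset J} {β c : ℝ}

/-- The inverse square root of an observable with eigenbasis `U` and eigenvalues `q`, cut off to
the eigenvectors in `G`. -/
noncomputable def truncatedInvSqrt (q : J → ℝ) (G : Finset J) : Matrix J J ℂ :=
  spectralHom U (Set.indicator G fun j => (√(q j))⁻¹)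

theorem spectralHom_sqrt_mul_truncatedInvSqrt (hG : ∀ j ∈ G, 0 < q j) :
    spectralHom U (fun j => √(q j)) * truncatedInvSqrt U q G = spectralProj U G := by
  rw [truncatedInvSqrt, ← map_mul, spectralProj]
  congr 1
  ext j
  by_cases hj : j ∈ G
  · simp [hj, (Real.sqrt_pos.mpr (hG j hj)).ne']
  · simp [hj]

theorem re_trace_truncatedInvSqrt_le {ρ : Matrix J J ℂ} (hρ : IsDensity ρ) (hβ : 0 < β)
    (hG : ∀ j ∈ G, β⁻¹ ≤ q j) :
    (truncatedInvSqrt U q G * ρ * truncatedInvSqrt U q G).trace.re ≤ β := by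
  have hp := isProbDist_measurementProb U hρ
  calc (truncatedInvSqrt U q G * ρ * truncatedInvSqrt U q G).trace.re
      = ∑ j, measurementProb U ρ j * Set.indicator (G : Set J) (fun j => (√(q j))⁻¹) j ^ 2 := by
        rw [Matrix.trace_mul_comm, ← Matrix.mul_assoc, Matrix.trace_mul_comm, truncatedInvSqrt,
          ← map_mul, re_trace_mul_spectralHom]
        simp only [Pi.mul_apply, sq]
    _ ≤ ∑ j, measurementProb U ρ j * β := by
        refine Finset.sum_le_sum fun j _ => mul_le_mul_of_nonneg_left ?_ (hp.1 j)
        by_cases hj : j ∈ G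
        · have hq : 0 < q j := (inv_pos.mpr hβ).trans_le (hG j hj)
          simpa [hj, hq.le] using inv_le_of_inv_le₀ hβ (hG j hj)
        · simpa [hj] using hβ.le
    _ = β := by rw [← Finset.sum_mul, hp.2, one_mul]

theorem posSemidef_smul_sub_mul_spectralProj_mul (hr : 0 ≤ r) (hc : 0 ≤ c)
    (hG' : ∀ j ∈ G', r j ≤ c) :
    (c • spectralHom V r - spectralHom V r * spectralProj V G' * spectralHom V r).PosSemidef := by
  rw [spectralProj, ← map_smul, ← map_mul, ← map_mul, ← map_sub]
  refine posSemidef_spectralHom V fun j => ?_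
  by_cases hj : j ∈ G'
  · simpa [hj] using mul_le_mul_of_nonneg_right (hG' j hj) (hr j)
  · simpa [hj] using mul_nonneg hc (hr j)

theorem norm_truncatedInvSqrt_mul_mul_spectralProj_sq_le (hr : IsProbDist r) (hβ : 0 < β)
    (hc : 0 ≤ c) (hG : ∀ j ∈ G, β⁻¹ ≤ q j) (hG' : ∀ j ∈ G', r j ≤ c) :
    ‖truncatedInvSqrt U q G * spectralHom V r * spectralProj V G'‖ ^ 2 ≤ β * c := by
  set T := truncatedInvSqrt U q G
  set ρ := spectralHom V r
  have hT : Tᴴ = T := conjTranspose_spectralHom U _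
  have hρ : ρᴴ = ρ := conjTranspose_spectralHom V r
  have hQ := isStarProjection_spectralProj V G'
  have hQstar : (spectralProj V G')ᴴ = spectralProj V G' := hQ.isSelfAdjoint
  calc ‖T * ρ * spectralProj V G'‖ ^ 2
      = (T * (ρ * (spectralProj V G' * spectralProj V G') * ρ) * Tᴴ).trace.re := by
        rw [norm_sq_eq_re_trace]
        simp only [Matrix.conjTranspose_mul, hρ, hQstar, Matrix.mul_assoc]
    _ = (T * (ρ * spectralProj V G' * ρ) * Tᴴ).trace.re := by rw [hQ.isIdempotentElem]
    _ ≤ (T * (c • ρ) * Tᴴ).trace.re :=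
        re_trace_conj_mono (posSemidef_smul_sub_mul_spectralProj_mul V hr.1 hc hG') T
    _ = c * (T * ρ * T).trace.re := by
        rw [hT, Matrix.mul_smul, Matrix.smul_mul, Matrix.trace_smul, Complex.smul_re, smul_eq_mul]
    _ ≤ c * β := mul_le_mul_of_nonneg_left
        (re_trace_truncatedInvSqrt_le U (isDensity_spectralHom V hr) hβ hG) hc
    _ = β * c := mul_comm c β

/-- With `σ = U diag(q) U*` and `ρ = V diag(r) V*`, the vector `v` is `σ^(-1/2) ρ`, cut off to the
eigenvectors in `G` and `G'`. -/
theorem exists_norm_trace_mul_sub_inner_le (hr : IsProbDist r) (hβ : 0 < β) (hc : 0 ≤ c)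
    (hG : ∀ j ∈ G, β⁻¹ ≤ q j) (hG' : ∀ j ∈ G', r j ≤ c) :
    ∃ v : Matrix J J ℂ, ‖v‖ ^ 2 ≤ β * c ∧ ∀ D, IsEffect D →
      ‖(spectralHom V r * D).trace - inner ℂ (spectralHom U (fun j => √(q j)) * D) v‖ ≤
        √(∑ j ∈ Gᶜ, measurementProb U (spectralHom V r) j) + √(∑ j ∈ G'ᶜ, r j) := by
  refine ⟨truncatedInvSqrt U q G * spectralHom V r * spectralProj V G',
    norm_truncatedInvSqrt_mul_mul_spectralProj_sq_le U V hr hβ hc hG hG', fun D hD => ?_⟩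
  have hinner : inner ℂ (spectralHom U (fun j => √(q j)) * D)
      (truncatedInvSqrt U q G * spectralHom V r * spectralProj V G') =
      (spectralProj U G * spectralHom V r * spectralProj V G' * D).trace := by
    rw [inner_eq_trace, Matrix.conjTranspose_mul, conjTranspose_spectralHom, hD.1.isHermitian.eq,
      ← spectralHom_sqrt_mul_truncatedInvSqrt U fun j hj => (inv_pos.mpr hβ).trans_le (hG j hj),
      ← Matrix.mul_assoc, Matrix.trace_mul_comm]
    simp only [Matrix.mul_assoc]
  have h := (isDensity_spectralHom V hr).norm_trace_mul_sub_trace_compress_le hD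
    (isStarProjection_spectralProj U G) (isStarProjection_spectralProj V G')
  rwa [re_trace_mul_one_sub_spectralProj, re_trace_mul_one_sub_spectralProj,
    measurementProb_spectralHom, ← hinner] at h

end SingleShot

theorem IsDensity.exists_spectralHom_eq {ρ : Matrix J J ℂ} (hρ : IsDensity ρ) :
    ∃ (U : Matrix.unitaryGroup J ℂ) (q : J → ℝ), IsProbDist q ∧ spectralHom U q = ρ ∧
      vnEntropy ρ = -∑ j, q j * Real.logb 2 (q j) := by
  have hH := hρ.1.isHermitian
  have heq : spectralHom hH.eigenvectorUnitary hH.eigenvalues = ρ := hH.spectral_theorem.symm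
  refine ⟨hH.eigenvectorUnitary, hH.eigenvalues, ⟨hρ.1.eigenvalues_nonneg, ?_⟩, heq, dif_pos hH⟩
  have htrace := hρ.2
  rw [← heq, trace_spectralHom] at htrace
  exact_mod_cast htrace

theorem sum_measurementProb {κ : Type*} [Fintype κ] (U : Matrix.unitaryGroup J ℂ)
    (ρ : κ → Matrix J J ℂ) (j : J) :
    ∑ k, measurementProb U (ρ k) j = measurementProb U (∑ k, ρ k) j := by
  simp only [measurementProb, Finset.mul_sum, Finset.sum_mul, Matrix.sum_apply, Complex.re_sum]

theorem measurementProb_smul (U : Matrix.unitaryGroup J ℂ) (a : ℝ) (ρ : Matrix J J ℂ) (j : J) :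
    measurementProb U (a • ρ) j = a * measurementProb U ρ j := by
  simp [measurementProb]

section TensorProduct

variable {κ m : Type*} [Fintype κ]

/-- The tensor product `⨂ₖ Aₖ` of a family of matrices. -/
def tensorProd (A : κ → Matrix m m ℂ) : Matrix (κ → m) (κ → m) ℂ :=
  Matrix.of fun i j => ∏ k, A k (i k) (j k)

theorem conjTranspose_tensorProd (A : κ → Matrix m m ℂ) :
    (tensorProd A)ᴴ = tensorProd fun k => (A k)ᴴ := by
  ext i j
  simp [tensorProd]

theorem trace_tensorProd [DecidableEq κ] [Fintype m] (A : κ → Matrix m m ℂ) :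
    (tensorProd A).trace = ∏ k, (A k).trace := by
  simp only [tensorProd, Matrix.trace, Matrix.diag, Matrix.of_apply, Finset.prod_univ_sum,
    Fintype.piFinset_univ]

theorem tensorProd_mul_tensorProd [DecidableEq κ] [Fintype m] (A B : κ → Matrix m m ℂ) :
    tensorProd A * tensorProd B = tensorProd fun k => A k * B k := by
  ext i j
  simp only [tensorProd, Matrix.mul_apply, Matrix.of_apply, Finset.prod_univ_sum,
    Fintype.piFinset_univ, Finset.prod_mul_distrib]

theorem tensorProd_diagonal [DecidableEq m] (a : κ → m → ℂ) :
    (tensorProd fun k => Matrix.diagonal (a k)) = Matrix.diagonal fun l => ∏ k, a k (l k) := by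
  ext i j
  obtain rfl | hij := eq_or_ne i j
  · simp [tensorProd]
  · obtain ⟨k, hk⟩ := Function.ne_iff.mp hij
    rw [Matrix.diagonal_apply_ne _ hij]
    exact Finset.prod_eq_zero (Finset.mem_univ k) (Matrix.diagonal_apply_ne _ hk)

theorem tensorProd_one [DecidableEq m] : tensorProd (fun _ : κ => (1 : Matrix m m ℂ)) = 1 := by
  simpa using tensorProd_diagonal fun (_ : κ) (_ : m) => (1 : ℂ)

variable [DecidableEq κ] [Fintype m] [DecidableEq m]

/-- The tensor product of a family of unitary matrices. -/
def tensorUnitary (U : κ → Matrix.unitaryGroup m ℂ) : Matrix.unitaryGroup (κ → m) ℂ :=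
  ⟨tensorProd fun k => (U k : Matrix m m ℂ), by
    rw [Matrix.mem_unitaryGroup_iff, Matrix.star_eq_conjTranspose, conjTranspose_tensorProd,
      tensorProd_mul_tensorProd, ← tensorProd_one]
    exact congrArg tensorProd (funext fun k => Unitary.coe_mul_star_self (U k))⟩

theorem star_tensorUnitary (U : κ → Matrix.unitaryGroup m ℂ) :
    (star (tensorUnitary U) : Matrix (κ → m) (κ → m) ℂ) =
      tensorProd fun k => (star (U k) : Matrix m m ℂ) :=
  conjTranspose_tensorProd fun k => (U k : Matrix m m ℂ)

theorem tensorProd_spectralHom (U : κ → Matrix.unitaryGroup m ℂ) (f : κ → m → ℝ) :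
    (tensorProd fun k => spectralHom (U k) (f k)) =
      spectralHom (tensorUnitary U) fun l => ∏ k, f k (l k) := by
  simp only [spectralHom_apply, star_tensorUnitary, Complex.ofReal_prod]
  rw [← tensorProd_diagonal fun k i => (f k i : ℂ)]
  simp only [tensorUnitary, tensorProd_mul_tensorProd]

theorem measurementProb_tensorUnitary (U : κ → Matrix.unitaryGroup m ℂ) {ρ : κ → Matrix m m ℂ}
    (hρ : ∀ k, (ρ k).IsHermitian) (l : κ → m) :
    measurementProb (tensorUnitary U) (tensorProd ρ) l =
      ∏ k, measurementProb (U k) (ρ k) (l k) := by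
  have hreal (k : κ) : (measurementProb (U k) (ρ k) (l k) : ℂ) =
      ((star (U k) : Matrix m m ℂ) * ρ k * (U k : Matrix m m ℂ)) (l k) (l k) :=
    (Matrix.isHermitian_conjTranspose_mul_mul (U k : Matrix m m ℂ) (hρ k)).coe_re_apply_self (l k)
  have hprod : (star (tensorUnitary U) : Matrix (κ → m) (κ → m) ℂ) * tensorProd ρ *
      (tensorUnitary U : Matrix (κ → m) (κ → m) ℂ) =
        tensorProd fun k => (star (U k) : Matrix m m ℂ) * ρ k * (U k : Matrix m m ℂ) := by
    rw [star_tensorUnitary, tensorProd_mul_tensorProd]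
    exact tensorProd_mul_tensorProd _ _
  have hentry :
      (tensorProd fun k => (star (U k) : Matrix m m ℂ) * ρ k * (U k : Matrix m m ℂ)) l l =
      ∏ k, (measurementProb (U k) (ρ k) (l k) : ℂ) :=
    Finset.prod_congr rfl fun k _ => (hreal k).symm
  rw [measurementProb, hprod, hentry, ← Complex.ofReal_prod, Complex.ofReal_re]

end TensorProduct

section BlockState

variable {κ m : Type*} [Fintype κ] [DecidableEq κ] [Nonempty κ] [Fintype m] [DecidableEq m]

theorem exists_norm_trace_tensorProd_mul_sub_inner_le (U : Matrix.unitaryGroup m ℂ) {q : m → ℝ}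
    (hq : IsProbDist q) {ρ : κ → Matrix m m ℂ} (hρ : ∀ k, IsDensity (ρ k))
    (hsum : ∑ k, ρ k = (Fintype.card κ : ℝ) • spectralHom U q) {η : ℝ} (hη : 0 < η) :
    ∃ v : Matrix (κ → m) (κ → m) ℂ,
      ‖v‖ ^ 2 ≤ 2 ^ (Fintype.card κ * -∑ i, q i * Real.logb 2 (q i) - ∑ k, vnEntropy (ρ k) +
        2 * Fintype.card κ * η) ∧
      ∀ D, IsEffect D → ‖(tensorProd ρ * D).trace -
        inner ℂ (spectralHom (tensorUnitary fun _ => U) (fun l => √(∏ k, q (l k))) * D) v‖ ≤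
          2 * √(tailBound (Fintype.card m) (Fintype.card κ) η) := by
  choose V r hr hspec hent using fun k => (hρ k).exists_spectralHom_eq
  set n := Fintype.card κ
  set a := ∑ i, q i * Real.logb 2 (q i)
  set b := ∑ k, ∑ i, r k i * Real.logb 2 (r k i)
  set G : Finset (κ → m) := {l | 2 ^ (n * a - n * η) ≤ ∏ k, q (l k)}
  set G' : Finset (κ → m) := {l | ∏ k, r k (l k) ≤ 2 ^ (b + n * η)}
  have htensor : tensorProd ρ = spectralHom (tensorUnitary V) fun l => ∏ k, r k (l k) := by
    simp only [← tensorProd_spectralHom, hspec]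
  obtain ⟨v, hv, happrox⟩ := exists_norm_trace_mul_sub_inner_le (tensorUnitary fun _ : κ => U)
    (tensorUnitary V) (G := G) (G' := G') (β := (2 ^ (n * a - n * η))⁻¹) (c := 2 ^ (b + n * η))
    (IsProbDist.prod hr) (by positivity) (by positivity)
    (fun l hl => by simpa [G] using hl) (fun l hl => by simpa [G'] using hl)
  refine ⟨v, hv.trans_eq ?_, fun D hD => ?_⟩
  · rw [← Real.rpow_neg two_pos.le, ← Real.rpow_add two_pos]
    simp only [hent, Finset.sum_neg_distrib]
    congr 1
    ring
  have hG : ∑ l ∈ Gᶜ, measurementProb (tensorUnitary fun _ => U) (tensorProd ρ) l ≤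
      tailBound (Fintype.card m) n η := by
    simp only [measurementProb_tensorUnitary _ fun k => (hρ k).1.isHermitian]
    refine sum_prod_le_tailBound_of_average (fun k => isProbDist_measurementProb U (hρ k)) hq
      (fun i => ?_) hη fun l hl => by simpa [G] using hl
    rw [sum_measurementProb, hsum, measurementProb_smul, measurementProb_spectralHom]
  have hG' : ∑ l ∈ G'ᶜ, ∏ k, r k (l k) ≤ tailBound (Fintype.card m) n η :=
    sum_prod_le_tailBound_of_self hr hη fun l hl => by simpa [G'] using hl
  rw [htensor] at hG ⊢
  refine (happrox D hD).trans ?_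
  rw [two_mul]
  gcongr

/-- `S` is the square root of `σ ⊗ ⋯ ⊗ σ`. It does not depend on `ρ`, so that the inner product
compares states of the same average with the same test vector. -/
theorem IsDensity.exists_forall_norm_trace_tensorProd_mul_sub_inner_le (κ : Type*) [Fintype κ]
    [DecidableEq κ] [Nonempty κ] {σ : Matrix m m ℂ} (hσ : IsDensity σ) {η : ℝ} (hη : 0 < η) :
    ∃ S : Matrix (κ → m) (κ → m) ℂ, (∀ D, IsEffect D → ‖S * D‖ ≤ 1) ∧
      ∀ ρ : κ → Matrix m m ℂ, (∀ k, IsDensity (ρ k)) → ∑ k, ρ k = (Fintype.card κ : ℝ) • σ →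
        ∃ v : Matrix (κ → m) (κ → m) ℂ,
          ‖v‖ ^ 2 ≤ 2 ^ (Fintype.card κ * vnEntropy σ - ∑ k, vnEntropy (ρ k) +
            2 * Fintype.card κ * η) ∧
          ∀ D, IsEffect D → ‖(tensorProd ρ * D).trace - inner ℂ (S * D) v‖ ≤
            2 * √(tailBound (Fintype.card m) (Fintype.card κ) η) := by
  obtain ⟨U, q, hq, rfl, hent⟩ := hσ.exists_spectralHom_eq
  exact ⟨_, fun D hD => norm_spectralHom_sqrt_mul_le_one _ (IsProbDist.prod fun _ : κ => hq) hD,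
    fun ρ hρ hsum => hent ▸ exists_norm_trace_tensorProd_mul_sub_inner_le U hq hρ hsum hη⟩

end BlockState

section Entropy

variable {m : Type*} [Fintype m] [DecidableEq m] {ρ : Matrix m m ℂ}

theorem IsDensity.vnEntropy_nonneg (hρ : IsDensity ρ) : 0 ≤ vnEntropy ρ := by
  obtain ⟨-, q, hq, -, hent⟩ := hρ.exists_spectralHom_eq
  rw [hent, neg_nonneg]
  exact Finset.sum_nonpos fun j _ => mul_nonpos_of_nonneg_of_nonpos (hq.1 j)
    (Real.logb_nonpos one_lt_two (hq.1 j) (hq.le_one_s3 j))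

theorem IsDensity.vnEntropy_le (hρ : IsDensity ρ) :
    vnEntropy ρ ≤ Fintype.card m / Real.log 2 := by
  obtain ⟨-, q, hq, -, hent⟩ := hρ.exists_spectralHom_eq
  have : 0 < Real.log 2 := Real.log_pos one_lt_two
  calc vnEntropy ρ = ∑ j, Real.negMulLog (q j) / Real.log 2 := by
        rw [hent, ← Finset.sum_neg_distrib]
        refine Finset.sum_congr rfl fun j _ => ?_
        rw [Real.negMulLog, Real.logb]
        ring
    _ ≤ ∑ _j : m, 1 / Real.log 2 := by
        gcongr with j
        linarith [Real.negMulLog_le_one_sub_self (hq.1 j), hq.1 j]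
    _ = Fintype.card m / Real.log 2 := by
        rw [Finset.sum_const, Finset.card_univ, nsmul_eq_mul, mul_one_div]

theorem IsProbDist.isDensity_sum_smul {X : Type*} [Fintype X] {P : X → ℝ} (hP : IsProbDist P)
    {W : X → Matrix m m ℂ} (hW : ∀ x, IsDensity (W x)) : IsDensity (∑ x, (P x : ℂ) • W x) := by
  refine ⟨Matrix.posSemidef_sum _ fun x _ => (hW x).1.smul (by exact_mod_cast hP.1 x), ?_⟩
  simp only [Matrix.trace_sum, Matrix.trace_smul, (hW _).2, smul_eq_mul, mul_one]
  exact_mod_cast hP.2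

end Entropy

section Capacity

variable {X : Type*} [Fintype X] {d : ℕ} {W : X → Matrix (Fin d) (Fin d) ℂ}

theorem qMutualInfo_le_qCapacity (hW : ∀ x, IsDensity (W x)) {P : X → ℝ} (hP : IsProbDist P) :
    qMutualInfo P W ≤ qCapacity W := by
  refine le_csSup ⟨Fintype.card (Fin d) / Real.log 2, ?_⟩ ⟨P, hP, rfl⟩
  rintro _ ⟨P, hP, rfl⟩
  have hcond : 0 ≤ ∑ x, P x * vnEntropy (W x) :=
    Finset.sum_nonneg fun x _ => mul_nonneg (hP.1 x) (hW x).vnEntropy_nonneg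
  rw [qMutualInfo]
  linarith [(hP.isDensity_sum_smul hW).vnEntropy_le]

theorem qCapacity_nonneg [Nonempty X] (hW : ∀ x, IsDensity (W x)) : 0 ≤ qCapacity W := by
  classical
  obtain ⟨x⟩ := ‹Nonempty X›
  have hdirac : IsProbDist (Pi.single x (1 : ℝ)) :=
    ⟨fun y => by rw [Pi.single_apply]; positivity, by simp⟩
  simpa [qMutualInfo, Pi.single_apply] using qMutualInfo_le_qCapacity hW hdirac

end Capacity

section EmpiricalDist

variable {κ X : Type*} [Fintype κ] [DecidableEq X]

/-- The type of a word: the relative frequencies of its letters. -/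
noncomputable def empiricalDist (x : κ → X) (y : X) : ℝ :=
  Finset.card {k | x k = y} / Fintype.card κ

variable [Fintype X]

theorem sum_comp_eq_card_smul {E : Type*} [AddCommGroup E] [Module ℝ E] [Nonempty κ] (x : κ → X)
    (h : X → E) :
    ∑ k, h (x k) = (Fintype.card κ : ℝ) • ∑ y, empiricalDist x y • h y := by
  have hn : (Fintype.card κ : ℝ) ≠ 0 := Nat.cast_ne_zero.mpr Fintype.card_ne_zero
  rw [← Finset.sum_fiberwise Finset.univ x, Finset.smul_sum]
  refine Finset.sum_congr rfl fun y _ => ?_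
  rw [smul_smul, empiricalDist, mul_div_cancel₀ _ hn, Nat.cast_smul_eq_nsmul, ← Finset.sum_const]
  exact Finset.sum_congr rfl fun k hk => by rw [(Finset.mem_filter.mp hk).2]

theorem isProbDist_empiricalDist [Nonempty κ] (x : κ → X) : IsProbDist (empiricalDist x) := by
  refine ⟨fun y => by unfold empiricalDist; positivity, ?_⟩
  simpa using sum_comp_eq_card_smul x fun _ => (1 : ℝ)

theorem card_range_empiricalDist_le :
    Nat.card (Set.range (empiricalDist : (κ → X) → X → ℝ)) ≤
      (Fintype.card κ + 1) ^ Fintype.card X := by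
  let freq (t : X → Fin (Fintype.card κ + 1)) (y : X) : ℝ := (t y : ℕ) / Fintype.card κ
  have hsub : Set.range (empiricalDist : (κ → X) → X → ℝ) ⊆ Set.range freq := by
    rintro _ ⟨x, rfl⟩
    exact ⟨fun y => ⟨_, Nat.lt_succ_of_le (Finset.card_le_univ {k | x k = y})⟩, rfl⟩
  calc Nat.card (Set.range (empiricalDist : (κ → X) → X → ℝ))
      ≤ Nat.card (Set.range freq) := Nat.card_mono (Set.finite_range _) hsub
    _ ≤ Nat.card (X → Fin (Fintype.card κ + 1)) := Finite.card_range_le freq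
    _ = (Fintype.card κ + 1) ^ Fintype.card X := by simp

theorem card_mul_vnEntropy_sub_le [Nonempty κ] {d : ℕ} {W : X → Matrix (Fin d) (Fin d) ℂ}
    (hW : ∀ x, IsDensity (W x)) (x : κ → X) :
    Fintype.card κ * vnEntropy (∑ y, (empiricalDist x y : ℂ) • W y) - ∑ k, vnEntropy (W (x k)) ≤
      Fintype.card κ * qCapacity W := by
  rw [sum_comp_eq_card_smul x fun y => vnEntropy (W y), smul_eq_mul, ← mul_sub]
  exact mul_le_mul_of_nonneg_left (qMutualInfo_le_qCapacity hW (isProbDist_empiricalDist x))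
    (Nat.cast_nonneg _)

end EmpiricalDist

theorem Wblock_eq_tensorProd {X : Type*} {d n : ℕ} (W : X → Matrix (Fin d) (Fin d) ℂ)
    (x : Fin n → X) : Wblock W n x = tensorProd fun k => W (x k) :=
  rfl

section Covering

variable {X : Type*} [Fintype X] {d n : ℕ} [NeZero n] {W : X → Matrix (Fin d) (Fin d) ℂ}

theorem IsProbDist.exists_norm_sum_mul_trace_Wblock_sub_average_le (hW : ∀ x, IsDensity (W x))
    {P : (Fin n → X) → ℝ} (hP : IsProbDist P) {η : ℝ} (hη : 0 < η) {M : ℕ} (hM : M ≠ 0) :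
    ∃ s : Fin M → Fin n → X, ∀ D, IsEffect D →
      ‖∑ x, (P x : ℂ) * (Wblock W n x * D).trace - (M : ℂ)⁻¹ * ∑ k, (Wblock W n (s k) * D).trace‖ ≤
        2 * (2 * √(tailBound d n η)) +
          √((n + 1) ^ Fintype.card X * 2 ^ (n * (qCapacity W + 2 * η)) / M) := by
  classical
  let T := Set.range (empiricalDist : (Fin n → X) → X → ℝ)
  have hdensity (t : T) : IsDensity (∑ y, ((t : X → ℝ) y : ℂ) • W y) := by
    obtain ⟨_, x, rfl⟩ := t
    exact (isProbDist_empiricalDist x).isDensity_sum_smul hW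
  choose S hS hrepr using fun t =>
    (hdensity t).exists_forall_norm_trace_tensorProd_mul_sub_inner_le (Fin n) hη
  let type (x : Fin n → X) : T := ⟨empiricalDist x, x, rfl⟩
  choose v hv happrox using fun x => hrepr (type x) (fun k => W (x k)) (fun k => hW (x k))
    (sum_comp_eq_card_smul x W)
  have hv' (x : Fin n → X) : ‖v x‖ ^ 2 ≤ 2 ^ (n * (qCapacity W + 2 * η)) := by
    refine (hv x).trans (Real.rpow_le_rpow_of_exponent_le one_le_two ?_)
    have := card_mul_vnEntropy_sub_le hW x
    rw [Fintype.card_fin] at this ⊢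
    linarith
  obtain ⟨s, hs⟩ := hP.exists_norm_sum_mul_sub_average_le (𝕜 := ℂ) type v hv' hM
  have hT : (Fintype.card T : ℝ) ≤ (n + 1) ^ Fintype.card X := by
    have := card_range_empiricalDist_le (κ := Fin n) (X := X)
    rw [Nat.card_eq_fintype_card, Fintype.card_fin] at this
    exact_mod_cast this
  refine ⟨s, fun D hD => ?_⟩
  simp only [Wblock_eq_tensorProd]
  refine (hs _ _ _ (fun t => hS t D hD) fun x => happrox x D hD).trans ?_
  simp only [Fintype.card_fin]
  gcongr

end Covering

end HilbertSchmidt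

theorem trace_sum_smul_mul {ι J : Type*} [Fintype ι] [Fintype J] (p : ι → ℂ) (A : ι → Matrix J J ℂ)
    (B : Matrix J J ℂ) : ((∑ i, p i • A i) * B).trace = ∑ i, p i * (A i * B).trace := by
  simp only [Finset.sum_mul, Matrix.smul_mul, Matrix.trace_sum, Matrix.trace_smul, smul_eq_mul]

theorem trace_Wblock {X : Type*} {d n : ℕ} {W : X → Matrix (Fin d) (Fin d) ℂ}
    (hW : ∀ x, IsDensity (W x)) (x : Fin n → X) : (Wblock W n x).trace = 1 := by
  simp only [Wblock_eq_tensorProd, trace_tensorProd, (hW _).2, Finset.prod_const_one]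

section CodeSize

variable {X : Type*} [Fintype X] {d n N : ℕ} {W : X → Matrix (Fin d) (Fin d) ℂ} {lam1 lam2 : ℝ}
  {P : Fin N → (Fin n → X) → ℝ} {D : Fin N → Matrix (Fin n → Fin d) (Fin n → Fin d) ℂ}

theorem IsQIDCode.le_re_sum_mul_trace_self (hcode : IsQIDCode W n N lam1 lam2 P D)
    (hW : ∀ x, IsDensity (W x)) (i : Fin N) :
    1 - lam1 ≤ (∑ x, (P i x : ℂ) * (Wblock W n x * D i).trace).re := by
  have htrace : ∑ x, (P i x : ℂ) * (Wblock W n x * 1).trace = 1 := by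
    simp only [mul_one, trace_Wblock hW]
    exact_mod_cast (hcode.1 i).2
  have h := hcode.2.2.1 i
  rw [Matrix.mul_sub, Matrix.trace_sub, trace_sum_smul_mul, trace_sum_smul_mul, htrace,
    Complex.sub_re, Complex.one_re] at h
  linarith

theorem IsQIDCode.re_sum_mul_trace_le_of_ne (hcode : IsQIDCode W n N lam1 lam2 P D) {i j : Fin N}
    (hij : i ≠ j) : (∑ x, (P j x : ℂ) * (Wblock W n x * D i).trace).re ≤ lam2 := by
  rw [← trace_sum_smul_mul]
  exact hcode.2.2.2 i j hij

theorem IsQIDCode.card_le [NeZero n] (hcode : IsQIDCode W n N lam1 lam2 P D)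
    (hW : ∀ x, IsDensity (W x)) {η : ℝ} (hη : 0 < η) {M : ℕ} (hM : M ≠ 0)
    (herror : 2 * (2 * √(tailBound d n η)) +
      √((n + 1) ^ Fintype.card X * 2 ^ (n * (qCapacity W + 2 * η)) / M) < (1 - lam1 - lam2) / 2) :
    N ≤ (Fintype.card X ^ n) ^ M := by
  choose s hs using fun i =>
    (hcode.1 i).exists_norm_sum_mul_trace_Wblock_sub_average_le hW hη hM
  have hinj : s.Injective := by
    intro i j hij
    by_contra hne
    have hi := (hs i (D i) (hcode.2.1 i)).trans_lt herror
    have hj := (hs j (D i) (hcode.2.1 i)).trans_lt herror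
    rw [← hij] at hj
    rw [norm_sub_rev] at hj
    have hdiff := (Complex.re_le_norm _).trans_lt
      ((norm_sub_le_norm_sub_add_norm_sub _ _ _).trans_lt (add_lt_add hi hj))
    rw [Complex.sub_re] at hdiff
    linarith [hcode.le_re_sum_mul_trace_self hW i, hcode.re_sum_mul_trace_le_of_ne hne]
  simpa using Fintype.card_le_of_injective s hinj

end CodeSize

section Asymptotics

open Filter Topology

theorem tendsto_add_one_pow_mul_rpow_neg_zero (k : ℕ) {η : ℝ} (hη : 0 < η) :
    Tendsto (fun n : ℕ => ((n : ℝ) + 1) ^ k * 2 ^ (-(n * η))) atTop (𝓝 0) := by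
  have hr : |(2 : ℝ) ^ (-η)| < 1 := by
    rw [abs_of_pos (by positivity)]
    exact Real.rpow_lt_one_of_one_lt_of_neg one_lt_two (neg_neg_of_pos hη)
  have h := ((tendsto_pow_const_mul_const_pow_of_abs_lt_one k hr).comp
    (tendsto_add_atTop_nat 1)).mul_const ((2 : ℝ) ^ η)
  rw [zero_mul] at h
  refine h.congr fun n => ?_
  rw [Function.comp_apply, ← Real.rpow_mul_natCast two_pos.le, mul_assoc, ← Real.rpow_add two_pos]
  push_cast
  ring_nf

theorem tendsto_tailBound (d : ℕ) (η : ℝ) : Tendsto (fun n => tailBound d n η) atTop (𝓝 0) := by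
  refine (tendsto_const_div_atTop_nhds_zero_nat (d * (2 / Real.log 2) ^ 2 / η ^ 2)).congr
    fun n => ?_
  rw [tailBound, div_div, mul_comm (η ^ 2)]

theorem tendsto_approximationError (d k : ℕ) (C : ℝ) {η : ℝ} (hη : 0 < η) :
    Tendsto (fun n : ℕ => 2 * (2 * √(tailBound d n η)) +
      √((n + 1) ^ k * 2 ^ (n * (C + 2 * η)) / ⌈(2 : ℝ) ^ (n * (C + 4 * η))⌉₊)) atTop (𝓝 0) := by
  have hsampling : Tendsto (fun n : ℕ => ((n : ℝ) + 1) ^ k * 2 ^ (n * (C + 2 * η)) /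
      ⌈(2 : ℝ) ^ (n * (C + 4 * η))⌉₊) atTop (𝓝 0) := by
    refine squeeze_zero (fun n => by positivity) (fun n => ?_)
      (tendsto_add_one_pow_mul_rpow_neg_zero k (mul_pos two_pos hη))
    calc ((n : ℝ) + 1) ^ k * 2 ^ (n * (C + 2 * η)) / ⌈(2 : ℝ) ^ (n * (C + 4 * η))⌉₊
        ≤ ((n : ℝ) + 1) ^ k * 2 ^ (n * (C + 2 * η)) / 2 ^ (n * (C + 4 * η)) := by
          gcongr
          exact Nat.le_ceil _
      _ = ((n : ℝ) + 1) ^ k * 2 ^ (-(n * (2 * η))) := by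
          rw [mul_div_assoc, ← Real.rpow_sub two_pos]
          ring_nf
  simpa using ((tendsto_tailBound d η).sqrt.const_mul 2).const_mul 2 |>.add hsampling.sqrt

theorem eventually_pow_ceil_le_two_rpow {a : ℕ} (ha : a ≠ 0) {R θ : ℝ} (hR : 0 ≤ R) (hθ : 0 < θ) :
    ∀ᶠ n : ℕ in atTop, (((a : ℝ) ^ n) ^ ⌈(2 : ℝ) ^ (n * R)⌉₊) ≤ 2 ^ (2 : ℝ) ^ (n * (R + θ)) := by
  set L := Real.logb 2 a
  have hL : 0 ≤ L :=
    Real.logb_nonneg one_lt_two (Nat.one_le_cast.mpr (Nat.one_le_iff_ne_zero.mpr ha))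
  have hsmall := (tendsto_add_one_pow_mul_rpow_neg_zero 1 hθ).const_mul (2 * L)
  rw [mul_zero] at hsmall
  filter_upwards [hsmall.eventually (gt_mem_nhds one_pos)] with n hn
  have hpow : 2 * L * n ≤ 2 ^ (n * θ) := by
    rw [pow_one, Real.rpow_neg two_pos.le, ← mul_assoc, mul_inv_lt_iff₀ (by positivity)] at hn
    linarith
  have hceil : (⌈(2 : ℝ) ^ (n * R)⌉₊ : ℝ) ≤ 2 * 2 ^ (n * R) :=
    Nat.ceil_le_two_mul (by
      linarith [Real.one_le_rpow one_le_two (mul_nonneg n.cast_nonneg hR)])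
  have ha' : (a : ℝ) = 2 ^ L :=
    (Real.rpow_logb two_pos (by norm_num) (Nat.cast_pos.mpr (Nat.pos_of_ne_zero ha))).symm
  rw [← pow_mul, ha', ← Real.rpow_mul_natCast two_pos.le]
  refine Real.rpow_le_rpow_of_exponent_le one_le_two ?_
  push_cast
  calc L * (n * ⌈(2 : ℝ) ^ (n * R)⌉₊) ≤ L * (n * (2 * 2 ^ (n * R))) := by gcongr
    _ = 2 * L * n * 2 ^ (n * R) := by ring
    _ ≤ 2 ^ (n * θ) * 2 ^ (n * R) := by gcongr
    _ = 2 ^ (n * (R + θ)) := by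
      rw [← Real.rpow_add two_pos]
      ring_nf

end Asymptotics

theorem stmt3 {X : Type*} [Fintype X] [Nonempty X] {d : ℕ} (hd : 0 < d)
    (W : X → Matrix (Fin d) (Fin d) ℂ) (hW : ∀ x, IsDensity (W x))
    (lam1 lam2 : ℝ) (h1 : 0 < lam1) (h2 : 0 < lam2) (hsum : lam1 + lam2 < 1)
    (δ : ℝ) (hδ : 0 < δ) :
    ∃ n₀ : ℕ, ∀ n ≥ n₀, ∀ N : ℕ,
      ∀ (P : Fin N → (Fin n → X) → ℝ)
        (D : Fin N → Matrix (Fin n → Fin d) (Fin n → Fin d) ℂ),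
        IsQIDCode W n N lam1 lam2 P D →
        (N:ℝ) ≤ (2:ℝ) ^ ((2:ℝ) ^ ((n:ℝ) * (qCapacity W + δ))) := by
  set R := qCapacity W + 4 * (δ / 8)
  have hR : 0 ≤ R := add_nonneg (qCapacity_nonneg hW) (by positivity)
  have herror := (tendsto_approximationError d (Fintype.card X) (qCapacity W)
    (by positivity : 0 < δ / 8)).eventually
      (gt_mem_nhds (by linarith : 0 < (1 - lam1 - lam2) / 2))
  have hgrowth := eventually_pow_ceil_le_two_rpow (Fintype.card_ne_zero (α := X)) hR (half_pos hδ)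
  obtain ⟨n₀, hn₀⟩ := Filter.eventually_atTop.mp
    (herror.and (hgrowth.and (Filter.eventually_ne_atTop 0)))
  refine ⟨n₀, fun n hn N P D hcode => ?_⟩
  obtain ⟨herror, hgrowth, hn0⟩ := hn₀ n hn
  have : NeZero n := ⟨hn0⟩
  have hM : ⌈(2 : ℝ) ^ (n * R)⌉₊ ≠ 0 := (Nat.ceil_pos.mpr (by positivity)).ne'
  calc (N : ℝ) ≤ ((Fintype.card X : ℝ) ^ n) ^ ⌈(2 : ℝ) ^ (n * R)⌉₊ := by
        exact_mod_cast hcode.card_le hW (by positivity) hM herror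
    _ ≤ 2 ^ (2 : ℝ) ^ (n * (R + δ / 2)) := hgrowth
    _ = 2 ^ (2 : ℝ) ^ (n * (qCapacity W + δ)) := by
        simp only [R]
        ring_nf
end

section
/- Let (𝒱, ℰ) be a quantum hypergraph such that E ≤ η𝟙 for all E ∈ ℰ. For a probability distribution P on ℰ define ρ = ∑_{E∈ℰ} P(E)·E, and fix ε, τ > 0. Then there exist a subspace 𝒱₀ of 𝒱 and E₁, …, E_L ∈ ℰ such that, writing Π₀ and Π₁ for the orthogonal projections onto 𝒱₀ and its orthogonal complement, and ρ̄ = (1/L)∑_{i=1}^{L} E_i, the following hold: Tr(ρΠ₀) ≤ τ; (1−ε)·Π₁ρΠ₁ ≤ Π₁ρ̄Π₁ ≤ (1+ε)·Π₁ρΠ₁; and L ≤ 1 + η·(dim 𝒱)·(2 ln 2 · log(2 dim 𝒱))/(ε²τ). -/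
open scoped BigOperators
open ComplexOrder
open scoped Matrix

/-! Choose the sample so that its mean `ρ'` deviates little from `ρ` in the seminorm
`X ↦ tr (Xᴴ * σ⁻¹ * X)`, where `σ = ρ + δ • 1`. For a single edge `E ≤ η • 1` the second moment is
at most `η * tr (E * σ⁻¹)`, hence at most `η * dim` on average over `P`, and averaging over `L`
edges divides it by `L`.

The bad subspace collects the directions in which `D = ρ' - ρ` exceeds `± ε • ρ`: take the positive
spectral projection `A` of `D - ε • ρ`, then the positive spectral projection `B` of the compression
of `-D - ε • ρ` to the complement of `A`. The signed observable `A - B` has square `A + B` and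
witnesses the deviation: `ε * tr (ρ * (A + B)) ≤ tr (D * (A - B))`. The right-hand side is
controlled by the seminorm of `D`, so `A + B` carries little weight of `ρ`. No matrix Chernoff bound
is involved, and hence no factor `log dim`.
-/

open scoped MatrixOrder
open RCLike (re)

section Averaging

variable {α V : Type*} [Fintype α] {P : α → ℝ} [AddCommGroup V] [Module ℝ V]

theorem IsProbDist.exists_le_sum (hP : IsProbDist P) (f : α → ℝ) : ∃ a, f a ≤ ∑ b, P b * f b := by
  have hpos : 0 < ∑ a, P a := by simp only [hP.2, zero_lt_one]
  obtain ⟨a, -, ha⟩ := (concaveOn_id (𝕜 := ℝ) convex_univ).exists_le_of_centerMass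
    (fun a _ ↦ hP.1 a) hpos (fun a _ ↦ Set.mem_univ (f a))
  exact ⟨a, by simpa only [Finset.centerMass_eq_of_sum_1 _ _ hP.2, id, smul_eq_mul] using ha⟩

theorem IsProbDist.sum_bilin_add (hP : IsProbDist P) (B : LinearMap.BilinForm ℝ V) (x : α → V)
    (y : V) :
    ∑ a, P a * B (x a + y) (x a + y) = ∑ a, P a * B (x a) (x a) + B (∑ a, P a • x a) y
      + B y (∑ a, P a • x a) + B y y := by
  have hy : B y y = ∑ a, P a * B y y := by rw [← Finset.sum_mul, hP.2, one_mul]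
  rw [hy]
  simp only [map_add, map_sum, map_smul, LinearMap.add_apply, LinearMap.sum_apply,
    LinearMap.smul_apply, smul_eq_mul, ← Finset.sum_add_distrib]
  exact Finset.sum_congr rfl fun a _ ↦ by ring

theorem IsProbDist.exists_bilin_sum_le (hP : IsProbDist P) (B : LinearMap.BilinForm ℝ V)
    {x : α → V} (hx : ∑ a, P a • x a = 0) (L : ℕ) :
    ∃ sel : Fin L → α,
      B (∑ k, x (sel k)) (∑ k, x (sel k)) ≤ L * ∑ a, P a * B (x a) (x a) := by
  induction L with
  | zero => exact ⟨Fin.elim0, by simp⟩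
  | succ L ih =>
    obtain ⟨sel, hsel⟩ := ih
    obtain ⟨a, ha⟩ := hP.exists_le_sum fun a ↦
      B (x a + ∑ k, x (sel k)) (x a + ∑ k, x (sel k))
    rw [hP.sum_bilin_add, hx, map_zero, map_zero, LinearMap.zero_apply] at ha
    refine ⟨Fin.cons a sel, ?_⟩
    simp only [Fin.sum_univ_succ, Fin.cons_zero, Fin.cons_succ]
    push_cast
    linarith

theorem IsProbDist.sum_bilin_sub_mean (hP : IsProbDist P) (B : LinearMap.BilinForm ℝ V)
    (x : α → V) {m : V} (hm : m = ∑ a, P a • x a) :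
    ∑ a, P a * B (x a - m) (x a - m) = ∑ a, P a * B (x a) (x a) - B m m := by
  simp only [sub_eq_add_neg (_ : V)]
  rw [hP.sum_bilin_add, ← hm]
  simp only [map_neg, LinearMap.neg_apply]
  ring

theorem IsProbDist.exists_bilin_mean_sub_le (hP : IsProbDist P) (B : LinearMap.BilinForm ℝ V)
    (x : α → V) {m : V} (hm : m = ∑ a, P a • x a) {L : ℕ} (hL : 0 < L) :
    ∃ sel : Fin L → α,
      B ((L : ℝ)⁻¹ • ∑ k, x (sel k) - m) ((L : ℝ)⁻¹ • ∑ k, x (sel k) - m)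
        ≤ (∑ a, P a * B (x a) (x a) - B m m) / L := by
  have hL0 : (L : ℝ) ≠ 0 := by positivity
  have hcentered : ∑ a, P a • (x a - m) = 0 := by
    simp only [smul_sub, Finset.sum_sub_distrib, ← Finset.sum_smul, hP.2, one_smul, ← hm, sub_self]
  obtain ⟨sel, hsel⟩ := hP.exists_bilin_sum_le B hcentered L
  have hmean : (L : ℝ)⁻¹ • ∑ k, x (sel k) - m = (L : ℝ)⁻¹ • ∑ k, (x (sel k) - m) := by
    rw [Finset.sum_sub_distrib, Finset.sum_const, Finset.card_univ, Fintype.card_fin,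
      ← Nat.cast_smul_eq_nsmul ℝ, smul_sub, inv_smul_smul₀ hL0]
  rw [hP.sum_bilin_sub_mean B x hm] at hsel
  refine ⟨sel, ?_⟩
  simp only [hmean, map_smul, LinearMap.smul_apply, smul_eq_mul]
  calc (L : ℝ)⁻¹ * ((L : ℝ)⁻¹ * B (∑ k, (x (sel k) - m)) (∑ k, (x (sel k) - m)))
      ≤ (L : ℝ)⁻¹ * ((L : ℝ)⁻¹ * (L * (∑ a, P a * B (x a) (x a) - B m m))) := by gcongr
    _ = (∑ a, P a * B (x a) (x a) - B m m) / L := by rw [inv_mul_cancel_left₀ hL0, inv_mul_eq_div]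

end Averaging

theorem nonneg_of_nonneg_of_le_smul_one {𝕜 n : Type*} [RCLike 𝕜] [DecidableEq n] [Nonempty n]
    {A : Matrix n n 𝕜} {η : ℝ} (hA : 0 ≤ A) (hη : A ≤ η • 1) : 0 ≤ η := by
  have hdiag := (Matrix.nonneg_iff_posSemidef.mp (hA.trans hη)).diag_nonneg
    (i := Classical.arbitrary n)
  simpa [RCLike.real_smul_eq_coe_mul] using hdiag

section Trace

variable {𝕜 n : Type*} [RCLike 𝕜] [Fintype n] {A B S : Matrix n n 𝕜}

theorem re_trace_nonneg (hA : 0 ≤ A) : 0 ≤ re A.trace :=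
  (RCLike.nonneg_iff.mp (Matrix.nonneg_iff_posSemidef.mp hA).trace_nonneg).1

theorem re_trace_mul_nonneg_s8 (hA : 0 ≤ A) (hB : 0 ≤ B) : 0 ≤ re (A * B).trace := by
  classical
  obtain ⟨C, rfl⟩ := CStarAlgebra.nonneg_iff_eq_star_mul_self.mp hA
  rw [mul_assoc, Matrix.trace_mul_comm]
  exact re_trace_nonneg (star_right_conjugate_nonneg hB C)

theorem re_trace_mul_le_re_trace_mul (hAB : A ≤ B) (hS : 0 ≤ S) :
    re (A * S).trace ≤ re (B * S).trace := by
  have h := re_trace_mul_nonneg_s8 (sub_nonneg.mpr hAB) hS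
  rwa [Matrix.sub_mul, Matrix.trace_sub, map_sub, sub_nonneg] at h

theorem re_trace_le_card_of_isStarProjection (hA : IsStarProjection A) :
    re A.trace ≤ Fintype.card n := by
  classical
  have h := re_trace_nonneg hA.one_sub.nonneg
  rwa [Matrix.trace_sub, Matrix.trace_one, map_sub, RCLike.natCast_re, sub_nonneg] at h

variable [DecidableEq n]

theorem mul_self_le_smul {η : ℝ} (hA : 0 ≤ A) (hη : A ≤ η • 1) : A * A ≤ η • A := by
  have h := Commute.mul_nonneg hA (sub_nonneg.mpr hη)
    (((Commute.one_right A).smul_right η).sub_right (Commute.refl A))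
  rwa [mul_sub, mul_smul_comm, mul_one, sub_nonneg] at h

theorem re_trace_mul_inv_le_card {σ : Matrix n n 𝕜} (hA : A ≤ σ) (hσ : σ.PosDef) :
    re (A * σ⁻¹).trace ≤ Fintype.card n := by
  have h := re_trace_mul_le_re_trace_mul hA hσ.inv.posSemidef.nonneg
  rwa [Matrix.mul_nonsing_inv _ ((Matrix.isUnit_iff_isUnit_det σ).mp hσ.isUnit),
    Matrix.trace_one, RCLike.natCast_re] at h

end Trace

section WeightedTraceForm

variable {𝕜 n : Type*} [RCLike 𝕜] [Fintype n]

/-- The real part of the Hilbert–Schmidt pairing `tr (Xᴴ * S * Y)` with weight `S`. With `S = σ⁻¹`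
it measures deviations of sample means. It is bilinear over `ℝ` rather than sesquilinear over `𝕜`
because samples carry real weights. -/
noncomputable def weightedTraceForm (S : Matrix n n 𝕜) : LinearMap.BilinForm ℝ (Matrix n n 𝕜) :=
  LinearMap.mk₂ ℝ (fun X Y ↦ re (Xᴴ * S * Y).trace)
    (fun X X' Y ↦ by simp only [Matrix.conjTranspose_add, add_mul, Matrix.trace_add, map_add])
    (fun c X Y ↦ by simp [RCLike.smul_re])
    (fun X Y Y' ↦ by simp only [mul_add, Matrix.trace_add, map_add])
    (fun c X Y ↦ by simp [RCLike.smul_re])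

theorem weightedTraceForm_apply (S X Y : Matrix n n 𝕜) :
    weightedTraceForm S X Y = re (Xᴴ * S * Y).trace := rfl

theorem weightedTraceForm_self_nonneg {S : Matrix n n 𝕜} (hS : 0 ≤ S) (X : Matrix n n 𝕜) :
    0 ≤ weightedTraceForm S X X :=
  re_trace_nonneg (star_left_conjugate_nonneg hS X)

variable [DecidableEq n]

theorem weightedTraceForm_self_le {S E : Matrix n n 𝕜} {η : ℝ} (hS : 0 ≤ S) (hE : 0 ≤ E)
    (hη : E ≤ η • 1) : weightedTraceForm S E E ≤ η * re (E * S).trace := by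
  calc weightedTraceForm S E E = re (E * E * S).trace := by
        rw [weightedTraceForm_apply, show Eᴴ = E from IsSelfAdjoint.of_nonneg hE,
          Matrix.trace_mul_comm, ← mul_assoc]
    _ ≤ re ((η • E) * S).trace := re_trace_mul_le_re_trace_mul (mul_self_le_smul hE hη) hS
    _ = η * re (E * S).trace := by rw [smul_mul_assoc, Matrix.trace_smul, RCLike.smul_re]

-- Expand the nonnegative square of `D - σ * U` in the seminorm weighted by `σ⁻¹`.
theorem two_mul_re_trace_mul_le {σ : Matrix n n 𝕜} (hσ : σ.PosDef) (D U : Matrix n n 𝕜) :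
    2 * re (Dᴴ * U).trace ≤ weightedTraceForm σ⁻¹ D D + re (Uᴴ * σ * U).trace := by
  have hdet : IsUnit σ.det := (Matrix.isUnit_iff_isUnit_det σ).mp hσ.isUnit
  have hsq := weightedTraceForm_self_nonneg hσ.inv.posSemidef.nonneg (D - σ * U)
  have hDU : weightedTraceForm σ⁻¹ D (σ * U) = re (Dᴴ * U).trace := by
    rw [weightedTraceForm_apply, mul_assoc, Matrix.nonsing_inv_mul_cancel_left _ _ hdet]
  have hUσ : (σ * U)ᴴ * σ⁻¹ = Uᴴ := by
    rw [Matrix.conjTranspose_mul, hσ.isHermitian.eq, Matrix.mul_nonsing_inv_cancel_right _ _ hdet]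
  have hUD : weightedTraceForm σ⁻¹ (σ * U) D = re (Dᴴ * U).trace := by
    rw [weightedTraceForm_apply, hUσ, ← RCLike.conj_re, ← RCLike.star_def,
      ← Matrix.trace_conjTranspose, Matrix.conjTranspose_mul, Matrix.conjTranspose_conjTranspose]
  have hUU : weightedTraceForm σ⁻¹ (σ * U) (σ * U) = re (Uᴴ * σ * U).trace := by
    rw [weightedTraceForm_apply, hUσ, mul_assoc]
  simp only [map_sub, LinearMap.sub_apply, hDU, hUD, hUU] at hsq
  linarith

theorem IsProbDist.exists_weightedTraceForm_mean_sub_le {ι : Type*} [Fintype ι] {P : ι → ℝ}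
    (hP : IsProbDist P) {E : ι → Matrix n n 𝕜} {η : ℝ} (hη : 0 ≤ η)
    (hE : ∀ i, 0 ≤ E i ∧ E i ≤ η • 1) {ρ σ : Matrix n n 𝕜} (hρ : ρ = ∑ i, P i • E i)
    (hρσ : ρ ≤ σ) (hσ : σ.PosDef) {L : ℕ} (hL : 0 < L) :
    ∃ sel : Fin L → ι,
      weightedTraceForm σ⁻¹ ((L : ℝ)⁻¹ • ∑ k, E (sel k) - ρ) ((L : ℝ)⁻¹ • ∑ k, E (sel k) - ρ)
        ≤ η * Fintype.card n / L := by
  have hS : 0 ≤ σ⁻¹ := hσ.inv.posSemidef.nonneg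
  obtain ⟨sel, hsel⟩ := hP.exists_bilin_mean_sub_le (weightedTraceForm σ⁻¹) E hρ hL
  refine ⟨sel, hsel.trans ?_⟩
  gcongr
  calc ∑ i, P i * weightedTraceForm σ⁻¹ (E i) (E i) - weightedTraceForm σ⁻¹ ρ ρ
      ≤ ∑ i, P i * weightedTraceForm σ⁻¹ (E i) (E i) :=
        sub_le_self _ (weightedTraceForm_self_nonneg hS ρ)
    _ ≤ ∑ i, P i * (η * re (E i * σ⁻¹).trace) := by
        gcongr with i
        · exact hP.1 i
        · exact weightedTraceForm_self_le hS (hE i).1 (hE i).2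
    _ = η * re (ρ * σ⁻¹).trace := by
        simp only [hρ, Matrix.sum_mul, Matrix.trace_sum, smul_mul_assoc, Matrix.trace_smul,
          map_sum, RCLike.smul_re, Finset.mul_sum, mul_left_comm]
    _ ≤ η * Fintype.card n := by
        gcongr
        exact re_trace_mul_inv_le_card hρσ hσ

end WeightedTraceForm

section SpectralProjection

variable {𝕜 n : Type*} [RCLike 𝕜] [Fintype n] [DecidableEq n] {M : Matrix n n 𝕜}

/-- The spectral projection of `M` onto its strictly positive eigenvalues, used to cut out the
directions in which an operator inequality fails. It is `0` when `M` is not self-adjoint, the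
junk value of `cfc`. -/
noncomputable def posSpectralProj (M : Matrix n n 𝕜) : Matrix n n 𝕜 :=
  cfc (Set.indicator (Set.Ioi (0 : ℝ)) 1) M

theorem isStarProjection_posSpectralProj (M : Matrix n n 𝕜) :
    IsStarProjection (posSpectralProj M) where
  isIdempotentElem := by
    have hf := M.finite_real_spectrum.continuousOn (Set.indicator (Set.Ioi (0 : ℝ)) (1 : ℝ → ℝ))
    rw [IsIdempotentElem, posSpectralProj, ← cfc_mul _ _ M hf hf, ← Set.indicator_mul]
    simp only [Pi.one_apply, mul_one, Pi.one_def]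
  isSelfAdjoint := cfc_predicate _ _

theorem mul_cfc_eq_cfc (hM : IsSelfAdjoint M) (f : ℝ → ℝ) :
    M * cfc f M = cfc (fun x ↦ x * f x) M := by
  rw [cfc_mul (fun x ↦ x) f M continuousOn_id (M.finite_real_spectrum.continuousOn f), cfc_id' ℝ M]

theorem mul_posSpectralProj (hM : IsSelfAdjoint M) : M * posSpectralProj M = M⁺ := by
  rw [posSpectralProj, mul_cfc_eq_cfc hM, CFC.posPart_def, cfcₙ_eq_cfc]
  refine cfc_congr fun x _ ↦ ?_
  rcases lt_or_ge 0 x with hx | hx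
  · simp [hx, posPart_of_nonneg hx.le]
  · simp [hx.not_gt, posPart_of_nonpos hx]

-- Every vector in the range of the projection lies in the range of `M`, which `Q` fixes.
theorem mul_posSpectralProj_of_mul_eq_self (hM : IsSelfAdjoint M) {Q : Matrix n n 𝕜}
    (hQ : Q * M = M) : Q * posSpectralProj M = posSpectralProj M := by
  have hfactor : posSpectralProj M = M * cfc (Set.indicator (Set.Ioi (0 : ℝ)) (·⁻¹)) M := by
    rw [posSpectralProj, mul_cfc_eq_cfc hM]
    refine cfc_congr fun x _ ↦ ?_
    rcases lt_or_ge 0 x with hx | hx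
    · simp [hx, hx.ne']
    · simp [hx.not_gt]
  rw [hfactor, ← mul_assoc, hQ]

theorem compression_posSpectralProj_nonpos (hM : IsSelfAdjoint M) :
    (1 - posSpectralProj M) * M * (1 - posSpectralProj M) ≤ 0 := by
  have hQ := isStarProjection_posSpectralProj M
  calc (1 - posSpectralProj M) * M * (1 - posSpectralProj M)
      ≤ (1 - posSpectralProj M) * (M * posSpectralProj M) * (1 - posSpectralProj M) := by
        rw [mul_posSpectralProj hM]
        exact hQ.one_sub.isSelfAdjoint.conjugate_le_conjugate CFC.le_posPart
    _ = 0 := by simp only [mul_assoc, hQ.mul_one_sub_self, mul_zero]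

theorem exists_isStarProjection_compression_nonpos {H K : Matrix n n 𝕜} (hH : IsSelfAdjoint H)
    (hK : IsSelfAdjoint K) :
    ∃ A B : Matrix n n 𝕜, IsStarProjection A ∧ IsStarProjection B ∧ A * B = 0 ∧
      0 ≤ re (H * A).trace ∧ 0 ≤ re (K * B).trace ∧
      (1 - (A + B)) * H * (1 - (A + B)) ≤ 0 ∧ (1 - (A + B)) * K * (1 - (A + B)) ≤ 0 := by
  set A := posSpectralProj H
  have hA : IsStarProjection A := isStarProjection_posSpectralProj H
  set Q := 1 - A
  have hQ : IsStarProjection Q := hA.one_sub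
  have hQKQ : IsSelfAdjoint (Q * K * Q) := hK.conjugate_self hQ.isSelfAdjoint
  set B := posSpectralProj (Q * K * Q)
  have hB : IsStarProjection B := isStarProjection_posSpectralProj _
  have hQB : Q * B = B := mul_posSpectralProj_of_mul_eq_self hQKQ <| by
    simp only [← mul_assoc, hQ.isIdempotentElem.eq]
  have hBQ : B * Q = B := by
    simpa only [star_mul, hQ.isSelfAdjoint.star_eq, hB.isSelfAdjoint.star_eq] using congr(star $hQB)
  have hleft : 1 - (A + B) = (1 - B) * Q := by rw [sub_mul, one_mul, hBQ, sub_add_eq_sub_sub]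
  have hright : 1 - (A + B) = Q * (1 - B) := by rw [mul_sub, mul_one, hQB, sub_add_eq_sub_sub]
  have hcompress (X : Matrix n n 𝕜) :
      (1 - (A + B)) * X * (1 - (A + B)) = (1 - B) * (Q * X * Q) * (1 - B) :=
    calc (1 - (A + B)) * X * (1 - (A + B)) = (1 - B) * Q * X * (Q * (1 - B)) := by
          rw [← hleft, ← hright]
      _ = (1 - B) * (Q * X * Q) * (1 - B) := by simp only [mul_assoc]
  refine ⟨A, B, hA, hB, ?_, ?_, ?_, ?_, ?_⟩
  · rw [← hQB, ← mul_assoc, hA.mul_one_sub_self, zero_mul]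
  · rw [mul_posSpectralProj hH]
    exact re_trace_nonneg (CFC.posPart_nonneg H)
  · have htrace : (K * B).trace = (Q * K * Q * B).trace := by
      rw [mul_assoc _ Q, hQB, mul_assoc Q, Matrix.trace_mul_comm Q, mul_assoc, hBQ]
    rw [htrace, mul_posSpectralProj hQKQ]
    exact re_trace_nonneg (CFC.posPart_nonneg _)
  · rw [hcompress]
    simpa only [mul_zero, zero_mul] using hB.one_sub.isSelfAdjoint.conjugate_le_conjugate
      (compression_posSpectralProj_nonpos hH)
  · rw [hcompress]
    exact compression_posSpectralProj_nonpos hQKQ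

end SpectralProjection

section Sampling

variable {𝕜 n : Type*} [RCLike 𝕜] [Fintype n] [DecidableEq n]

theorem exists_isStarProjection_compression_le {D ρ σ : Matrix n n 𝕜} (hD : IsSelfAdjoint D)
    (hρ : IsSelfAdjoint ρ) (hσ : σ.PosDef) {ε : ℝ} (hε : 0 ≤ ε) :
    ∃ Q : Matrix n n 𝕜, IsStarProjection Q ∧
      ε ^ 2 * (2 * re (ρ * Q).trace - re (σ * Q).trace) ≤ weightedTraceForm σ⁻¹ D D ∧
      (1 - Q) * D * (1 - Q) ≤ ε • ((1 - Q) * ρ * (1 - Q)) ∧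
      -(ε • ((1 - Q) * ρ * (1 - Q))) ≤ (1 - Q) * D * (1 - Q) := by
  have hερ : IsSelfAdjoint (ε • ρ) := (IsSelfAdjoint.all ε).smul hρ
  obtain ⟨A, B, hA, hB, hAB, hDA, hDB, hupper, hlower⟩ :=
    exists_isStarProjection_compression_nonpos (hD.sub hερ) (hD.neg.sub hερ)
  have hBA : B * A = 0 := by
    simpa only [star_mul, hA.isSelfAdjoint.star_eq, hB.isSelfAdjoint.star_eq, star_zero]
      using congr(star $hAB)
  have hcompress (X : Matrix n n 𝕜) : (1 - (A + B)) * (X - ε • ρ) * (1 - (A + B)) =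
      (1 - (A + B)) * X * (1 - (A + B)) - ε • ((1 - (A + B)) * ρ * (1 - (A + B))) := by
    rw [mul_sub _ X, sub_mul _ _ (1 - (A + B)), mul_smul_comm, smul_mul_assoc]
  refine ⟨A + B, hA.add hB hAB, ?_, ?_, ?_⟩
  · have hgain : ε * re (ρ * (A + B)).trace ≤ re (D * (A - B)).trace := by
      simp only [sub_mul, neg_mul, mul_add, mul_sub, smul_mul_assoc, Matrix.trace_add,
        Matrix.trace_sub, Matrix.trace_neg, Matrix.trace_smul, map_add, map_sub, map_neg,
        RCLike.smul_re] at hDA hDB ⊢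
      linarith
    have hU : star (A - B) = A - B := (hA.isSelfAdjoint.sub hB.isSelfAdjoint).star_eq
    have hsq : (A - B) * (A - B) = A + B := by
      rw [sub_mul, mul_sub, mul_sub, hA.isIdempotentElem.eq, hB.isIdempotentElem.eq, hAB, hBA]
      abel
    have hpolar := two_mul_re_trace_mul_le hσ D (ε • (A - B))
    have hUσU : re ((ε • (A - B))ᴴ * σ * (ε • (A - B))).trace = ε ^ 2 * re (σ * (A + B)).trace := by
      rw [Matrix.conjTranspose_smul, ← Matrix.star_eq_conjTranspose, hU, star_trivial,
        smul_mul_assoc, smul_mul_assoc, mul_smul_comm, mul_assoc, Matrix.trace_smul,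
        Matrix.trace_smul, Matrix.trace_mul_comm, mul_assoc, hsq, RCLike.smul_re, RCLike.smul_re]
      ring
    rw [hUσU, show Dᴴ = D from hD, mul_smul_comm, Matrix.trace_smul, RCLike.smul_re] at hpolar
    linarith [mul_le_mul_of_nonneg_left hgain hε]
  · rwa [hcompress, sub_nonpos] at hupper
  · rw [hcompress, sub_nonpos, mul_neg, neg_mul] at hlower
    exact neg_le.mp hlower

theorem IsProbDist.exists_isStarProjection_sampling {ι : Type*} [Fintype ι] {P : ι → ℝ}
    (hP : IsProbDist P) {E : ι → Matrix n n 𝕜} {η : ℝ} (hη : 0 ≤ η)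
    (hE : ∀ i, 0 ≤ E i ∧ E i ≤ η • 1) {ρ : Matrix n n 𝕜} (hρ : ρ = ∑ i, P i • E i)
    {ε τ : ℝ} (hε : 0 < ε) {L : ℕ} (hL : 0 < L) (hLτ : η * Fintype.card n / L < ε ^ 2 * τ) :
    ∃ (Q : Matrix n n 𝕜) (sel : Fin L → ι), IsStarProjection Q ∧ re (ρ * Q).trace ≤ τ ∧
      (1 - ε) • ((1 - Q) * ρ * (1 - Q)) ≤ (1 - Q) * ((L : ℝ)⁻¹ • ∑ k, E (sel k)) * (1 - Q) ∧
      (1 - Q) * ((L : ℝ)⁻¹ • ∑ k, E (sel k)) * (1 - Q) ≤ (1 + ε) • ((1 - Q) * ρ * (1 - Q)) := by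
  have hρ0 : 0 ≤ ρ := hρ ▸ Finset.sum_nonneg fun i _ ↦ smul_nonneg (hP.1 i) (hE i).1
  obtain ⟨δ, hδ, hδτ⟩ := exists_pos_mul_lt (sub_pos.mpr hLτ) (ε ^ 2 * Fintype.card n)
  have hδ1 : (δ • (1 : Matrix n n 𝕜)).PosDef := Matrix.PosDef.one.smul hδ
  have hσ : (ρ + δ • 1).PosDef := .posSemidef_add (Matrix.nonneg_iff_posSemidef.mp hρ0) hδ1
  obtain ⟨sel, hsel⟩ := hP.exists_weightedTraceForm_mean_sub_le hη hE hρ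
    (le_add_of_nonneg_right hδ1.posSemidef.nonneg) hσ hL
  set ρ' := (L : ℝ)⁻¹ • ∑ k, E (sel k)
  have hρ' : 0 ≤ ρ' := smul_nonneg (by positivity) (Finset.sum_nonneg fun k _ ↦ (hE (sel k)).1)
  obtain ⟨Q, hQ, htrace, hupper, hlower⟩ := exists_isStarProjection_compression_le
    ((IsSelfAdjoint.of_nonneg hρ').sub (IsSelfAdjoint.of_nonneg hρ0)) (.of_nonneg hρ0) hσ hε.le
  have hdev : (1 - Q) * (ρ' - ρ) * (1 - Q) = (1 - Q) * ρ' * (1 - Q) - (1 - Q) * ρ * (1 - Q) := by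
    rw [mul_sub _ ρ', sub_mul _ _ (1 - Q)]
  rw [hdev] at hupper hlower
  refine ⟨Q, sel, hQ, ?_, ?_, ?_⟩
  · have hσQ : re ((ρ + δ • 1) * Q).trace ≤ re (ρ * Q).trace + δ * Fintype.card n := by
      rw [add_mul, smul_mul_assoc, one_mul, Matrix.trace_add, Matrix.trace_smul, map_add,
        RCLike.smul_re]
      gcongr
      exact re_trace_le_card_of_isStarProjection hQ
    have hε2 : 0 < ε ^ 2 := by positivity
    refine le_of_mul_le_mul_left ?_ hε2
    linarith [mul_le_mul_of_nonneg_left hσQ hε2.le]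
  · rwa [sub_smul, one_smul, sub_le_iff_le_add, ← neg_le_sub_iff_le_add]
  · rwa [add_smul, one_smul, ← sub_le_iff_le_add']

theorem stmt8_general [Nonempty n] {ι : Type*} [Fintype ι] (E : ι → Matrix n n 𝕜) (η : ℝ)
    (hE : ∀ i, 0 ≤ E i ∧ E i ≤ η • 1) (P : ι → ℝ) (hP : IsProbDist P)
    (ρ : Matrix n n 𝕜) (hρ : ρ = ∑ i, P i • E i) (ε τ : ℝ) (hε : 0 < ε) (hτ : 0 < τ) :
    ∃ (Q : Matrix n n 𝕜) (L : ℕ) (sel : Fin L → ι), IsStarProjection Q ∧ 0 < L ∧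
      re (ρ * Q).trace ≤ τ ∧
      (1 - ε) • ((1 - Q) * ρ * (1 - Q)) ≤ (1 - Q) * ((L : ℝ)⁻¹ • ∑ k, E (sel k)) * (1 - Q) ∧
      (1 - Q) * ((L : ℝ)⁻¹ • ∑ k, E (sel k)) * (1 - Q) ≤ (1 + ε) • ((1 - Q) * ρ * (1 - Q)) ∧
      (L : ℝ) ≤ 1 + η * Fintype.card n / (ε ^ 2 * τ) := by
  obtain ⟨i, -⟩ := hP.exists_le_sum 0
  have hη : 0 ≤ η := nonneg_of_nonneg_of_le_smul_one (hE i).1 (hE i).2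
  have hετ : 0 < ε ^ 2 * τ := by positivity
  set K := η * Fintype.card n / (ε ^ 2 * τ)
  set L := ⌊K⌋₊ + 1 with hL
  have hKL : K < L := by
    rw [hL, Nat.cast_add_one]
    exact Nat.lt_floor_add_one K
  have hLτ : η * Fintype.card n / L < ε ^ 2 * τ := by
    rwa [div_lt_comm₀ (by positivity) hετ]
  obtain ⟨Q, sel, hQ, htrace, hlower, hupper⟩ :=
    hP.exists_isStarProjection_sampling hη hE hρ hε (Nat.succ_pos _) hLτ
  refine ⟨Q, L, sel, hQ, Nat.succ_pos _, htrace, hlower, hupper, ?_⟩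
  rw [hL, Nat.cast_add_one, add_comm]
  gcongr
  exact Nat.floor_le (by positivity)

end Sampling

theorem one_le_two_mul_log_mul_logb {x : ℝ} (hx : 2 ≤ x) :
    1 ≤ 2 * Real.log 2 * Real.logb 2 x := by
  have hlogb : 1 ≤ Real.logb 2 x := by
    rwa [Real.le_logb_iff_rpow_le one_lt_two (by linarith), Real.rpow_one]
  have hlog : 1 ≤ 2 * Real.log 2 := by linarith [Real.log_two_gt_d9]
  exact one_le_mul_of_one_le_of_one_le hlog hlogb

theorem stmt8 {d : ℕ} (hd : 0 < d) {ι : Type*} [Fintype ι] [Nonempty ι]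
    (Ed : ι → Matrix (Fin d) (Fin d) ℂ) (η : ℝ)
    (hE : ∀ i, (Ed i).PosSemidef ∧ (1 - Ed i).PosSemidef ∧ ((η:ℂ) • 1 - Ed i).PosSemidef)
    (P : ι → ℝ) (hP : IsProbDist P)
    (ρ : Matrix (Fin d) (Fin d) ℂ) (hρ : ρ = ∑ i, (P i : ℂ) • Ed i)
    (ε τ : ℝ) (hε : 0 < ε) (hτ : 0 < τ) :
    ∃ (Proj0 : Matrix (Fin d) (Fin d) ℂ) (L : ℕ) (sel : Fin L → ι),
      Proj0.IsHermitian ∧ Proj0 * Proj0 = Proj0 ∧ 0 < L ∧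
      (ρ * Proj0).trace.re ≤ τ ∧
      ((1 - Proj0) * ((L:ℂ)⁻¹ • ∑ i, Ed (sel i)) * (1 - Proj0)
          - ((1 - ε : ℝ) : ℂ) • ((1 - Proj0) * ρ * (1 - Proj0))).PosSemidef ∧
      (((1 + ε : ℝ) : ℂ) • ((1 - Proj0) * ρ * (1 - Proj0))
          - (1 - Proj0) * ((L:ℂ)⁻¹ • ∑ i, Ed (sel i)) * (1 - Proj0)).PosSemidef ∧
      (L:ℝ) ≤ 1 + η * d * (2 * Real.log 2 * Real.logb 2 (2 * d)) / (ε^2 * τ) := by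
  simp only [Complex.coe_smul, inv_natCast_smul_eq ℂ ℝ] at hE hρ ⊢
  have : Nonempty (Fin d) := Fin.pos_iff_nonempty.mp hd
  have hE' (i : ι) : 0 ≤ Ed i ∧ Ed i ≤ η • 1 := ⟨(hE i).1.nonneg, (hE i).2.2⟩
  have hη : 0 ≤ η := (hE' (Classical.arbitrary ι)).elim nonneg_of_nonneg_of_le_smul_one
  have hd2 : (2 : ℝ) ≤ 2 * d := by exact_mod_cast Nat.le_mul_of_pos_right 2 hd
  obtain ⟨Q, L, sel, hQ, hL, htrace, hlower, hupper, hLd⟩ :=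
    stmt8_general Ed η hE' P hP ρ hρ ε τ hε hτ
  refine ⟨Q, L, sel, hQ.isSelfAdjoint, hQ.isIdempotentElem, hL, htrace, hlower, hupper,
    hLd.trans ?_⟩
  rw [Fintype.card_fin]
  gcongr 1 + ?_ / _
  exact le_mul_of_one_le_right (by positivity) (one_le_two_mul_log_mul_logb hd2)
end

section
/- (Operator Chernoff bound, one-sided.) Let X, X₁, …, Xₙ be i.i.d. discrete random variables with values in the operator interval [0, 𝟙] on a d-dimensional complex Hilbert space, and let a, m ∈ ℝ with 0 < m ≤ a < 1. (a) If 𝔼X ≤ m𝟙 and A ≥ a𝟙, then Pr{ ∑_{i=1}^{n} Xᵢ ≰ nA } ≤ d · 2^(−n·D(a‖m)). (b) Symmetrically, if 𝔼X ≥ a𝟙 and A ≤ m𝟙 (so 0 < m ≤ a < 1 as before, with the roles of upper and lower bounds exchanged), then Pr{ ∑_{i=1}^{n} Xᵢ ≱ nA } ≤ d · 2^(−n·D(m‖a)). -/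
open scoped BigOperators
open ComplexOrder
open scoped Matrix

/-- Probability of an event under a finitely supported distribution. -/
noncomputable def prOf {α : Type*} [Fintype α] (p : α → ℝ) (s : Set α) : ℝ :=
  ∑ a, s.indicator p a

/-- i.i.d. product distribution. -/
def prodP {Ω : Type*} [Fintype Ω] (p : Ω → ℝ) (n : ℕ) : (Fin n → Ω) → ℝ :=
  fun ω => ∏ i, p (ω i)

/-- Binary information divergence (base 2). -/
noncomputable def binDiv (a b : ℝ) : ℝ :=
  a * Real.logb 2 (a / b) + (1 - a) * Real.logb 2 ((1 - a) / (1 - b))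

/-! Classical channel definitions -/

/-! By Markov's inequality applied to `tr exp (t ∑ Xᵢ)`, which is at least `exp (t c)` as soon as
`∑ Xᵢ ≰ c 𝟙`, it suffices to bound the expectation of this trace. One summand at a time, this
follows from
`tr exp (H + t X) ≤ tr exp H + (exp t - 1) tr (X exp H)` for `0 ≤ H`, `0 ≤ X ≤ 𝟙`, `0 ≤ t`,
which plays the role of the Golden–Thompson inequality and is proved power by power. In an
eigenbasis of `G ≥ 0` the rearrangement inequality gives
`tr (X Gᵏ X Gˡ) ≤ tr (X² Gᵏ⁺ˡ) ≤ tr (X Gᵏ⁺ˡ)`. Hence, by induction on `N` and comparison of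
derivatives in `t`, `tr (X (H + t X)ᴺ) ≤ tr (X (H + t 𝟙)ᴺ)`, and integrating once more bounds
`tr (H + t X)ᴺ`. The lower tail follows by the substitution `X ↦ 𝟙 - X`. -/

namespace OperatorChernoff

open NormedSpace (exp)
open scoped MatrixOrder

variable {ι 𝕜 : Type*} [Fintype ι] [RCLike 𝕜]

/-- The real part of the trace, as a real linear functional. The product of two Hermitian matrices
need not be Hermitian, so taking real parts lets traces of products be compared in `ℝ`. -/
noncomputable def reTrace : Matrix ι ι 𝕜 →ₗ[ℝ] ℝ :=
  RCLike.reLm ∘ₗ Matrix.traceLinearMap ι ℝ 𝕜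

lemma reTrace_apply (A : Matrix ι ι 𝕜) : reTrace A = RCLike.re A.trace := rfl

lemma reTrace_mul_comm (A B : Matrix ι ι 𝕜) : reTrace (A * B) = reTrace (B * A) := by
  rw [reTrace_apply, Matrix.trace_mul_comm, reTrace_apply]

lemma sum_sum_mul_le_of_monovary {w : ι → ι → ℝ} (hw : ∀ i j, 0 ≤ w i j)
    (hsymm : ∀ i j, w i j = w j i) {f g : ι → ℝ} (hfg : Monovary f g) :
    ∑ i, ∑ j, w i j * (f j * g i) ≤ ∑ i, ∑ j, w i j * (f i * g i) := by
  have hswap (F : ι → ι → ℝ) : ∑ i, ∑ j, w i j * F j i = ∑ i, ∑ j, w i j * F i j := by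
    rw [Finset.sum_comm]
    simp only [hsymm]
  have hnonneg : 0 ≤ ∑ i, ∑ j, w i j * ((f j - f i) * (g j - g i)) :=
    Finset.sum_nonneg fun i _ => Finset.sum_nonneg fun j _ =>
      mul_nonneg (hw i j) (hfg.sub_mul_sub_nonneg i j)
  have hexpand : ∑ i, ∑ j, w i j * ((f j - f i) * (g j - g i)) =
      2 * ∑ i, ∑ j, w i j * (f i * g i) - 2 * ∑ i, ∑ j, w i j * (f j * g i) := by
    rw [two_mul, two_mul]
    nth_rw 1 [← hswap fun i _ => f i * g i]
    nth_rw 1 [← hswap fun i j => f j * g i]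
    simp only [← Finset.sum_add_distrib, ← Finset.sum_sub_distrib]
    exact Finset.sum_congr rfl fun i _ => Finset.sum_congr rfl fun j _ => by ring
  linarith

lemma reTrace_mul_nonneg {A B : Matrix ι ι 𝕜} (hA : 0 ≤ A) (hB : 0 ≤ B) :
    0 ≤ reTrace (A * B) := by
  classical
  obtain ⟨C, rfl⟩ := CStarAlgebra.nonneg_iff_eq_star_mul_self.mp hB
  rw [← mul_assoc, reTrace_mul_comm, ← mul_assoc]
  have hconj := Matrix.nonneg_iff_posSemidef.mp (star_right_conjugate_nonneg hA C)
  exact (RCLike.nonneg_iff.mp hconj.trace_nonneg).1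

lemma reTrace_mul_le_mul_right {A B C : Matrix ι ι 𝕜} (hAB : A ≤ B) (hC : 0 ≤ C) :
    reTrace (A * C) ≤ reTrace (B * C) := by
  rw [← sub_nonneg, ← map_sub, ← sub_mul]
  exact reTrace_mul_nonneg (sub_nonneg.mpr hAB) hC

variable [DecidableEq ι]

lemma reTrace_one : reTrace (1 : Matrix ι ι 𝕜) = Fintype.card ι := by
  simp [reTrace_apply]

lemma reTrace_cfc {G : Matrix ι ι 𝕜} (hG : G.IsHermitian) (f : ℝ → ℝ) :
    reTrace (cfc f G) = ∑ i, f (hG.eigenvalues i) := by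
  rw [hG.cfc_eq, Matrix.IsHermitian.cfc, Unitary.conjStarAlgAut_apply, reTrace_mul_comm,
    ← mul_assoc, Unitary.coe_star_mul_self, one_mul, reTrace_apply, Matrix.trace_diagonal, map_sum]
  simp only [Function.comp_apply, RCLike.ofReal_re]

lemma reTrace_mul_cfc_mul_cfc {G X : Matrix ι ι 𝕜} (hG : G.IsHermitian) (hX : X.IsHermitian)
    (f g : ℝ → ℝ) :
    reTrace (X * cfc f G * X * cfc g G) =
      ∑ i, ∑ j,
        ‖((star hG.eigenvectorUnitary : Matrix ι ι 𝕜) * X * hG.eigenvectorUnitary) i j‖ ^ 2 *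
          (f (hG.eigenvalues j) * g (hG.eigenvalues i)) := by
  set U : Matrix ι ι 𝕜 := (hG.eigenvectorUnitary : Matrix ι ι 𝕜)
  set Y := star U * X * U with hY_def
  have hY (i j : ι) : Y j i = star (Y i j) := by
    have : Y.IsHermitian := Matrix.isHermitian_conjTranspose_mul_mul U hX
    exact (this.apply j i).symm
  have hconj (D E : Matrix ι ι 𝕜) :
      reTrace (X * (U * D * star U) * X * (U * E * star U)) = reTrace (Y * D * Y * E) := by
    rw [← mul_assoc _ (U * E), reTrace_mul_comm]
    simp only [hY_def, mul_assoc]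
  rw [hG.cfc_eq, hG.cfc_eq, Matrix.IsHermitian.cfc, Matrix.IsHermitian.cfc,
    Unitary.conjStarAlgAut_apply, Unitary.conjStarAlgAut_apply, hconj, reTrace_apply, Matrix.trace,
    map_sum]
  refine Finset.sum_congr rfl fun i _ => ?_
  rw [Matrix.diag_apply, Matrix.mul_diagonal, Matrix.mul_apply, Finset.sum_mul, map_sum]
  refine Finset.sum_congr rfl fun j _ => ?_
  rw [Matrix.mul_diagonal, Function.comp_apply, Function.comp_apply, Function.comp_apply,
    Function.comp_apply]
  have hentry : Y i j * (f (hG.eigenvalues j) : 𝕜) * Y j i * (g (hG.eigenvalues i) : 𝕜) =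
      ((‖Y i j‖ ^ 2 * (f (hG.eigenvalues j) * g (hG.eigenvalues i)) : ℝ) : 𝕜) := by
    rw [hY i j, RCLike.star_def, mul_right_comm (Y i j), RCLike.mul_conj]
    push_cast
    ring
  exact (congrArg RCLike.re hentry).trans (RCLike.ofReal_re _)

lemma reTrace_mul_cfc_mul_cfc_le {G X : Matrix ι ι 𝕜} (hG : G.IsHermitian) (hX : X.IsHermitian)
    {f g : ℝ → ℝ} (hfg : MonovaryOn f g (spectrum ℝ G)) :
    reTrace (X * cfc f G * X * cfc g G) ≤ reTrace (X * X * cfc (fun x => f x * g x) G) := by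
  have hone : X * X = X * cfc (fun _ => (1 : ℝ)) G * X := by
    rw [cfc_const_one ℝ G hG.isSelfAdjoint, mul_one]
  rw [hone, reTrace_mul_cfc_mul_cfc hG hX, reTrace_mul_cfc_mul_cfc hG hX]
  simp only [one_mul]
  refine sum_sum_mul_le_of_monovary (fun _ _ => sq_nonneg _) (fun i j => ?_)
    (f := f ∘ hG.eigenvalues) (g := g ∘ hG.eigenvalues) fun i j hij => ?_
  · have hY := Matrix.isHermitian_conjTranspose_mul_mul (hG.eigenvectorUnitary : Matrix ι ι 𝕜) hX
    rw [← norm_star, Matrix.star_eq_conjTranspose, hY.apply]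
  · exact hfg (hG.eigenvalues_mem_spectrum_real i) (hG.eigenvalues_mem_spectrum_real j) hij

lemma reTrace_mul_pow_mul_pow_le {G X : Matrix ι ι 𝕜} (hG : 0 ≤ G) (hX : X.IsHermitian)
    (k l : ℕ) : reTrace (X * G ^ k * X * G ^ l) ≤ reTrace (X * X * G ^ (k + l)) := by
  have hsa : IsSelfAdjoint G := hG.isSelfAdjoint
  have hmono (k : ℕ) : MonotoneOn (fun x : ℝ => x ^ k) (spectrum ℝ G) := fun x hx y _ hxy =>
    pow_le_pow_left₀ (spectrum_nonneg_of_nonneg hG hx) hxy k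
  simpa only [cfc_pow_id G _ hsa, ← pow_add] using
    reTrace_mul_cfc_mul_cfc_le (Matrix.nonneg_iff_posSemidef.mp hG).1 hX
      ((hmono k).monovaryOn (hmono l))

lemma mul_self_le_self {X : Matrix ι ι 𝕜} (hX : X ∈ Set.Icc 0 1) : X * X ≤ X := by
  have hcomm : Commute X (1 - X) := (Commute.one_right X).sub_right (Commute.refl X)
  simpa only [mul_sub, mul_one, sub_nonneg] using hcomm.mul_nonneg hX.1 (sub_nonneg.mpr hX.2)

open scoped Matrix.Norms.Frobenius in
lemma hasDerivAt_reTrace_mul_add_smul_pow (C H X : Matrix ι ι 𝕜) (N : ℕ) (t : ℝ) :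
    HasDerivAt (fun s : ℝ => reTrace (C * (H + s • X) ^ (N + 1)))
      (∑ i ∈ Finset.range (N + 1),
        reTrace (C * ((H + t • X) ^ (N - i) * X * (H + t • X) ^ i))) t := by
  have hline := ((hasDerivAt_id t).smul_const X).const_add H
  rw [one_smul] at hline
  have hcomp := (LinearMap.toContinuousLinearMap
    (reTrace ∘ₗ LinearMap.mulLeft ℝ C)).hasFDerivAt.comp_hasDerivAt t (hline.fun_pow' (N + 1))
  refine hcomp.congr_deriv ?_
  exact map_sum (reTrace ∘ₗ LinearMap.mulLeft ℝ C) _ _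

open scoped Matrix.Norms.Frobenius in
lemma hasSum_reTrace_mul_exp (C G : Matrix ι ι 𝕜) :
    HasSum (fun k : ℕ => (k.factorial : ℝ)⁻¹ * reTrace (C * G ^ k)) (reTrace (C * exp G)) := by
  have h := (NormedSpace.exp_series_hasSum_exp' (𝕂 := ℝ) G).mapL
    (LinearMap.toContinuousLinearMap (reTrace ∘ₗ LinearMap.mulLeft ℝ C))
  refine h.congr_fun fun k => ?_
  simp

lemma exp_add_smul_one (H : Matrix ι ι 𝕜) (t : ℝ) :
    exp (H + t • (1 : Matrix ι ι 𝕜)) = Real.exp t • exp H := by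
  have hscalar : exp (t • (1 : Matrix ι ι 𝕜)) = Real.exp t • 1 := by
    open scoped Matrix.Norms.Frobenius in
    rw [← Algebra.algebraMap_eq_smul_one, ← Algebra.algebraMap_eq_smul_one, Real.exp_eq_exp_ℝ]
    exact (NormedSpace.algebraMap_exp_comm (𝔸 := Matrix ι ι 𝕜) t).symm
  rw [Matrix.exp_add_of_commute H _ ((Commute.one_right H).smul_right t), hscalar,
    mul_smul_comm, mul_one]

lemma le_of_hasDerivAt_le {f f' B B' : ℝ → ℝ} (hf : ∀ s, HasDerivAt f (f' s) s)
    (hB : ∀ s, HasDerivAt B (B' s) s) (h0 : f 0 ≤ B 0) (hle : ∀ s, 0 ≤ s → f' s ≤ B' s)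
    {t : ℝ} (ht : 0 ≤ t) : f t ≤ B t :=
  image_le_of_deriv_right_le_deriv_boundary (a := 0) (b := t)
    (fun s _ => (hf s).continuousAt.continuousWithinAt) (fun s _ => (hf s).hasDerivWithinAt) h0
    (fun s _ => (hB s).continuousAt.continuousWithinAt) (fun s _ => (hB s).hasDerivWithinAt)
    (fun s hs => hle s hs.1) (Set.right_mem_Icc.mpr ht)

lemma hasDerivAt_reTrace_mul_add_smul_one_pow (C H : Matrix ι ι 𝕜) (N : ℕ) (t : ℝ) :
    HasDerivAt (fun s : ℝ => reTrace (C * (H + s • (1 : Matrix ι ι 𝕜)) ^ (N + 1)))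
      ((N + 1) * reTrace (C * (H + t • (1 : Matrix ι ι 𝕜)) ^ N)) t := by
  refine (hasDerivAt_reTrace_mul_add_smul_pow C H 1 N t).congr_deriv ?_
  have hterm : ∀ i ∈ Finset.range (N + 1), (H + t • (1 : Matrix ι ι 𝕜)) ^ (N - i) * 1 *
      (H + t • (1 : Matrix ι ι 𝕜)) ^ i = (H + t • (1 : Matrix ι ι 𝕜)) ^ N := fun i hi => by
    rw [mul_one, ← pow_add, Nat.sub_add_cancel (Finset.mem_range_succ_iff.mp hi)]
  rw [Finset.sum_congr rfl fun i hi => by rw [hterm i hi], Finset.sum_const, Finset.card_range,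
    nsmul_eq_mul, Nat.cast_succ]

lemma hasDerivAt_reTrace_add_smul_pow (H X : Matrix ι ι 𝕜) (N : ℕ) (t : ℝ) :
    HasDerivAt (fun s : ℝ => reTrace ((H + s • X) ^ (N + 1)))
      ((N + 1) * reTrace (X * (H + t • X) ^ N)) t := by
  have h := hasDerivAt_reTrace_mul_add_smul_pow 1 H X N t
  simp only [one_mul] at h
  refine h.congr_deriv ?_
  have hterm : ∀ i ∈ Finset.range (N + 1), reTrace ((H + t • X) ^ (N - i) * X *
      (H + t • X) ^ i) = reTrace (X * (H + t • X) ^ N) := fun i hi => by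
    rw [reTrace_mul_comm, ← mul_assoc, ← pow_add, reTrace_mul_comm,
      Nat.add_sub_cancel' (Finset.mem_range_succ_iff.mp hi)]
  rw [Finset.sum_congr rfl hterm, Finset.sum_const, Finset.card_range, nsmul_eq_mul, Nat.cast_succ]

section Contraction

variable {H X : Matrix ι ι 𝕜} (hH : 0 ≤ H) (hX : X ∈ Set.Icc 0 1) {t : ℝ} (ht : 0 ≤ t)
include hH hX

lemma sum_reTrace_mul_pow_mul_pow_le (N : ℕ) :
    ∑ i ∈ Finset.range (N + 1), reTrace (X * (H ^ (N - i) * X * H ^ i)) ≤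
      (N + 1) * reTrace (X * H ^ N) := by
  have hterm : ∀ i ∈ Finset.range (N + 1),
      reTrace (X * (H ^ (N - i) * X * H ^ i)) ≤ reTrace (X * H ^ N) := fun i hi => by
    have hNi : N - i + i = N := Nat.sub_add_cancel (Finset.mem_range_succ_iff.mp hi)
    calc reTrace (X * (H ^ (N - i) * X * H ^ i))
        = reTrace (X * H ^ (N - i) * X * H ^ i) := by simp only [mul_assoc]
      _ ≤ reTrace (X * X * H ^ N) := by
          simpa only [hNi] using reTrace_mul_pow_mul_pow_le hH hX.1.isSelfAdjoint (N - i) i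
      _ ≤ reTrace (X * H ^ N) :=
          reTrace_mul_le_mul_right (mul_self_le_self hX) <|
            Matrix.nonneg_iff_posSemidef.mpr ((Matrix.nonneg_iff_posSemidef.mp hH).pow N)
  simpa only [Finset.card_range, nsmul_eq_mul, Nat.cast_succ] using
    Finset.sum_le_card_nsmul _ _ _ hterm

include ht

lemma reTrace_mul_add_smul_pow_le (N : ℕ) :
    reTrace (X * (H + t • X) ^ N) ≤ reTrace (X * (H + t • (1 : Matrix ι ι 𝕜)) ^ N) := by
  induction N generalizing t with
  | zero => simp only [pow_zero, le_refl]
  | succ N ih =>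
    refine le_of_hasDerivAt_le (hasDerivAt_reTrace_mul_add_smul_pow X H X N)
      (hasDerivAt_reTrace_mul_add_smul_one_pow X H N) (by simp only [zero_smul, le_refl])
      (fun s hs => ?_) ht
    exact (sum_reTrace_mul_pow_mul_pow_le (add_nonneg hH (smul_nonneg hs hX.1)) hX N).trans
      (mul_le_mul_of_nonneg_left (ih hs) (by positivity))

lemma reTrace_add_smul_pow_le (N : ℕ) :
    reTrace ((H + t • X) ^ N) ≤
      reTrace (H ^ N) + (reTrace (X * (H + t • (1 : Matrix ι ι 𝕜)) ^ N) - reTrace (X * H ^ N)) := by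
  cases N with
  | zero => simp only [pow_zero, sub_self, add_zero, le_refl]
  | succ N =>
    refine le_of_hasDerivAt_le (hasDerivAt_reTrace_add_smul_pow H X N)
      (fun s => ((hasDerivAt_reTrace_mul_add_smul_one_pow X H N s).sub_const _).const_add _)
      (by simp only [zero_smul, add_zero, sub_self, le_refl]) (fun s hs => ?_) ht
    exact mul_le_mul_of_nonneg_left (reTrace_mul_add_smul_pow_le hH hX hs N) (by positivity)

lemma reTrace_exp_add_smul_le :
    reTrace (exp (H + t • X)) ≤
      reTrace (exp H) + (Real.exp t - 1) * reTrace (X * exp H) := by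
  have hlhs := hasSum_reTrace_mul_exp 1 (H + t • X)
  have hrhs := (hasSum_reTrace_mul_exp 1 H).add
    ((hasSum_reTrace_mul_exp X (H + t • 1)).sub (hasSum_reTrace_mul_exp X H))
  simp only [one_mul] at hlhs hrhs
  refine (hasSum_le (fun N => ?_) hlhs hrhs).trans_eq ?_
  · rw [← mul_sub, ← mul_add]
    exact mul_le_mul_of_nonneg_left (reTrace_add_smul_pow_le hH hX ht N) (by positivity)
  · rw [exp_add_smul_one, mul_smul_comm, map_smul, smul_eq_mul, sub_one_mul]

end Contraction

-- Instance search does not see that the Frobenius norm induces the topology for which the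
-- functional calculus is registered, so the instance is passed explicitly.
open scoped Matrix.Norms.Frobenius in
lemma cfc_exp {S : Matrix ι ι 𝕜} (hS : S.IsHermitian) : cfc Real.exp S = exp S :=
  @CFC.real_exp_eq_normedSpace_exp (Matrix ι ι 𝕜) _ _ _
    Matrix.IsHermitian.instContinuousFunctionalCalculus S hS.isSelfAdjoint

lemma exp_nonneg {S : Matrix ι ι 𝕜} (hS : S.IsHermitian) : 0 ≤ exp S := by
  rw [← cfc_exp hS]
  exact cfc_nonneg fun x _ => Real.exp_nonneg x

lemma reTrace_exp_smul {S : Matrix ι ι 𝕜} (hS : S.IsHermitian) (t : ℝ) :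
    reTrace (exp (t • S)) = ∑ i, Real.exp (t * hS.eigenvalues i) := by
  rw [← cfc_exp (hS.smul (IsSelfAdjoint.all t)), ← cfc_comp_smul t Real.exp S, reTrace_cfc hS]
  simp only [smul_eq_mul]

lemma exp_mul_le_reTrace_exp_smul {S : Matrix ι ι 𝕜} (hS : S.IsHermitian) {t c : ℝ} (ht : 0 ≤ t)
    (hSc : ¬ S ≤ c • (1 : Matrix ι ι 𝕜)) : Real.exp (t * c) ≤ reTrace (exp (t • S)) := by
  obtain ⟨i, hi⟩ : ∃ i, c < hS.eigenvalues i := by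
    by_contra! hle
    refine hSc ?_
    rw [← Algebra.algebraMap_eq_smul_one]
    refine le_algebraMap_of_spectrum_le (fun x hx => ?_) hS.isSelfAdjoint
    obtain ⟨i, rfl⟩ := hS.spectrum_real_eq_range_eigenvalues ▸ hx
    exact hle i
  calc Real.exp (t * c)
      ≤ Real.exp (t * hS.eigenvalues i) := Real.exp_le_exp.mpr (by gcongr)
    _ ≤ ∑ j, Real.exp (t * hS.eigenvalues j) :=
        Finset.single_le_sum (f := fun j => Real.exp (t * hS.eigenvalues j))
          (fun j _ => Real.exp_nonneg _) (Finset.mem_univ i)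
    _ = reTrace (exp (t • S)) := (reTrace_exp_smul hS t).symm

section Probability

variable {Ω : Type*} [Fintype Ω] {p : Ω → ℝ}

lemma prodP_nonneg (hp : ∀ x, 0 ≤ p x) {n : ℕ} (ω : Fin n → Ω) : 0 ≤ prodP p n ω :=
  Finset.prod_nonneg fun i _ => hp (ω i)

lemma sum_prodP_succ_mul (p : Ω → ℝ) {n : ℕ} (F : (Fin (n + 1) → Ω) → ℝ) :
    ∑ ω, prodP p (n + 1) ω * F ω = ∑ x, p x * ∑ ω, prodP p n ω * F (Fin.cons x ω) := by
  rw [← (Fin.consEquiv fun _ => Ω).sum_comp, Fintype.sum_prod_type]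
  simp only [Finset.mul_sum, ← mul_assoc]
  simp [prodP, Fin.prod_univ_succ, Fin.consEquiv]

lemma prOf_mul_le_sum (hp : ∀ x, 0 ≤ p x) {F : Ω → ℝ} (hF : ∀ x, 0 ≤ F x) {s : Set Ω} {c : ℝ}
    (hc : ∀ x ∈ s, c ≤ F x) : prOf p s * c ≤ ∑ x, p x * F x := by
  rw [prOf, Finset.sum_mul]
  refine Finset.sum_le_sum fun x _ => ?_
  by_cases hx : x ∈ s
  · rw [Set.indicator_of_mem hx]
    exact mul_le_mul_of_nonneg_left (hc x hx) (hp x)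
  · rw [Set.indicator_of_notMem hx, zero_mul]
    exact mul_nonneg (hp x) (hF x)

variable {X : Ω → Matrix ι ι 𝕜} {m t : ℝ}

lemma sum_mul_reTrace_exp_add_smul_le (hp : IsProbDist p) (hX : ∀ x, X x ∈ Set.Icc 0 1)
    (hmean : ∑ x, p x • X x ≤ m • 1) (ht : 0 ≤ t) {H : Matrix ι ι 𝕜} (hH : 0 ≤ H) :
    ∑ x, p x * reTrace (exp (H + t • X x)) ≤
      (1 + (Real.exp t - 1) * m) * reTrace (exp H) := by
  have hexp : 0 ≤ exp H := exp_nonneg hH.isSelfAdjoint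
  have hexp_t : 0 ≤ Real.exp t - 1 := sub_nonneg.mpr (Real.one_le_exp ht)
  have hmean_trace : ∑ x, p x * reTrace (X x * exp H) ≤ m * reTrace (exp H) := by
    have h := reTrace_mul_le_mul_right hmean hexp
    simpa only [Finset.sum_mul, smul_mul_assoc, map_sum, map_smul, smul_eq_mul, one_mul] using h
  calc ∑ x, p x * reTrace (exp (H + t • X x))
      ≤ ∑ x, p x * (reTrace (exp H) + (Real.exp t - 1) * reTrace (X x * exp H)) :=
        Finset.sum_le_sum fun x _ =>
          mul_le_mul_of_nonneg_left (reTrace_exp_add_smul_le hH (hX x) ht) (hp.1 x)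
    _ = reTrace (exp H) + (Real.exp t - 1) * ∑ x, p x * reTrace (X x * exp H) := by
        simp only [mul_add, Finset.sum_add_distrib, ← Finset.sum_mul, hp.2, one_mul,
          mul_left_comm (p _), ← Finset.mul_sum]
    _ ≤ reTrace (exp H) + (Real.exp t - 1) * (m * reTrace (exp H)) := by gcongr
    _ = (1 + (Real.exp t - 1) * m) * reTrace (exp H) := by ring

lemma sum_prodP_mul_reTrace_exp_add_smul_sum_le (hp : IsProbDist p)
    (hX : ∀ x, X x ∈ Set.Icc 0 1) (hm : 0 ≤ m) (hmean : ∑ x, p x • X x ≤ m • 1) (ht : 0 ≤ t)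
    {H : Matrix ι ι 𝕜} (hH : 0 ≤ H) (n : ℕ) :
    ∑ ω, prodP p n ω * reTrace (exp (H + t • ∑ i, X (ω i))) ≤
      (1 + (Real.exp t - 1) * m) ^ n * reTrace (exp H) := by
  have hfactor : 0 ≤ 1 + (Real.exp t - 1) * m := by
    have := Real.one_le_exp ht
    nlinarith
  induction n generalizing H with
  | zero => simp [prodP]
  | succ n ih =>
    rw [sum_prodP_succ_mul]
    simp only [Fin.sum_univ_succ, Fin.cons_zero, Fin.cons_succ, smul_add, ← add_assoc]
    calc ∑ x, p x * ∑ ω, prodP p n ω * reTrace (exp (H + t • X x + t • ∑ i, X (ω i)))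
        ≤ ∑ x, p x * ((1 + (Real.exp t - 1) * m) ^ n * reTrace (exp (H + t • X x))) :=
          Finset.sum_le_sum fun x _ => mul_le_mul_of_nonneg_left
            (ih (add_nonneg hH (smul_nonneg ht (hX x).1))) (hp.1 x)
      _ = (1 + (Real.exp t - 1) * m) ^ n * ∑ x, p x * reTrace (exp (H + t • X x)) := by
          rw [Finset.mul_sum]
          exact Finset.sum_congr rfl fun x _ => mul_left_comm _ _ _
      _ ≤ (1 + (Real.exp t - 1) * m) ^ n * ((1 + (Real.exp t - 1) * m) * reTrace (exp H)) := by
          gcongr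
          exact sum_mul_reTrace_exp_add_smul_le hp hX hmean ht hH
      _ = (1 + (Real.exp t - 1) * m) ^ (n + 1) * reTrace (exp H) := by ring

lemma prOf_not_sum_le_mul_exp_le (hp : IsProbDist p) (hX : ∀ x, X x ∈ Set.Icc 0 1)
    (hm : 0 ≤ m) (hmean : ∑ x, p x • X x ≤ m • 1) (ht : 0 ≤ t) (n : ℕ) {c : ℝ}
    {B : Matrix ι ι 𝕜} (hB : c • 1 ≤ B) :
    prOf (prodP p n) {ω | ¬ ∑ i, X (ω i) ≤ B} * Real.exp (t * c) ≤
      Fintype.card ι * (1 + (Real.exp t - 1) * m) ^ n := by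
  have hS (ω : Fin n → Ω) : (∑ i, X (ω i)).IsHermitian :=
    (Finset.sum_nonneg fun i _ => (hX (ω i)).1).isSelfAdjoint
  have hmarkov := prOf_mul_le_sum (prodP_nonneg hp.1) (s := {ω | ¬ ∑ i, X (ω i) ≤ B})
    (fun ω => (Finset.sum_nonneg fun j _ => Real.exp_nonneg _).trans_eq
      (reTrace_exp_smul (hS ω) t).symm)
    fun ω hω => exp_mul_le_reTrace_exp_smul (hS ω) ht fun hle => hω (hle.trans hB)
  have hmgf := sum_prodP_mul_reTrace_exp_add_smul_sum_le hp hX hm hmean ht le_rfl n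
  simp only [zero_add, NormedSpace.exp_zero, reTrace_one] at hmgf
  exact hmarkov.trans (hmgf.trans_eq (mul_comm _ _))

end Probability

section OptimalExponent

/-- The logarithm of the odds ratio of `a` and `m`: the exponent `t` minimising the Chernoff bound
`(1 + (exp t - 1) * m) * exp (-(t * a))`. -/
noncomputable def logOddsRatio (a m : ℝ) : ℝ :=
  Real.log (a * (1 - m) / (m * (1 - a)))

variable {a m : ℝ}

lemma logOddsRatio_nonneg (hm : 0 < m) (hma : m ≤ a) (ha : a < 1) : 0 ≤ logOddsRatio a m := by
  refine Real.log_nonneg ((one_le_div (mul_pos hm (sub_pos.mpr ha))).mpr ?_)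
  linarith

lemma one_add_exp_logOddsRatio_sub_one_mul (hm : 0 < m) (hm1 : m < 1) (ha : 0 < a) (ha1 : a < 1) :
    1 + (Real.exp (logOddsRatio a m) - 1) * m = (1 - m) / (1 - a) := by
  have h1a : 1 - a ≠ 0 := (sub_pos.mpr ha1).ne'
  have hodds : 0 < a * (1 - m) / (m * (1 - a)) :=
    div_pos (mul_pos ha (sub_pos.mpr hm1)) (mul_pos hm (sub_pos.mpr ha1))
  rw [logOddsRatio, Real.exp_log hodds]
  field_simp
  ring

lemma binDiv_mul_log_two (hm : 0 < m) (hm1 : m < 1) (ha : 0 < a) (ha1 : a < 1) :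
    binDiv a m * Real.log 2 = logOddsRatio a m * a - Real.log ((1 - m) / (1 - a)) := by
  have h1m : 1 - m ≠ 0 := (sub_pos.mpr hm1).ne'
  have h1a : 1 - a ≠ 0 := (sub_pos.mpr ha1).ne'
  have hlog2 : Real.log 2 ≠ 0 := (Real.log_pos one_lt_two).ne'
  rw [binDiv, Real.logb, Real.logb, logOddsRatio, Real.log_div (mul_ne_zero ha.ne' h1m)
    (mul_ne_zero hm.ne' h1a), Real.log_mul ha.ne' h1m, Real.log_mul hm.ne' h1a,
    Real.log_div ha.ne' hm.ne', Real.log_div h1a h1m, Real.log_div h1m h1a]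
  field_simp
  ring

lemma two_rpow_neg_mul_binDiv (hm : 0 < m) (hm1 : m < 1) (ha : 0 < a) (ha1 : a < 1) (n : ℕ) :
    (2 : ℝ) ^ (-(n : ℝ) * binDiv a m) =
      (1 + (Real.exp (logOddsRatio a m) - 1) * m) ^ n / Real.exp (logOddsRatio a m * (n * a)) := by
  have hratio : 0 < (1 - m) / (1 - a) := div_pos (sub_pos.mpr hm1) (sub_pos.mpr ha1)
  rw [one_add_exp_logOddsRatio_sub_one_mul hm hm1 ha ha1, Real.rpow_def_of_pos two_pos]
  nth_rw 1 [← Real.exp_log hratio]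
  rw [← Real.exp_nat_mul, ← Real.exp_sub]
  congr 1
  linear_combination -(n : ℝ) * binDiv_mul_log_two hm hm1 ha ha1

lemma binDiv_one_sub (a b : ℝ) : binDiv (1 - a) (1 - b) = binDiv a b := by
  simp only [binDiv, sub_sub_cancel]
  ring

end OptimalExponent

theorem prOf_not_sum_le_le {Ω : Type*} [Fintype Ω] {p : Ω → ℝ} (hp : IsProbDist p)
    {X : Ω → Matrix ι ι 𝕜} (hX : ∀ x, X x ∈ Set.Icc 0 1) (n : ℕ) {a m : ℝ} (hm : 0 < m)
    (hma : m ≤ a) (ha : a < 1) {A : Matrix ι ι 𝕜} (hmean : ∑ x, p x • X x ≤ m • 1)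
    (hA : a • 1 ≤ A) :
    prOf (prodP p n) {ω | ¬ ∑ i, X (ω i) ≤ n • A} ≤
      Fintype.card ι * (2 : ℝ) ^ (-(n : ℝ) * binDiv a m) := by
  have hnA : (n * a) • (1 : Matrix ι ι 𝕜) ≤ n • A := by
    rw [mul_smul, Nat.cast_smul_eq_nsmul]
    exact nsmul_le_nsmul_right hA n
  rw [two_rpow_neg_mul_binDiv hm (hma.trans_lt ha) (hm.trans_le hma) ha, ← mul_div_assoc,
    le_div_iff₀ (Real.exp_pos _)]
  exact prOf_not_sum_le_mul_exp_le hp hX hm.le hmean (logOddsRatio_nonneg hm hma ha) n hnA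

theorem prOf_not_le_sum_le {Ω : Type*} [Fintype Ω] {p : Ω → ℝ} (hp : IsProbDist p)
    {X : Ω → Matrix ι ι 𝕜} (hX : ∀ x, X x ∈ Set.Icc 0 1) (n : ℕ) {a m : ℝ} (hm : 0 < m)
    (hma : m ≤ a) (ha : a < 1) {A : Matrix ι ι 𝕜} (hmean : a • 1 ≤ ∑ x, p x • X x)
    (hA : A ≤ m • 1) :
    prOf (prodP p n) {ω | ¬ n • A ≤ ∑ i, X (ω i)} ≤
      Fintype.card ι * (2 : ℝ) ^ (-(n : ℝ) * binDiv m a) := by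
  have hmean' : ∑ x, p x • (1 - X x) ≤ (1 - a) • 1 := by
    simpa only [smul_sub, Finset.sum_sub_distrib, ← Finset.sum_smul, hp.2, one_smul, sub_smul,
      sub_le_sub_iff_left] using hmean
  have hA' : (1 - m) • 1 ≤ 1 - A := by
    simpa only [sub_smul, one_smul, sub_le_sub_iff_left] using hA
  have h := prOf_not_sum_le_le hp (X := fun x => 1 - X x)
    (fun x => ⟨sub_nonneg.mpr (hX x).2, sub_le_self _ (hX x).1⟩) n (sub_pos.mpr ha)
    (sub_le_sub_left hma 1) (sub_lt_self 1 hm) hmean' hA'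
  simpa only [binDiv_one_sub, smul_sub, Finset.sum_sub_distrib, Finset.sum_const, Finset.card_univ,
    Fintype.card_fin, sub_le_sub_iff_left] using h

end OperatorChernoff

open scoped MatrixOrder in
theorem stmt15_general {ι 𝕜 Ω : Type*} [Fintype ι] [DecidableEq ι] [RCLike 𝕜] [Fintype Ω]
    (p : Ω → ℝ) (hp : IsProbDist p) (X : Ω → Matrix ι ι 𝕜) (hX : ∀ ω, X ω ∈ Set.Icc 0 1)
    (n : ℕ) (a m : ℝ) (hm : 0 < m) (hma : m ≤ a) (ha : a < 1) (A : Matrix ι ι 𝕜) :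
    (∑ ω, p ω • X ω ≤ m • 1 → a • 1 ≤ A →
      prOf (prodP p n) {ω | ¬ ∑ i, X (ω i) ≤ n • A} ≤
        Fintype.card ι * (2 : ℝ) ^ (-(n : ℝ) * binDiv a m)) ∧
    (a • 1 ≤ ∑ ω, p ω • X ω → A ≤ m • 1 →
      prOf (prodP p n) {ω | ¬ n • A ≤ ∑ i, X (ω i)} ≤
        Fintype.card ι * (2 : ℝ) ^ (-(n : ℝ) * binDiv m a)) :=
  ⟨OperatorChernoff.prOf_not_sum_le_le hp hX n hm hma ha,
    OperatorChernoff.prOf_not_le_sum_le hp hX n hm hma ha⟩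

theorem stmt15 {d : ℕ} {Ω : Type*} [Fintype Ω] (p : Ω → ℝ) (hp : IsProbDist p)
    (Xv : Ω → Matrix (Fin d) (Fin d) ℂ)
    (hX : ∀ ω, (Xv ω).PosSemidef ∧ (1 - Xv ω).PosSemidef)
    (n : ℕ) (a m : ℝ) (hm : 0 < m) (hma : m ≤ a) (ha : a < 1)
    (A : Matrix (Fin d) (Fin d) ℂ) :
    (((m:ℂ) • 1 - ∑ ω, (p ω : ℂ) • Xv ω).PosSemidef →
      (A - (a:ℂ) • 1).PosSemidef →
      prOf (prodP p n) {ω | ¬ ((n:ℂ) • A - ∑ i, Xv (ω i)).PosSemidef}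
        ≤ d * (2:ℝ) ^ (-(n:ℝ) * binDiv a m)) ∧
    (((∑ ω, (p ω : ℂ) • Xv ω) - (a:ℂ) • 1).PosSemidef →
      ((m:ℂ) • 1 - A).PosSemidef →
      prOf (prodP p n) {ω | ¬ ((∑ i, Xv (ω i)) - (n:ℂ) • A).PosSemidef}
        ≤ d * (2:ℝ) ^ (-(n:ℝ) * binDiv m a)) := by
  simpa [Matrix.le_iff, Matrix.nonneg_iff_posSemidef, Nat.cast_smul_eq_nsmul] using
    stmt15_general p hp Xv (fun ω => by simpa [Matrix.le_iff] using hX ω) n a m hm hma ha A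
end
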